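/- arXiv:0901.0880 — 3 statements merged into one kernel-verified Lean document; each statement's English description precedes it below -/
import Mathlib

section
/- Let (Γ, ⪯) be a left-ordered group and let (G, H) be a convex jump in Γ (H ⊊ G are ⪯-convex subgroups with no ⪯-convex subgroup strictly between them) such that G is a ⪯-Conradian extension of H. Then there exists a nontrivial group homomorphism τ : G → (ℝ, +) with kernel exactly H and with τ(g) > 0 for every g ∈ G \ H satisfying g ≻ 1; moreover τ is unique up to multiplication by a positive real number: any other homomorphism with these properties equals c·τ for some real c > 0. -/
/-- A subgroup `C` of a left-ordered group is `≤`-convex if whenever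
`c₁, c₂ ∈ C` and `c₁ < f < c₂`, one has `f ∈ C`. -/
def IsConvexSubgroup {Γ : Type*} [Group Γ] [LinearOrder Γ] (C : Subgroup Γ) : Prop :=
  ∀ c₁ ∈ C, ∀ c₂ ∈ C, ∀ f : Γ, c₁ < f → f < c₂ → f ∈ C

/-- The induced strict order on left cosets of a (convex) subgroup `H`. -/
def CosetLT {Γ : Type*} [Group Γ] [LinearOrder Γ] (H : Subgroup Γ) (x y : Γ) : Prop :=
  x⁻¹ * y ∉ H ∧ x < y

/-- A crossing for the action of the group on the space of left cosets of `H`. -/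
def CosetCrossing {Γ : Type*} [Group Γ] [LinearOrder Γ] (H : Subgroup Γ)
    (f g u v w : Γ) : Prop :=
  CosetLT H u w ∧ CosetLT H w v ∧
  (∀ n : ℕ, 0 < n → CosetLT H (g ^ n * u) v ∧ CosetLT H u (f ^ n * v)) ∧
  ∃ M N : ℕ, 0 < M ∧ 0 < N ∧ CosetLT H (f ^ N * v) w ∧ CosetLT H w (g ^ M * u)

/-- `G` is a `≤`-Conradian extension of `H` if the coset action admits no crossing. -/
def IsConradianExtension {Γ : Type*} [Group Γ] [LinearOrder Γ] (G H : Subgroup Γ) : Prop :=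
  ∀ f g u v w : Γ, f ∈ G → g ∈ G → u ∈ G → v ∈ G → w ∈ G →
    ¬ CosetCrossing H f g u v w

section act
variable {G Ω : Type*} [Group G] [LinearOrder Ω] [MulAction G Ω]

def NoCross (G Ω : Type*) [Group G] [LinearOrder Ω] [MulAction G Ω] : Prop :=
  ∀ (f g : G) (u v w : Ω), u < w → w < v → (∀ n : ℕ, 0 < n → g ^ n • u < v ∧ u < f ^ n • v) →
    ∀ M N : ℕ, 0 < M → 0 < N → f ^ N • v < w → w < g ^ M • u → False

def InHull (g : G) (o x : Ω) : Prop := ∃ m n : ℤ, g ^ m • o < x ∧ x < g ^ n • o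

theorem act_iff (hmono : ∀ (a : G) (x y : Ω), x < y → a • x < a • y) (a : G) (x y : Ω) :
    a • x < a • y ↔ x < y := by
  refine ⟨fun h => ?_, hmono a x y⟩
  simpa using hmono a⁻¹ _ _ h

theorem pow_smono (hmono : ∀ (a : G) (x y : Ω), x < y → a • x < a • y) {g : G} {o : Ω}
    (hg : o < g • o) : StrictMono (fun n : ℤ => g ^ n • o) := by
  apply strictMono_int_of_lt_succ
  intro n
  have := hmono (g ^ n) _ _ hg
  rwa [smul_smul, ← zpow_add_one] at this

theorem hull_zpow (hmono : ∀ (a : G) (x y : Ω), x < y → a • x < a • y) {g : G} {o x : Ω}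
    (h : InHull g o x) (k : ℤ) : InHull g o (g ^ k • x) := by
  obtain ⟨m, n, h1, h2⟩ := h
  refine ⟨k + m, k + n, ?_, ?_⟩
  · rw [zpow_add, mul_smul]; exact hmono _ _ _ h1
  · rw [zpow_add, mul_smul]; exact hmono _ _ _ h2

theorem hull_up (hmono : ∀ (a : G) (x y : Ω), x < y → a • x < a • y) {g : G} {o p q : Ω}
    (hg : o < g • o) (hp : InHull g o p) (hq : InHull g o q) :
    ∃ n : ℕ, 0 < n ∧ p < g ^ n • q ∧ (g⁻¹) ^ n • p < q := by
  obtain ⟨_, a, -, h2⟩ := hp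
  obtain ⟨b, _, h1, -⟩ := hq
  have key : p < g ^ ((a - b).toNat + 1) • q := by
    have h3 := hmono (g ^ ((a - b).toNat + 1)) _ _ h1
    refine h2.trans (lt_of_le_of_lt ?_ h3)
    rw [← zpow_natCast, smul_smul, ← zpow_add]
    apply (pow_smono hmono hg).monotone
    push_cast
    have := Int.self_le_toNat (a - b)
    omega
  refine ⟨(a - b).toNat + 1, by omega, key, ?_⟩
  have := hmono ((g⁻¹) ^ ((a - b).toNat + 1)) _ _ key
  rwa [inv_pow, inv_smul_smul, ← inv_pow] at this

theorem pow_down (hmono : ∀ (a : G) (x y : Ω), x < y → a • x < a • y) {f : G} {u : Ω}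
    (h : f • u < u) : ∀ n : ℕ, f ^ n • u ≤ u := by
  intro n
  induction n with
  | zero => simp
  | succ n ih =>
    rw [pow_succ, mul_smul]
    exact (hmono _ _ _ h).le.trans ih

theorem pow_up (hmono : ∀ (a : G) (x y : Ω), x < y → a • x < a • y) {f : G} {u : Ω}
    (h : u < f • u) : ∀ n : ℕ, u ≤ f ^ n • u := by
  intro n
  induction n with
  | zero => simp
  | succ n ih =>
    rw [pow_succ, mul_smul]
    exact ih.trans (hmono _ _ _ h).le

theorem key_block (hmono : ∀ (a : G) (x y : Ω), x < y → a • x < a • y) (hnc : NoCross G Ω)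
    {g : G} {o : Ω} (hg : o < g • o) (f : G) (u v : Ω) (hu : InHull g o u)
    (hfu : InHull g o (f • u)) (hfv : InHull g o (f • v)) : InHull g o v := by
  by_contra hv
  have hdich : (∀ x, InHull g o x → x < v) ∨ (∀ x, InHull g o x → v < x) := by
    by_contra hcon
    push Not at hcon
    obtain ⟨⟨x, ⟨m, n, h1, h2⟩, h3⟩, y, ⟨m', n', h1', h2'⟩, h3'⟩ := hcon
    exact hv ⟨m', n, h1'.trans_le h3', h3.trans_lt h2⟩
  rcases hdich with hd | hd
  · obtain ⟨m, hm0, hm, -⟩ := hull_up hmono hg hu hfu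
    set F := g ^ m * f with hF
    have hFu : u < F • u := by rw [hF, mul_smul]; exact hm
    have hFv : InHull g o (F • v) := by
      rw [hF, mul_smul, ← zpow_natCast]; exact hull_zpow hmono hfv _
    have huv := hd u hu
    obtain ⟨M, hM0, hM, -⟩ := hull_up hmono hg hFv hu
    have hw : InHull g o (g ^ M • u) := by
      rw [← zpow_natCast]; exact hull_zpow hmono hu _
    obtain ⟨M', hM'0, hM', -⟩ := hull_up hmono hg hw hu
    refine hnc F g u v (g ^ M • u) ?_ (hd _ hw) ?_ M' 1 hM'0 one_pos (by simpa using hM) hM'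
    · exact hFu.trans ((hmono _ _ _ huv).trans hM)
    · intro n _
      refine ⟨hd _ (by rw [← zpow_natCast]; exact hull_zpow hmono hu _), ?_⟩
      exact (pow_up hmono hFu n).trans_lt (hmono _ _ _ huv)
  · obtain ⟨m, hm0, -, hm⟩ := hull_up hmono hg hfu hu
    set F := g⁻¹ ^ m * f with hF
    have hinv : ∀ (n : ℕ) x, InHull g o x → InHull g o (g⁻¹ ^ n • x) := by
      intro n x hx
      have := hull_zpow hmono hx (-(n : ℤ))
      rwa [zpow_neg, zpow_natCast, ← inv_pow] at this
    have hFu : F • u < u := by rw [hF, mul_smul]; exact hm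
    have hFv : InHull g o (F • v) := by
      rw [hF, mul_smul]; exact hinv _ _ hfv
    have huv := hd u hu
    obtain ⟨M, hM0, -, hM⟩ := hull_up hmono hg hu hFv
    have hw : InHull g o (g⁻¹ ^ M • u) := hinv _ _ hu
    obtain ⟨M', hM'0, -, hM'⟩ := hull_up hmono hg hu hw
    refine hnc g⁻¹ F v u (g⁻¹ ^ M • u) (hd _ hw) ?_ ?_ 1 M' one_pos hM'0 hM' (by simpa using hM)
    · exact hM.trans ((hmono _ _ _ huv).trans hFu)
    · intro n _
      refine ⟨?_, hd _ (hinv _ _ hu)⟩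
      exact (hmono _ _ _ huv).trans_le (pow_down hmono hFu n)

theorem hull_all (hmono : ∀ (a : G) (x y : Ω), x < y → a • x < a • y) (hnc : NoCross G Ω)
    {o : Ω} (htr : ∀ x : Ω, ∃ a : G, a • o = x)
    (hJ : ∀ K : Subgroup G, (∀ a, a • o = o → a ∈ K) →
      (∀ a b c : G, a ∈ K → c ∈ K → a • o < b • o → b • o < c • o → b ∈ K) →
      (∀ a ∈ K, a • o = o) ∨ K = ⊤)
    {g : G} (hg : o < g • o) (x : Ω) : InHull g o x := by
  have hself : ∀ k : ℤ, InHull g o (g ^ k • o) := fun k =>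
    ⟨k - 1, k + 1, pow_smono hmono hg (by omega), pow_smono hmono hg (by omega)⟩
  have ho : InHull g o o := by simpa using hself 0
  let K : Subgroup G :=
    { carrier := {a | InHull g o (a • o)}
      one_mem' := by simpa using ho
      mul_mem' := by
        intro a b ha hb
        refine key_block hmono hnc hg a⁻¹ (a • o) _ ha ?_ ?_
        · simpa using ho
        · simpa [mul_smul] using hb
      inv_mem' := by
        intro a ha
        refine key_block hmono hnc hg a o _ ho ha ?_
        simpa using ho }
  have hgK : g ∈ K := by
    have := hself 1
    rw [zpow_one] at this
    exact this
  refine (hJ K ?_ ?_).elim (fun h => ?_) (fun h => ?_)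
  rotate_left 2
  · exact absurd (h g hgK) hg.ne'
  · obtain ⟨a, rfl⟩ := htr x
    have : a ∈ K := by rw [h]; trivial
    exact this
  · intro a ha
    change InHull g o (a • o)
    rw [ha]; exact ho
  · rintro a b c ⟨m, _, h1, -⟩ ⟨_, n, -, h2⟩ hab hbc
    exact ⟨m, n, h1.trans hab, hbc.trans h2⟩

theorem all_up (hmono : ∀ (a : G) (x y : Ω), x < y → a • x < a • y) {o : Ω}
    {g : G} (hg : o < g • o) (hall : ∀ x, InHull g o x) (x : Ω) : x < g • x := by
  by_contra hcon
  have hcon : g • x ≤ x := not_lt.1 hcon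
  obtain ⟨n, -, hn, -⟩ := hull_up hmono hg (hall x) (hall x)
  have : ∀ n : ℕ, g ^ n • x ≤ x := by
    rcases hcon.eq_or_lt with h | h
    · intro n
      induction n with
      | zero => simp
      | succ n ih => rw [pow_succ, mul_smul, h]; exact ih
    · exact pow_down hmono h
  exact absurd hn (not_lt.2 (this n))
end act

section holder
theorem holder_comm {Q : Type*} [Group Q] [LinearOrder Q]
    (hl : ∀ a x y : Q, x < y → a * x < a * y) (hr : ∀ a x y : Q, x < y → x * a < y * a)
    (harch : ∀ g : Q, 1 < g → ∀ x, ∃ m n : ℤ, g ^ m < x ∧ x < g ^ n) (x y : Q) : x * y = y * x := by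
  have : MulLeftStrictMono Q := ⟨fun a x y h => hl a x y h⟩
  have : MulRightStrictMono Q := ⟨fun a x y h => hr a x y h⟩
  have : MulLeftMono Q := mulLeftMono_of_mulLeftStrictMono Q
  have : MulRightMono Q := mulRightMono_of_mulRightStrictMono Q
  have hfl : ∀ g : Q, 1 < g → ∀ x, ∃ n : ℤ, g ^ n ≤ x ∧ x < g ^ (n + 1) := by
    intro g hg x
    obtain ⟨m, n, h1, h2⟩ := harch g hg x
    have hsm : StrictMono (fun n : ℤ => g ^ n) := by
      apply strictMono_int_of_lt_succ
      intro n
      simpa [zpow_add_one] using hg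
    obtain ⟨k, hk, hk'⟩ := Int.exists_greatest_of_bdd (P := fun k : ℤ => g ^ k ≤ x)
      ⟨n, fun z hz => (hsm.lt_iff_lt.1 (lt_of_le_of_lt hz h2)).le⟩ ⟨m, h1.le⟩
    refine ⟨k, hk, ?_⟩
    by_contra hc
    have := hk' (k + 1) (not_lt.1 hc)
    omega
  have hbd : ∀ g : Q, 1 < g → ∀ x y : Q, x * y < g * g * (y * x) := by
    intro g hg x y
    obtain ⟨m, hm, hm'⟩ := hfl g hg x
    obtain ⟨n, hn, hn'⟩ := hfl g hg y
    calc x * y < g ^ (m + 1) * g ^ (n + 1) := (hr _ _ _ hm').trans (hl _ _ _ hn')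
      _ = g * g * (g ^ n * g ^ m) := by group
      _ ≤ g * g * (y * x) := by gcongr
  have hmain : ∀ x y : Q, ¬ y * x < x * y := by
    intro x y hlt
    set c := (x * y) * (y * x)⁻¹ with hc
    have hc1 : 1 < c := by rw [hc, ← mul_inv_cancel (y * x)]; exact hr _ _ _ hlt
    have hcb : ∀ g, 1 < g → c < g * g := by
      intro g hg
      rw [hc, mul_inv_lt_iff_lt_mul]
      exact hbd g hg x y
    by_cases hd : ∃ d, 1 < d ∧ d < c
    · obtain ⟨d, hd1, hd2⟩ := hd
      have h1 := hcb d hd1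
      have h2 : 1 < d⁻¹ * c := by rw [lt_inv_mul_iff_mul_lt]; simpa using hd2
      have h3 := hcb _ h2
      have h4 : d⁻¹ * c < d := by rw [inv_mul_lt_iff_lt_mul]; exact h1
      have h5 : d⁻¹ * c * (d⁻¹ * c) < d * (d⁻¹ * c) := hr _ _ _ h4
      rw [mul_inv_cancel_left] at h5
      exact lt_asymm h3 h5
    · push Not at hd
      have hz : ∀ z : Q, ∃ n : ℤ, z = c ^ n := by
        intro z
        obtain ⟨n, hn, hn'⟩ := hfl c hc1 z
        refine ⟨n, ?_⟩
        by_contra hne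
        have hlt : c ^ n < z := lt_of_le_of_ne hn (Ne.symm hne)
        have h1 : 1 < (c ^ n)⁻¹ * z := by rw [lt_inv_mul_iff_mul_lt]; simpa using hlt
        have h2 := hd _ h1
        rw [le_inv_mul_iff_mul_le, ← zpow_add_one] at h2
        exact absurd hn' (not_lt.2 h2)
      obtain ⟨m, hm⟩ := hz x
      obtain ⟨n, hn⟩ := hz y
      rw [hm, hn, ← zpow_add, ← zpow_add, add_comm] at hlt
      exact lt_irrefl _ hlt
  exact le_antisymm (not_lt.1 (hmain x y)) (not_lt.1 (hmain y x))

theorem holder_embed {Q : Type*} [Group Q] [LinearOrder Q]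
    (hl : ∀ a x y : Q, x < y → a * x < a * y) (hr : ∀ a x y : Q, x < y → x * a < y * a)
    (harch : ∀ g : Q, 1 < g → ∀ x, ∃ m n : ℤ, g ^ m < x ∧ x < g ^ n) :
    ∃ τ : Q → ℝ, (∀ a b, τ (a * b) = τ a + τ b) ∧ StrictMono τ := by
  let _ : CommGroup Q := { (inferInstance : Group Q) with mul_comm := holder_comm hl hr harch }
  have : MulLeftStrictMono Q := ⟨fun a x y h => hl a x y h⟩
  have : MulLeftMono Q := mulLeftMono_of_mulLeftStrictMono Q
  have : IsOrderedMonoid Q := { mul_le_mul_left := fun a b h c => by gcongr }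
  have : MulArchimedean Q := ⟨fun x y hy => by
    obtain ⟨m, n, -, h⟩ := harch y hy x
    refine ⟨n.toNat, h.le.trans ?_⟩
    rw [← zpow_natCast]
    exact zpow_le_zpow_right hy.le (Int.self_le_toNat n)⟩
  obtain ⟨f, hf⟩ := Archimedean.exists_orderAddMonoidHom_real_injective (Additive Q)
  refine ⟨fun q => f (Additive.ofMul q), fun a b => ?_, ?_⟩
  · exact map_add f (Additive.ofMul a) (Additive.ofMul b)
  · exact (OrderHomClass.mono f).strictMono_of_injective hf
end holder

section coset
variable {Γ : Type*} [Group Γ] [LinearOrder Γ] [CovariantClass Γ Γ (· * ·) (· ≤ ·)]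

theorem cosetLT_congr {H : Subgroup Γ} (hH : IsConvexSubgroup H) {x y x' y' : Γ}
    (hx : x⁻¹ * x' ∈ H) (hy : y⁻¹ * y' ∈ H) (h : CosetLT H x y) : CosetLT H x' y' := by
  obtain ⟨h1, h2⟩ := h
  have hn : x'⁻¹ * y' ∉ H := by
    intro hc
    apply h1
    have := H.mul_mem (H.mul_mem hx hc) (H.inv_mem hy)
    simpa [mul_assoc] using this
  refine ⟨hn, ?_⟩
  by_contra hc
  have hle : y' ≤ x' := not_lt.1 hc
  have ht1 : 1 < x⁻¹ * y := by rw [lt_inv_mul_iff_mul_lt]; simpa using h2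
  have htk : x⁻¹ * y' ≤ x⁻¹ * x' := mul_le_mul_right hle _
  have hne : x⁻¹ * y' ∉ H := by
    intro hc
    apply hn
    have := H.mul_mem (H.inv_mem hx) hc
    simpa [mul_assoc] using this
  have hlt : x⁻¹ * y' < x⁻¹ * x' := lt_of_le_of_ne htk (fun e => hne (e ▸ hx))
  have hlt1 : x⁻¹ * y' < 1 := by
    by_contra hc
    have h3 : 1 < x⁻¹ * y' := lt_of_le_of_ne (not_lt.1 hc) (fun e => hne (e ▸ H.one_mem))
    exact hne (hH 1 H.one_mem _ hx _ h3 hlt)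
  have h4 : y⁻¹ * y' < y⁻¹ * x := by
    have := mul_lt_mul_right hlt1 (y⁻¹ * x)
    simpa [mul_assoc] using this
  have h5 : y⁻¹ * x < 1 := by rw [inv_mul_lt_iff_lt_mul]; simpa using h2
  have h6 := hH _ hy 1 H.one_mem _ h4 h5
  apply h1
  simpa using H.inv_mem h6

theorem cosetLT_mul {H : Subgroup Γ} {x y : Γ} (a : Γ) (h : CosetLT H x y) :
    CosetLT H (a * x) (a * y) :=
  ⟨by simpa [mul_assoc] using h.1, mul_lt_mul_right h.2 a⟩

theorem trans_unique (G H : Subgroup Γ) (τ τ' : G → ℝ)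
    (h1 : ∀ a b : G, τ (a * b) = τ a + τ b) (hne : ∃ a : G, τ a ≠ 0)
    (h2 : ∀ a : G, τ a = 0 ↔ (a : Γ) ∈ H)
    (h3 : ∀ a : G, (a : Γ) ∉ H → 1 < (a : Γ) → 0 < τ a)
    (h1' : ∀ a b : G, τ' (a * b) = τ' a + τ' b)
    (h2' : ∀ a : G, τ' a = 0 ↔ (a : Γ) ∈ H)
    (h3' : ∀ a : G, (a : Γ) ∉ H → 1 < (a : Γ) → 0 < τ' a) :
    ∃ c : ℝ, 0 < c ∧ ∀ a : G, τ' a = c * τ a := by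
  have hinv : ∀ (σ : G → ℝ), (∀ a b : G, σ (a * b) = σ a + σ b) → ∀ a, σ a⁻¹ = - σ a := by
    intro σ hσ a
    have e1 := hσ 1 1
    have e2 := hσ a a⁻¹
    rw [mul_inv_cancel] at e2
    rw [mul_one] at e1
    linarith
  have hz : ∀ (σ : G → ℝ), (∀ a b : G, σ (a * b) = σ a + σ b) → ∀ (a : G) (n : ℤ),
      σ (a ^ n) = n * σ a := by
    intro σ hσ a n
    let φ : Additive G →+ ℝ := AddMonoidHom.mk' (fun x => σ x.toMul) (fun x y => hσ _ _)
    have := map_zsmul φ n (Additive.ofMul a)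
    simpa [φ] using this
  have hpos : ∀ a, 0 < τ a → 0 < τ' a := by
    intro a ha
    have hH : (a : Γ) ∉ H := fun h => ha.ne' ((h2 a).2 h)
    apply h3' a hH
    by_contra hc
    have hlt : (a : Γ) < 1 := lt_of_le_of_ne (not_lt.1 hc) (fun e => hH (e ▸ H.one_mem))
    have := h3 a⁻¹ (by simpa using hH) (by simpa using hlt)
    rw [hinv τ h1] at this
    linarith
  have hneg : ∀ a, τ a < 0 → τ' a < 0 := by
    intro a ha
    have := hpos a⁻¹ (by rw [hinv τ h1]; linarith)
    rw [hinv τ' h1'] at this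
    linarith
  obtain ⟨g, hg⟩ : ∃ g, 0 < τ g := by
    obtain ⟨a, ha⟩ := hne
    rcases lt_or_gt_of_ne ha with h | h
    · exact ⟨a⁻¹, by rw [hinv τ h1]; linarith⟩
    · exact ⟨a, h⟩
  have hg' := hpos g hg
  refine ⟨τ' g / τ g, div_pos hg' hg, fun a => ?_⟩
  have hval : ∀ (σ : G → ℝ), (∀ a b : G, σ (a * b) = σ a + σ b) → 0 < σ g → ∀ q : ℚ,
      σ (a ^ (q.den : ℤ) * g ^ (- q.num)) = q.den * σ g * (σ a / σ g - q) := by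
    intro σ hσ hσg q
    rw [hσ, hz σ hσ, hz σ hσ]
    have hd : (q.den : ℝ) ≠ 0 := by exact_mod_cast q.den_nz
    have hq : (q : ℝ) = q.num / q.den := by exact_mod_cast (Rat.num_div_den q).symm
    rw [hq]
    push_cast
    field_simp
    ring
  have heq : τ' a / τ' g = τ a / τ g := by
    rcases lt_trichotomy (τ' a / τ' g) (τ a / τ g) with h | h | h
    · exfalso
      obtain ⟨q, hq1, hq2⟩ := exists_rat_btwn h
      have hd : (0 : ℝ) < q.den := by exact_mod_cast q.den_pos
      have e := hpos (a ^ (q.den : ℤ) * g ^ (- q.num)) (by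
        rw [hval τ h1 hg]; exact mul_pos (mul_pos hd hg) (by linarith))
      rw [hval τ' h1' hg'] at e
      have := pos_of_mul_pos_right e (mul_pos hd hg').le
      linarith
    · exact h
    · exfalso
      obtain ⟨q, hq1, hq2⟩ := exists_rat_btwn h
      have hd : (0 : ℝ) < q.den := by exact_mod_cast q.den_pos
      have e := hneg (a ^ (q.den : ℤ) * g ^ (- q.num)) (by
        rw [hval τ h1 hg]; exact mul_neg_of_pos_of_neg (mul_pos hd hg) (by linarith))
      rw [hval τ' h1' hg'] at e
      have : 0 < q.den * τ' g * (τ' a / τ' g - q) := mul_pos (mul_pos hd hg') (by linarith)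
      linarith
  field_simp at heq ⊢
  linarith

theorem trans_exists (G H : Subgroup Γ)
    (hHG : H ≤ G)
    (hHconv : IsConvexSubgroup H) (hGconv : IsConvexSubgroup G)
    (hjump : ∀ K : Subgroup Γ, IsConvexSubgroup K → H ≤ K → K ≤ G → K = H ∨ K = G)
    (hext : IsConradianExtension G H) :
    ∃ τ : G → ℝ,
      (∀ a b : G, τ (a * b) = τ a + τ b) ∧
      (∀ a : G, τ a = 0 ↔ (a : Γ) ∈ H) ∧
      (∀ a : G, (a : Γ) ∉ H → 1 < (a : Γ) → 0 < τ a) := by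
  let S : Subgroup G := H.subgroupOf G
  let instO : LinearOrder (G ⧸ S) :=
    LinearOrder.lift' (Quotient.out : G ⧸ S → G) Quotient.out_injective
  have hout : ∀ x : G, (x : Γ)⁻¹ * ((x : G ⧸ S).out : G) ∈ H := by
    intro x
    have : x⁻¹ * (x : G ⧸ S).out ∈ S := by
      rw [← QuotientGroup.eq, QuotientGroup.out_eq']
    simpa [S, Subgroup.mem_subgroupOf] using this
  have hout' : ∀ x : G, (((x : G ⧸ S).out : G) : Γ)⁻¹ * x ∈ H := by
    intro x
    simpa using H.inv_mem (hout x)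
  have hltdef : ∀ x y : G ⧸ S, x < y ↔ ((x.out : G) : Γ) < (y.out : G) := fun x y => Iff.rfl
  have heqm : ∀ x y : G, (x : G ⧸ S) = y ↔ (x : Γ)⁻¹ * y ∈ H := by
    intro x y
    rw [QuotientGroup.eq]
    simp [S, Subgroup.mem_subgroupOf]
  have hlt : ∀ x y : G, (x : G ⧸ S) < y ↔ CosetLT H (x : Γ) y := by
    intro x y
    rw [hltdef]
    constructor
    · intro h
      refine cosetLT_congr hHconv (hout' x) (hout' y) ⟨?_, h⟩
      intro hc
      have := (heqm _ _).2 hc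
      rw [QuotientGroup.out_eq', QuotientGroup.out_eq'] at this
      rw [this] at h
      exact lt_irrefl _ h
    · intro h
      exact (cosetLT_congr hHconv (hout x) (hout y) h).2
  have hsm : ∀ a x : G, a • (x : G ⧸ S) = ((a * x : G) : G ⧸ S) := fun a x => rfl
  have hmono : ∀ (a : G) (x y : G ⧸ S), x < y → a • x < a • y := by
    intro a x y h
    induction x using QuotientGroup.induction_on with | _ x
    induction y using QuotientGroup.induction_on with | _ y
    rw [hsm, hsm, hlt]
    exact cosetLT_mul (a : Γ) ((hlt _ _).1 h)
  have hnc : NoCross G (G ⧸ S) := by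
    intro f g u v w huw hwv hall M N hM hN hf hg
    induction u using QuotientGroup.induction_on with | _ u
    induction v using QuotientGroup.induction_on with | _ v
    induction w using QuotientGroup.induction_on with | _ w
    simp only [hsm, hlt] at huw hwv hall hf hg
    exact hext f g u v w f.2 g.2 u.2 v.2 w.2 ⟨huw, hwv, hall, M, N, hM, hN, hf, hg⟩
  let o : G ⧸ S := ((1 : G) : G ⧸ S)
  have hso : ∀ a : G, a • o = (a : G ⧸ S) := fun a => by
    change a • ((1 : G) : G ⧸ S) = _
    rw [hsm, mul_one]
  have hmem : ∀ a : G, a • o = o ↔ (a : Γ) ∈ H := by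
    intro a
    rw [hso, eq_comm, heqm]
    simp
  have htr : ∀ x : G ⧸ S, ∃ a : G, a • o = x := by
    intro x
    induction x using QuotientGroup.induction_on with | _ x
    exact ⟨x, hso x⟩
  have hJ : ∀ K : Subgroup G, (∀ a, a • o = o → a ∈ K) →
      (∀ a b c : G, a ∈ K → c ∈ K → a • o < b • o → b • o < c • o → b ∈ K) →
      (∀ a ∈ K, a • o = o) ∨ K = ⊤ := by
    intro K hK1 hK2
    have hHK : ∀ a : G, (a : Γ) ∈ H → a ∈ K := fun a ha => hK1 a ((hmem a).2 ha)
    refine (hjump (K.map G.subtype) ?_ ?_ ?_).elim (fun h => ?_) (fun h => ?_)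
    rotate_left 3
    · left
      intro a ha
      rw [hmem, ← h]
      exact ⟨a, ha, rfl⟩
    · right
      rw [eq_top_iff]
      intro a _
      have : (a : Γ) ∈ K.map G.subtype := by rw [h]; exact a.2
      obtain ⟨b, hb, hba⟩ := this
      have : b = a := Subtype.ext hba
      exact this ▸ hb
    · rintro _ ⟨a, ha, rfl⟩ _ ⟨c, hc, rfl⟩ f haf hfc
      have hfG : f ∈ G := hGconv _ a.2 _ c.2 f haf hfc
      refine ⟨⟨f, hfG⟩, ?_, rfl⟩
      set b : G := ⟨f, hfG⟩ with hb
      by_cases h1 : (a : Γ)⁻¹ * b ∈ H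
      · have := K.mul_mem ha (hHK (a⁻¹ * b) (by simpa using h1))
        simpa using this
      by_cases h2 : (b : Γ)⁻¹ * c ∈ H
      · have := K.mul_mem hc (K.inv_mem (hHK (b⁻¹ * c) (by simpa using h2)))
        simpa using this
      refine hK2 a b c ha hc ?_ ?_
      · rw [hso, hso, hlt]; exact ⟨h1, haf⟩
      · rw [hso, hso, hlt]; exact ⟨h2, hfc⟩
    · intro x hx
      exact ⟨⟨x, hHG hx⟩, hHK _ hx, rfl⟩
    · rintro _ ⟨a, -, rfl⟩
      exact a.2
  have hall : ∀ g : G, o < g • o → ∀ x, InHull g o x := fun g hg =>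
    hull_all hmono hnc htr hJ hg
  have hup : ∀ g : G, o < g • o → ∀ x, x < g • x := fun g hg =>
    all_up hmono hg (hall g hg)
  have hpc : ∀ n g : G, n • o = o → ¬ o < (g * n * g⁻¹) • o := by
    intro n g hn h
    have := hup _ h (g • o)
    simp [mul_smul, hn] at this
  have hSm : ∀ a : G, a ∈ S ↔ a • o = o := fun a => by
    rw [hmem]; simp [S, Subgroup.mem_subgroupOf]
  have hN : S.Normal := by
    refine ⟨fun n hn g => ?_⟩
    rw [hSm] at hn ⊢
    rcases lt_trichotomy o ((g * n * g⁻¹) • o) with h | h | h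
    · exact absurd h (hpc n g hn)
    · exact h.symm
    · have h' := hmono (g * n * g⁻¹)⁻¹ _ _ h
      rw [inv_smul_smul] at h'
      have e : (g * n * g⁻¹)⁻¹ = g * n⁻¹ * g⁻¹ := by group
      rw [e] at h'
      refine absurd h' (hpc n⁻¹ g ?_)
      rw [inv_smul_eq_iff, hn]
  have ho1 : o = 1 := rfl
  refine (holder_embed (Q := G ⧸ S) ?_ ?_ ?_).elim (fun t htt => ?_)
  rotate_left 3
  · obtain ⟨ht, hts⟩ := htt
    have ht1 : t 1 = 0 := by
      have := ht 1 1
      rw [mul_one] at this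
      linarith
    refine ⟨fun a => t (a : G ⧸ S), fun a b => ht a b, fun a => ?_, fun a ha h1 => ?_⟩
    · rw [← hmem, hso, ho1]
      constructor
      · intro h
        exact hts.injective (h.trans ht1.symm)
      · intro h
        change t (a : G ⧸ S) = 0
        rw [h, ht1]
    · have : (1 : G ⧸ S) < (a : G ⧸ S) := (hlt 1 a).2 ⟨by simpa using ha, by simpa using h1⟩
      have := hts this
      rw [ht1] at this
      exact this
  · intro a x y h
    induction a using QuotientGroup.induction_on with | _ a
    exact hmono a x y h
  · intro a x y h
    induction a using QuotientGroup.induction_on with | _ a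
    induction x using QuotientGroup.induction_on with | _ x
    induction y using QuotientGroup.induction_on with | _ y
    have h1 := hmono x⁻¹ _ _ h
    rw [hsm, hsm, inv_mul_cancel] at h1
    have h2 := hup (x⁻¹ * y) (by rw [hso]; exact h1) (a : G ⧸ S)
    have h3 := hmono x _ _ h2
    rw [smul_smul, mul_inv_cancel_left] at h3
    exact h3
  · intro g hg x
    induction g using QuotientGroup.induction_on with | _ g
    obtain ⟨m, n, h1, h2⟩ := hall g (by rw [hso]; exact hg) x
    rw [hso] at h1 h2
    exact ⟨m, n, h1, h2⟩
end coset

/-- Under the hypotheses of the convex-jump theorem, there exists a nontrivial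
homomorphism `τ : G → ℝ` with kernel `H` which is positive on positive elements of
`G \ H`, unique up to multiplication by a positive real number. -/
theorem exists_unique_translation_number (Γ : Type*) [Group Γ] [LinearOrder Γ]
    [CovariantClass Γ Γ (· * ·) (· ≤ ·)] (G H : Subgroup Γ)
    (hHG : H ≤ G) (hne : H ≠ G)
    (hHconv : IsConvexSubgroup H) (hGconv : IsConvexSubgroup G)
    (hjump : ∀ K : Subgroup Γ, IsConvexSubgroup K → H ≤ K → K ≤ G → K = H ∨ K = G)
    (hext : IsConradianExtension G H) :
    ∃ τ : G → ℝ,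
      (∀ a b : G, τ (a * b) = τ a + τ b) ∧
      (∃ a : G, τ a ≠ 0) ∧
      (∀ a : G, τ a = 0 ↔ (a : Γ) ∈ H) ∧
      (∀ a : G, (a : Γ) ∉ H → 1 < (a : Γ) → 0 < τ a) ∧
      (∀ τ' : G → ℝ,
        (∀ a b : G, τ' (a * b) = τ' a + τ' b) →
        (∃ a : G, τ' a ≠ 0) →
        (∀ a : G, τ' a = 0 ↔ (a : Γ) ∈ H) →
        (∀ a : G, (a : Γ) ∉ H → 1 < (a : Γ) → 0 < τ' a) →
        ∃ c : ℝ, 0 < c ∧ ∀ a : G, τ' a = c * τ a) := by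
  obtain ⟨τ, h1, h2, h3⟩ := trans_exists G H hHG hHconv hGconv hjump hext
  have hnt : ∃ a : G, τ a ≠ 0 := by
    by_contra hc
    push Not at hc
    exact hne (le_antisymm hHG fun x hx => (h2 ⟨x, hx⟩).1 (hc _))
  exact ⟨τ, h1, hnt, h2, h3, fun τ' h1' _ h2' h3' =>
    trans_unique G H τ τ' h1 hnt h2 h3 h1' h2' h3'⟩
end

section
/- Let (Γ, ⪯) be a left-ordered group such that ⪯ is not Conradian, and let C be the Conradian soul of (Γ, ⪯); suppose C is nontrivial and the set of left-order positive cones on C is finite. Then there exists a left-invariant linear order ⪯* on Γ whose set of positive elements agrees with that of ⪯ outside C (i.e. for every g ∉ C, g ≻* 1 if and only if g ≻ 1) and which is approximated by its conjugates: for every finite set f₁, …, f_k of ⪯*-positive elements there exists h ∈ Γ such that the conjugate ordering (⪯*)_h is distinct from ⪯* and each f_i is (⪯*)_h-positive. -/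
/-- The ordering of a left-ordered group is Conradian. -/
def IsConradian (Γ : Type*) [Group Γ] [LinearOrder Γ] : Prop :=
  ∀ f g : Γ, 1 < f → 1 < g → ∃ n : ℕ, 0 < n ∧ g < f * g ^ n

/-- The restriction of the ordering to a subgroup `C` is Conradian. -/
def IsConradianOn {Γ : Type*} [Group Γ] [LinearOrder Γ] (C : Subgroup Γ) : Prop :=
  ∀ f ∈ C, ∀ g ∈ C, 1 < f → 1 < g → ∃ n : ℕ, 0 < n ∧ g < f * g ^ n

/-- `C` is the Conradian soul. -/
def IsConradianSoul {Γ : Type*} [Group Γ] [LinearOrder Γ] (C : Subgroup Γ) : Prop :=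
  IsConvexSubgroup C ∧ IsConradianOn C ∧
  ∀ K : Subgroup Γ, IsConvexSubgroup K → IsConradianOn K → K ≤ C

/-- `P` is the positive cone of a left-invariant linear order on the group `G`:
it is closed under multiplication and `G` is the disjoint union of `P`, `P⁻¹`
and `{1}`. -/
def IsPosCone {G : Type*} [Group G] (P : Set G) : Prop :=
  (∀ a ∈ P, ∀ b ∈ P, a * b ∈ P) ∧
  (∀ g : G, g ∈ P ∨ g⁻¹ ∈ P ∨ g = 1) ∧
  (1 : G) ∉ P ∧
  ∀ g ∈ P, g⁻¹ ∉ P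

namespace ConradAux

section basic
variable {Γ : Type*} [Group Γ] [LinearOrder Γ] [CovariantClass Γ Γ (· * ·) (· ≤ ·)]

theorem mulL {a b : Γ} (c : Γ) (h : a ≤ b) : c * a ≤ c * b := CovariantClass.elim c h

theorem mulLt {a b : Γ} (c : Γ) (h : a < b) : c * a < c * b :=
  lt_of_le_of_ne (mulL c h.le) (fun e => h.ne (mul_left_cancel e))

theorem lt_of_one_lt_inv_mul {a b : Γ} (h : 1 < a⁻¹ * b) : a < b := by
  have := mulLt a h
  simpa using this

/-- positive elements outside `C` -/
def Pos (C : Subgroup Γ) (x : Γ) : Prop := 1 < x ∧ x ∉ C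

/-- Nonnegative modulo `C`. -/
def NN (C : Subgroup Γ) (x : Γ) : Prop := x ∈ C ∨ Pos C x

variable {C : Subgroup Γ}

theorem pos_mul {x y : Γ} (hc : IsConvexSubgroup C) (hx : Pos C x) (hy : Pos C y) :
    Pos C (x * y) := by
  have h : x < x * y := by simpa using mulLt x hy.1
  exact ⟨hx.1.trans h, fun hm => hx.2 (hc 1 C.one_mem _ hm x hx.1 h)⟩

theorem inv_lt {x : Γ} (hx : 1 < x) : x⁻¹ < 1 := by simpa using mulLt x⁻¹ hx
theorem lt_inv {x : Γ} (hx : x < 1) : 1 < x⁻¹ := by simpa using mulLt x⁻¹ hx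

theorem pos_mul_left {x c : Γ} (hc : IsConvexSubgroup C) (hx : Pos C x) (hcm : c ∈ C) :
    Pos C (c * x) := by
  refine ⟨?_, fun h => hx.2 ((C.mul_mem_cancel_left hcm).1 h)⟩
  by_contra hn
  have h1 : x ≤ c⁻¹ := by simpa using mulL c⁻¹ (not_lt.1 hn)
  rcases h1.lt_or_eq with h1 | h1
  · exact hx.2 (hc 1 C.one_mem _ (C.inv_mem hcm) x hx.1 h1)
  · exact hx.2 (h1 ▸ C.inv_mem hcm)

theorem pos_mul_right {x c : Γ} (hc : IsConvexSubgroup C) (hx : Pos C x) (hcm : c ∈ C) :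
    Pos C (x * c) := by
  refine ⟨?_, fun h => hx.2 ((C.mul_mem_cancel_right hcm).1 h)⟩
  by_contra hn
  have h1 : c ≤ x⁻¹ := by simpa using mulL x⁻¹ (not_lt.1 hn)
  rcases h1.lt_or_eq with h1 | h1
  · exact hx.2 (by simpa using hc _ hcm 1 C.one_mem x⁻¹ h1 (inv_lt hx.1))
  · rw [h1] at hcm
    exact hx.2 (by simpa using hcm)

theorem tri (C : Subgroup Γ) (x : Γ) : x ∈ C ∨ Pos C x ∨ Pos C x⁻¹ := by
  by_cases h : x ∈ C
  · exact Or.inl h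
  · rcases lt_trichotomy 1 x with h1 | h1 | h1
    · exact Or.inr (Or.inl ⟨h1, h⟩)
    · exact absurd (h1 ▸ C.one_mem) h
    · exact Or.inr (Or.inr ⟨lt_inv h1, by simpa using h⟩)

theorem not_pos_inv {x : Γ} (h : Pos C x) : ¬ Pos C x⁻¹ := fun h' =>
  lt_asymm h'.1 (inv_lt h.1)

theorem nn_of_not {x : Γ} (h : ¬ Pos C x⁻¹) : NN C x := by
  rcases tri C x with h1 | h1 | h1
  · exact Or.inl h1
  · exact Or.inr h1
  · exact absurd h1 h

theorem nn_of_one_le {x : Γ} (h : 1 ≤ x) : NN C x :=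
  nn_of_not fun h' => absurd h (not_le.2 (by simpa using inv_lt h'.1))

theorem nn_pos {x y : Γ} (hc : IsConvexSubgroup C) (hx : NN C x) (hy : Pos C y) :
    Pos C (x * y) := by
  rcases hx with h | h
  · exact pos_mul_left hc hy h
  · exact pos_mul hc h hy

theorem pos_nn {x y : Γ} (hc : IsConvexSubgroup C) (hx : Pos C x) (hy : NN C y) :
    Pos C (x * y) := by
  rcases hy with h | h
  · exact pos_mul_right hc hx h
  · exact pos_mul hc hx h

theorem convex_of (E : Subgroup Γ) (h : ∀ e ∈ E, ∀ x, 1 < x → x < e → x ∈ E) :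
    IsConvexSubgroup E := by
  intro a ha b hb x hax hxb
  have := h (a⁻¹ * b) (E.mul_mem (E.inv_mem ha) hb) (a⁻¹ * x)
    (by simpa using mulLt a⁻¹ hax) (mulLt a⁻¹ hxb)
  exact (E.mul_mem_cancel_left (E.inv_mem ha)).1 this

/-- No inversion up to `f`. -/
def Hyp (C : Subgroup Γ) (f : Γ) : Prop :=
  ∀ x k : Γ, 1 ≤ x → x ≤ f → Pos C k → ¬ Pos C (x⁻¹ * k⁻¹ * x)

theorem step1 (hC : IsConradianSoul C) {f : Γ} (hf : Pos C f) (H : Hyp C f)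
    (E : Subgroup Γ) (hE : IsConvexSubgroup E) (hfE : f ∉ E) : E ≤ C := by
  have hc := hC.1
  apply hC.2.2 E hE
  have hlt : ∀ x ∈ E, x ≤ f := fun x hx => by
    by_contra hn
    exact hfE (hE 1 E.one_mem x hx f hf.1 (not_le.1 hn))
  intro a ha b hb h1a h1b
  rcases nn_of_one_le (C := C) h1b.le with hbC | hbP
  · rcases nn_of_one_le (C := C) h1a.le with haC | haP
    · exact hC.2.1 a haC b hbC h1a h1b
    · refine ⟨1, one_pos, lt_of_one_lt_inv_mul ?_⟩
      rw [pow_one]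
      exact (pos_mul_left hc (pos_mul_right hc haP hbC) (C.inv_mem hbC)).1
  · refine ⟨3, by norm_num, lt_of_one_lt_inv_mul ?_⟩
    have hab : Pos C (a * b) := nn_pos hc (nn_of_one_le h1a.le) hbP
    have h := H b (a * b) h1b.le (hlt b hb) hab
    have h2 : NN C (b⁻¹ * (a * b) * b) := nn_of_not (by
      convert h using 2; group)
    have h3 := (nn_pos hc h2 hbP).1
    have e : b⁻¹ * (a * b ^ 3) = b⁻¹ * (a * b) * b * b := by simp only [pow_succ, pow_zero, one_mul, mul_assoc]
    rwa [e]

theorem step2 (hC : IsConradianSoul C) {f : Γ} (hf : Pos C f) (H : Hyp C f)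
    {g : Γ} (hg : Pos C g) (hgf : g ≤ f) : ∀ c ∈ C, g⁻¹ * c * g ∈ C := by
  have hc := hC.1
  by_contra hne
  have hnP : ¬ ∀ c ∈ C, ¬ Pos C (g⁻¹ * c * g) := by
    intro hall
    apply hne
    intro c hcm
    rcases tri C (g⁻¹ * c * g) with h | h | h
    · exact h
    · exact absurd h (hall c hcm)
    · refine absurd ?_ (hall c⁻¹ (C.inv_mem hcm))
      convert h using 1; group
  let E : Subgroup Γ := C.map (MulAut.conj g⁻¹).toMonoidHom
  have memE : ∀ x, x ∈ E ↔ g * x * g⁻¹ ∈ C := by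
    intro x
    constructor
    · rintro ⟨c, hcm, rfl⟩
      have : g * ((MulAut.conj g⁻¹).toMonoidHom c) * g⁻¹ = c := by simp; group
      rw [this]; exact hcm
    · intro h
      exact ⟨_, h, by simp; group⟩
  have hE : IsConvexSubgroup E := by
    apply convex_of
    intro e he x h1x hxe
    rw [memE] at he ⊢
    have hxN : NN C x := nn_of_one_le h1x.le
    have hxe' : NN C (x⁻¹ * e) := nn_of_one_le (by simpa using (mulLt x⁻¹ hxe).le)
    rcases tri C (g * x * g⁻¹) with hy | hy | hy
    · exact hy
    · exfalso
      have key : ∀ c ∈ C, ¬ Pos C (x⁻¹ * g⁻¹ * c * g) := by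
        intro c hcm
        have := H g (c⁻¹ * (g * x * g⁻¹)) hg.1.le hgf (pos_mul_left hc hy (C.inv_mem hcm))
        convert this using 2; group
      have hmem : x⁻¹ * e ∈ C := by
        rcases hxe' with h | h
        · exact h
        · refine absurd ?_ (key _ he)
          convert h using 1; group
      apply hnP
      intro c hcm hp
      apply key (g * e * g⁻¹ * c) (C.mul_mem he hcm)
      have := pos_mul_left hc hp hmem
      convert this using 1; group
    · exfalso
      apply hnP
      intro c hcm hp
      apply H g ((g * x * g⁻¹)⁻¹ * c⁻¹) hg.1.le hgf (pos_mul_right hc hy (C.inv_mem hcm))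
      have := pos_nn hc hp hxN
      convert this using 1; group
  have hgE : g ∉ E := by
    rw [memE]
    simpa using hg.2
  have hfE : f ∉ E := fun h => by
    rcases hgf.lt_or_eq with h1 | h1
    · exact hgE (hE 1 E.one_mem f h g hg.1 h1)
    · exact hgE (h1 ▸ h)
  have hle := step1 hC hf H E hE hfE
  apply hne
  intro c hcm
  apply hle
  rw [memE]
  have : g * (g⁻¹ * c * g) * g⁻¹ = c := by group
  rwa [this]

theorem step3a (hC : IsConradianSoul C) {f : Γ} (hf : Pos C f) (H : Hyp C f)
    {g : Γ} (hg : Pos C g) (hgf : g ≤ f) (k : Γ) (hk : Pos C (g⁻¹ * k * g)) : Pos C k := by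
  rcases tri C k with h | h | h
  · exact absurd (step2 hC hf H hg hgf k h) hk.2
  · exact h
  · exact absurd (by simpa using hk) (H g k⁻¹ hg.1.le hgf h)

theorem step3 (hC : IsConradianSoul C) {f : Γ} (hf : Pos C f) (H : Hyp C f)
    {g : Γ} (hg : Pos C g) (hgf : g ≤ f) : ∀ c ∈ C, g * c * g⁻¹ ∈ C := by
  have hc := hC.1
  let E : Subgroup Γ := C.map (MulAut.conj g).toMonoidHom
  have memE : ∀ x, x ∈ E ↔ g⁻¹ * x * g ∈ C := by
    intro x
    constructor
    · rintro ⟨c, hcm, rfl⟩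
      have : g⁻¹ * ((MulAut.conj g).toMonoidHom c) * g = c := by simp; group
      rw [this]; exact hcm
    · intro h
      exact ⟨_, h, by simp; group⟩
  have hE : IsConvexSubgroup E := by
    apply convex_of
    intro e he x h1x hxe
    rw [memE] at he ⊢
    rcases tri C (g⁻¹ * x * g) with hy | hy | hy
    · exact hy
    · exfalso
      have := step3a hC hf H hg hgf (e⁻¹ * x) (by
        have := pos_mul_left hc hy (C.inv_mem he)
        convert this using 1; group)
      exact lt_asymm hxe (lt_of_one_lt_inv_mul this.1)
    · exfalso
      have := step3a hC hf H hg hgf x⁻¹ (by convert hy using 1; group)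
      exact lt_asymm this.1 (inv_lt h1x)
  have hgE : g ∉ E := by
    rw [memE]
    simpa using hg.2
  have hfE : f ∉ E := fun h => by
    rcases hgf.lt_or_eq with h1 | h1
    · exact hgE (hE 1 E.one_mem f h g hg.1 h1)
    · exact hgE (h1 ▸ h)
  have hle := step1 hC hf H E hE hfE
  intro c hcm
  apply hle
  rw [memE]
  have : g⁻¹ * (g * c * g⁻¹) * g = c := by group
  rwa [this]

/-- Elements whose conjugation preserves `Pos C`. -/
def D0 (C : Subgroup Γ) : Subgroup Γ where
  carrier := {x | ∀ k, Pos C (x⁻¹ * k * x) ↔ Pos C k}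
  one_mem' := by intro k; simp
  mul_mem' := by
    intro a b ha hb k
    rw [← ha k, ← hb (a⁻¹ * k * a)]
    have : (a * b)⁻¹ * k * (a * b) = b⁻¹ * (a⁻¹ * k * a) * b := by group
    rw [this]
  inv_mem' := by
    intro a ha k
    rw [← ha]
    have : a⁻¹ * (a⁻¹⁻¹ * k * a⁻¹) * a = k := by group
    rw [this]

/-- The largest convex subgroup inside `D`. -/
def core (D : Subgroup Γ) : Subgroup Γ where
  carrier := {x | ∀ z, (1 ≤ z ∧ z ≤ x) ∨ (x ≤ z ∧ z ≤ 1) → z ∈ D}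
  one_mem' := by
    intro z hz
    have : z = 1 := by
      rcases hz with h | h
      · exact le_antisymm h.2 h.1
      · exact le_antisymm h.2 h.1
    rw [this]; exact D.one_mem
  mul_mem' := by
    intro a b ha hb z hz
    have haD : a ∈ D := ha a (by
      rcases le_total 1 a with h | h
      · exact Or.inl ⟨h, le_rfl⟩
      · exact Or.inr ⟨le_rfl, h⟩)
    have hz2 : ((1 ≤ z ∧ z ≤ a) ∨ (a ≤ z ∧ z ≤ 1)) ∨ ((a ≤ z ∧ z ≤ a * b) ∨ (a * b ≤ z ∧ z ≤ a)) := by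
      rcases le_total z a with h | h <;> tauto
    rcases hz2 with h | h
    · exact ha z h
    · have : a⁻¹ * z ∈ D := hb _ (by
        rcases h with h | h
        · left; exact ⟨by simpa using mulL a⁻¹ h.1, by simpa using mulL a⁻¹ h.2⟩
        · right; exact ⟨by simpa using mulL a⁻¹ h.1, by simpa using mulL a⁻¹ h.2⟩)
      exact (D.mul_mem_cancel_left (D.inv_mem haD)).1 this
  inv_mem' := by
    intro a ha z hz
    have haD : a ∈ D := ha a (by
      rcases le_total 1 a with h | h
      · exact Or.inl ⟨h, le_rfl⟩
      · exact Or.inr ⟨le_rfl, h⟩)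
    have : a * z ∈ D := ha _ (by
      rcases hz with h | h
      · right; exact ⟨by simpa using mulL a h.1, by simpa using mulL a h.2⟩
      · left; exact ⟨by simpa using mulL a h.1, by simpa using mulL a h.2⟩)
    exact (D.mul_mem_cancel_left haD).1 this

theorem key (hC : IsConradianSoul C) {f : Γ} (hf : Pos C f) : ¬ Hyp C f := by
  intro H
  have hc := hC.1
  have hI : ∀ x, 1 ≤ x → x ≤ f → x ∈ D0 C := by
    intro x h1 hxf
    rcases nn_of_one_le (C := C) h1 with hx | hx
    · intro k
      constructor
      · intro hk
        have := pos_mul_right hc (pos_mul_left hc hk hx) (C.inv_mem hx)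
        convert this using 1; group
      · intro hk
        exact pos_mul_right hc (pos_mul_left hc hk (C.inv_mem hx)) hx
    · intro k
      refine ⟨step3a hC hf H hx hxf k, fun hk => ?_⟩
      rcases tri C (x⁻¹ * k * x) with h | h | h
      · refine absurd ?_ hk.2
        have := step3 hC hf H hx hxf _ h
        have e : x * (x⁻¹ * k * x) * x⁻¹ = k := by group
        rwa [e] at this
      · exact h
      · refine absurd ?_ (H x k h1 hxf hk)
        convert h using 1; group
  have hD : core (D0 C) ≤ C := by
    apply hC.2.2
    · apply convex_of
      intro e he x h1x hxe z hz
      rcases hz with h | h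
      · exact he z (Or.inl ⟨h.1, h.2.trans hxe.le⟩)
      · exact absurd (h.1.trans h.2) (not_le.2 h1x)
    · intro a ha b hb h1a h1b
      have hbD : b ∈ D0 C := hb b (Or.inl ⟨h1b.le, le_rfl⟩)
      rcases nn_of_one_le (C := C) h1b.le with hbC | hbP
      · rcases nn_of_one_le (C := C) h1a.le with haC | haP
        · exact hC.2.1 a haC b hbC h1a h1b
        · refine ⟨1, one_pos, lt_of_one_lt_inv_mul ?_⟩
          rw [pow_one]
          exact (pos_mul_left hc (pos_mul_right hc haP hbC) (C.inv_mem hbC)).1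
      · refine ⟨2, by norm_num, lt_of_one_lt_inv_mul ?_⟩
        have h2 : NN C (b⁻¹ * a * b) := nn_of_not (by
          intro h
          have h' : Pos C (b⁻¹ * a⁻¹ * b) := by convert h using 1; group
          rw [hbD] at h'
          exact lt_asymm h'.1 (inv_lt h1a))
        have h3 := (nn_pos hc h2 hbP).1
        have e : b⁻¹ * (a * b ^ 2) = b⁻¹ * a * b * b := by simp only [pow_succ, pow_zero, one_mul, mul_assoc]
        rwa [e]
  apply hf.2
  apply hD
  intro z hz
  rcases hz with h | h
  · exact hI z h.1 h.2
  · exact absurd (h.1.trans h.2) (not_le.2 hf.1)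

theorem conj_exists (hnc : ¬ IsConradian Γ) (hC : IsConradianSoul C) (F : Finset Γ) :
    ∃ h k : Γ, (∀ f ∈ F, Pos C f → Pos C (h * f * h⁻¹)) ∧ Pos C k ∧ Pos C (h * k⁻¹ * h⁻¹) := by
  have hc := hC.1
  have hne : ∃ f, Pos C f := by
    by_contra hn
    push Not at hn
    apply hnc
    have : ∀ x, x ∈ C := fun x => by
      rcases tri C x with h | h | h
      · exact h
      · exact absurd h (hn _)
      · exact absurd h (hn _)
    intro a b
    exact hC.2.1 a (this a) b (this b)
  have hmin : ∃ f, Pos C f ∧ ∀ x ∈ F, Pos C x → f ≤ x := by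
    classical
    obtain ⟨f0, hf0⟩ := hne
    induction F using Finset.induction_on with
    | empty => exact ⟨f0, hf0, by simp⟩
    | insert a s _ ih =>
      obtain ⟨f, hf, hfs⟩ := ih
      by_cases ha : Pos C a ∧ a ≤ f
      · refine ⟨a, ha.1, fun x hx hxp => ?_⟩
        rcases Finset.mem_insert.1 hx with rfl | hx
        · exact le_rfl
        · exact ha.2.trans (hfs x hx hxp)
      · refine ⟨f, hf, fun x hx hxp => ?_⟩
        rcases Finset.mem_insert.1 hx with rfl | hx
        · exact le_of_lt (not_le.1 fun h => ha ⟨hxp, h⟩)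
        · exact hfs x hx hxp
  obtain ⟨f, hf, hfF⟩ := hmin
  have hk := key hC hf
  unfold Hyp at hk
  push Not at hk
  obtain ⟨w, k, h1w, hwf, hk, hwk⟩ := hk
  have hw : Pos C w := by
    rcases nn_of_one_le (C := C) h1w with h | h
    · exfalso
      have := pos_mul_right hc (pos_mul_left hc hwk h) (C.inv_mem h)
      apply not_pos_inv hk
      convert this using 1; group
    · exact h
  refine ⟨w⁻¹, k, fun x hx hxp => ?_, hk, by simpa using hwk⟩
  rw [inv_inv]
  refine nn_pos hc (nn_of_one_le ?_) hw
  simpa using mulL w⁻¹ (hwf.trans (hfF x hx hxp))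

/-- Extension of a cone on `C` by the given order outside `C`. -/
def hat (C : Subgroup Γ) (Q : Set C) : Set Γ := {g | Pos C g ∨ ∃ h : g ∈ C, (⟨g, h⟩ : C) ∈ Q}

theorem hat_cone (hc : IsConvexSubgroup C) {Q : Set C} (hQ : IsPosCone Q) :
    IsPosCone (hat C Q) := by
  obtain ⟨q1, q2, q3, q4⟩ := hQ
  refine ⟨?_, ?_, ?_, ?_⟩
  · rintro a (ha | ⟨ha, ha'⟩) b (hb | ⟨hb, hb'⟩)
    · exact Or.inl (pos_mul hc ha hb)
    · exact Or.inl (pos_mul_right hc ha hb)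
    · exact Or.inl (pos_mul_left hc hb ha)
    · exact Or.inr ⟨C.mul_mem ha hb, q1 _ ha' _ hb'⟩
  · intro g
    rcases tri C g with h | h | h
    · rcases q2 ⟨g, h⟩ with h' | h' | h'
      · exact Or.inl (Or.inr ⟨h, h'⟩)
      · exact Or.inr (Or.inl (Or.inr ⟨C.inv_mem h, h'⟩))
      · exact Or.inr (Or.inr (by simpa using congrArg Subtype.val h'))
    · exact Or.inl (Or.inl h)
    · exact Or.inr (Or.inl (Or.inl h))
  · rintro (h | ⟨h, h'⟩)
    · exact h.2 C.one_mem
    · exact q3 h'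
  · rintro g (hg | ⟨hg, hg'⟩) (h | ⟨h, h'⟩)
    · exact not_pos_inv hg h
    · exact hg.2 (by simpa using h)
    · exact h.2 (C.inv_mem hg)
    · exact q4 _ hg' h'

theorem restrict_cone {R : Set Γ} (hR : IsPosCone R) (h : Γ) :
    IsPosCone {c : C | h * (c : Γ) * h⁻¹ ∈ R} := by
  obtain ⟨q1, q2, q3, q4⟩ := hR
  refine ⟨?_, ?_, ?_, ?_⟩
  · intro a ha b hb
    have := q1 _ ha _ hb
    simpa [mul_assoc] using this
  · intro g
    rcases q2 (h * (g : Γ) * h⁻¹) with h1 | h1 | h1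
    · exact Or.inl h1
    · refine Or.inr (Or.inl ?_)
      simpa [mul_assoc] using h1
    · refine Or.inr (Or.inr ?_)
      rw [conj_eq_one_iff] at h1
      exact_mod_cast h1
  · simpa using q3
  · intro g hg hg'
    apply q4 _ hg
    simpa [mul_assoc] using hg'

/-- `hat Q'` is a nontrivial limit of conjugates of `hat Q`. -/
def Rel (C : Subgroup Γ) (Q Q' : Set C) : Prop :=
  ∀ F : Finset Γ, (∀ f ∈ F, f ∈ hat C Q') →
    ∃ h g : Γ, g ∈ hat C Q' ∧ h * g⁻¹ * h⁻¹ ∈ hat C Q ∧ ∀ f ∈ F, h * f * h⁻¹ ∈ hat C Q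

theorem rel_trans {Q Q' Q'' : Set C} (h1 : Rel C Q Q') (h2 : Rel C Q' Q'') : Rel C Q Q'' := by
  classical
  intro F hF
  obtain ⟨h, g, hg, hg', hh⟩ := h2 F hF
  obtain ⟨h', -, -, -, hh'⟩ := h1 (insert (h * g⁻¹ * h⁻¹) (F.image fun f => h * f * h⁻¹)) (by
    intro f hf
    rcases Finset.mem_insert.1 hf with rfl | hf
    · exact hg'
    · obtain ⟨x, hx, rfl⟩ := Finset.mem_image.1 hf
      exact hh x hx)
  refine ⟨h' * h, g, hg, ?_, fun f hf => ?_⟩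
  · have := hh' _ (Finset.mem_insert_self _ _)
    convert this using 1; group
  · have := hh' _ (Finset.mem_insert_of_mem (Finset.mem_image_of_mem _ hf))
    convert this using 1; group

theorem rel_serial (hnc : ¬ IsConradian Γ) (hC : IsConradianSoul C)
    (hfin : {P : Set C | IsPosCone P}.Finite) (Q : Set C) (hQ : IsPosCone Q) :
    ∃ Q', IsPosCone Q' ∧ Rel C Q Q' := by
  classical
  by_contra hn
  push Not at hn
  have : ∀ Q' : Set C, ∃ F : Finset Γ, IsPosCone Q' → (∀ f ∈ F, f ∈ hat C Q') ∧
      ¬ ∃ h g : Γ, g ∈ hat C Q' ∧ h * g⁻¹ * h⁻¹ ∈ hat C Q ∧ ∀ f ∈ F, h * f * h⁻¹ ∈ hat C Q := by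
    intro Q'
    by_cases hQ' : IsPosCone Q'
    · have := hn Q' hQ'
      unfold Rel at this
      rw [not_forall] at this
      obtain ⟨F, hF⟩ := this
      rw [Classical.not_imp] at hF
      exact ⟨F, fun _ => hF⟩
    · exact ⟨∅, fun h => absurd h hQ'⟩
  choose F hF using this
  obtain ⟨h, k, hh, hk, hk'⟩ := conj_exists hnc hC (hfin.toFinset.biUnion F)
  have hR := restrict_cone (C := C) (hat_cone hC.1 hQ) h
  obtain ⟨hF1, hF2⟩ := hF _ hR
  apply hF2
  refine ⟨h, k, Or.inl hk, Or.inl hk', fun f hf => ?_⟩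
  rcases hF1 f hf with h1 | ⟨h1, h2⟩
  · exact Or.inl (hh f (Finset.mem_biUnion.2 ⟨_, by simpa using hR, hf⟩) h1)
  · exact h2

theorem exists_refl (hnc : ¬ IsConradian Γ) (hC : IsConradianSoul C)
    (hfin : {P : Set C | IsPosCone P}.Finite) : ∃ Q, IsPosCone Q ∧ Rel C Q Q := by
  by_contra hn
  push Not at hn
  have hQ0 : IsPosCone {c : C | (1 : Γ) < c} := by
    refine ⟨?_, ?_, ?_, ?_⟩
    · intro a ha b hb
      have h : (a : Γ) < a * b := by simpa using mulLt (a : Γ) hb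
      exact lt_trans ha h
    · intro g
      rcases lt_trichotomy (1 : Γ) g with h | h | h
      · exact Or.inl h
      · exact Or.inr (Or.inr (by exact_mod_cast h.symm))
      · exact Or.inr (Or.inl (by simpa using lt_inv h))
    · simp
    · intro g hg hg'
      exact lt_asymm hg' (by simpa using inv_lt hg)
  let T := {P : Set C // IsPosCone P}
  haveI : Finite T := hfin
  let r : T → T → Prop := fun a b => Rel C b.1 a.1
  haveI : IsTrans T r := ⟨fun a b c hab hbc => rel_trans hbc hab⟩
  haveI : Std.Irrefl r := ⟨fun a ha => hn a.1 a.2 ha⟩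
  have hwf : WellFounded r := Finite.wellFounded_of_trans_of_irrefl r
  obtain ⟨m, -, hm⟩ := hwf.has_min Set.univ ⟨⟨_, hQ0⟩, trivial⟩
  obtain ⟨Q', hQ', hr⟩ := rel_serial hnc hC hfin m.1 m.2
  exact hm ⟨Q', hQ'⟩ trivial hr

end basic

end ConradAux

/-- If the ordering of a left-ordered group is not Conradian and its Conradian soul
`C` is nontrivial with only finitely many orderings, then there is a left-invariant
linear order on `Γ` (given by its positive cone `P`) agreeing with the original one
outside `C` which is approximated by its conjugates. -/
theorem exists_ordering_approximated_by_conjugates (Γ : Type*) [Group Γ]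
    [LinearOrder Γ] [CovariantClass Γ Γ (· * ·) (· ≤ ·)]
    (hnc : ¬ IsConradian Γ)
    (C : Subgroup Γ) (hC : IsConradianSoul C) (hCnt : C ≠ ⊥)
    (hfin : {P : Set C | IsPosCone P}.Finite) :
    ∃ P : Set Γ, IsPosCone P ∧
      (∀ g : Γ, g ∉ C → (g ∈ P ↔ 1 < g)) ∧
      ∀ F : Finset Γ, (∀ f ∈ F, f ∈ P) →
        ∃ h : Γ, (∃ g : Γ, ¬ ((h * g * h⁻¹ ∈ P) ↔ g ∈ P)) ∧
          ∀ f ∈ F, h * f * h⁻¹ ∈ P := by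
  obtain ⟨Q, hQ, hr⟩ := ConradAux.exists_refl hnc hC hfin
  have hcone := ConradAux.hat_cone hC.1 hQ
  refine ⟨ConradAux.hat C Q, hcone, ?_, ?_⟩
  · intro g hg
    constructor
    · rintro (h | ⟨h, -⟩)
      · exact h.1
      · exact absurd h hg
    · exact fun h => Or.inl ⟨h, hg⟩
  · intro F hF
    obtain ⟨h, g, hg, hg', hh⟩ := hr F hF
    refine ⟨h, ⟨g, fun hi => ?_⟩, hh⟩
    apply hcone.2.2.2 _ (hi.2 hg)
    convert hg' using 1
    group
end

section
/- Let Γ be a nontrivial group and let ⪯ be a left-invariant linear order on Γ with positive cone P. Suppose ⪯ is an isolated point of the space of left orderings of Γ, i.e. there exists a finite set F of ⪯-positive elements such that every left-order positive cone on Γ containing F equals P. Then the Conradian soul of (Γ, ⪯) is nontrivial and admits only finitely many orderings: there exists a nontrivial subgroup C of Γ that is ⪯-convex, whose restricted ordering is Conradian, which contains every ⪯-convex subgroup whose restricted ordering is Conradian, and such that the set of left-order positive cones on C is finite. -/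
section LinOrd
variable {G : Type*} [Group G] [LinearOrder G] [MulLeftMono G]

theorem lo_cross (hC : ∀ f g : G, 1 < f → 1 < g → ∃ n : ℕ, 0 < n ∧ g < f * g ^ n)
    {a b c : G} (ha : 1 < a) (hb : 1 < b) (hc : 1 ≤ c) (hbc : b * c ≤ c) (hac : a * c ≤ b) :
    False := by
  obtain ⟨n, -, hn⟩ := hC a b ha hb
  have h1 : ∀ n : ℕ, b ^ n * c ≤ c := by
    intro n
    induction n with
    | zero => simp
    | succ k ih =>
      rw [pow_succ, mul_assoc]
      exact (mul_le_mul_right hbc _).trans ih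
  have h2 : b ^ n ≤ c := by
    calc b ^ n = b ^ n * 1 := (mul_one _).symm
      _ ≤ b ^ n * c := mul_le_mul_right hc _
      _ ≤ c := h1 n
  exact absurd hn (not_lt.mpr ((mul_le_mul_right h2 a).trans hac))

theorem lo_lem1 (hC : ∀ f g : G, 1 < f → 1 < g → ∃ n : ℕ, 0 < n ∧ g < f * g ^ n)
    {x f : G} (hx : 1 < x) (hxf : x < f) : x * f < f ^ 3 := by
  by_contra hcon
  rw [not_lt] at hcon
  have hf : 1 < f := hx.trans hxf
  have hff : f < f ^ 2 := by
    rw [pow_two]; exact lt_mul_of_one_lt_right' f hf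
  refine lo_cross hC (a := x⁻¹ * f) (b := x⁻¹ * f ^ 2) (c := f) ?_ ?_ hf.le ?_ ?_
  · exact lt_inv_mul_iff_lt.mpr hxf
  · exact lt_inv_mul_iff_lt.mpr (hxf.trans hff)
  · rw [mul_assoc, ← pow_succ]; exact inv_mul_le_iff_le_mul.mpr hcon
  · rw [mul_assoc, pow_two]

theorem lo_lem2 (hC : ∀ f g : G, 1 < f → 1 < g → ∃ n : ℕ, 0 < n ∧ g < f * g ^ n)
    {f g : G} (hf : 1 < f) (hg : 1 < g) : g < f * g ^ 2 := by
  by_contra hcon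
  rw [not_lt] at hcon
  refine lo_cross hC (a := f) (b := f * g) (c := g) hf ?_ hg.le ?_ le_rfl
  · exact hf.trans (lt_mul_of_one_lt_right' f hg)
  · rw [mul_assoc, ← pow_two]; exact hcon

theorem lo_lem3 (hC : ∀ f g : G, 1 < f → 1 < g → ∃ n : ℕ, 0 < n ∧ g < f * g ^ n)
    {d h : G} (hd : 1 < d) (hdh : d ^ 2 < h) : d * h < h ^ 2 := by
  by_contra hcon
  rw [not_lt] at hcon
  have hdd : d < d ^ 2 := by
    rw [pow_two]; exact lt_mul_of_one_lt_right' d hd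
  have hh : 1 < h := hd.trans (hdd.trans hdh)
  refine lo_cross hC (a := d⁻¹ * (d⁻¹ * h)) (b := d⁻¹ * h) (c := h) ?_ ?_ hh.le ?_ ?_
  · rw [lt_inv_mul_iff_lt, lt_inv_mul_iff_mul_lt, ← pow_two]; exact hdh
  · exact lt_inv_mul_iff_lt.mpr (hdd.trans hdh)
  · rw [mul_assoc, ← pow_two]; exact inv_mul_le_iff_le_mul.mpr hcon
  · rw [mul_assoc, mul_assoc]
    refine mul_le_mul_right ?_ _
    rw [← pow_two]; exact inv_mul_le_iff_le_mul.mpr hcon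

/-- the convex hull of a positive element -/
theorem lo_hull (hC : ∀ f g : G, 1 < f → 1 < g → ∃ n : ℕ, 0 < n ∧ g < f * g ^ n)
    {f : G} (hf : 1 < f) :
    ∃ H : Subgroup G, ∀ x, x ∈ H ↔ ∃ n : ℕ, x < f ^ n ∧ x⁻¹ < f ^ n := by
  have key : ∀ g x y : G, 1 < g → x < g → y < g → x * y < g ^ 3 := by
    intro g x y hg hx hy
    have h23 : g ^ 2 < g ^ 3 := pow_lt_pow_right' hg (by norm_num)
    have h13 : g < g ^ 3 := by simpa using pow_lt_pow_right' hg (show 1 < 3 by norm_num)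
    refine (mul_lt_mul_right hy x).trans ?_
    rcases lt_trichotomy x 1 with h | h | h
    · have := lo_lem2 hC (Left.one_lt_inv_iff.mpr h) hg
      exact (lt_inv_mul_iff_mul_lt.mp this).trans h23
    · rw [h, one_mul]; exact h13
    · exact lo_lem1 hC h hx
  refine ⟨{ carrier := {x | ∃ n : ℕ, x < f ^ n ∧ x⁻¹ < f ^ n}, one_mem' := ?_, mul_mem' := ?_,
            inv_mem' := ?_ }, fun x => Iff.rfl⟩
  · rintro x y ⟨n, h1, h2⟩ ⟨m, h3, h4⟩
    have hn : f ^ n ≤ f ^ (n + m + 1) := pow_le_pow_right' hf.le (by omega)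
    have hm : f ^ m ≤ f ^ (n + m + 1) := pow_le_pow_right' hf.le (by omega)
    have hg : 1 < f ^ (n + m + 1) := one_lt_pow' hf (by omega)
    refine ⟨(n + m + 1) * 3, ?_, ?_⟩
    · rw [pow_mul]; exact key _ _ _ hg (h1.trans_le hn) (h3.trans_le hm)
    · rw [pow_mul, mul_inv_rev]; exact key _ _ _ hg (h4.trans_le hm) (h2.trans_le hn)
  · exact ⟨1, by simpa using hf, by simpa using hf⟩
  · rintro x ⟨n, h1, h2⟩
    exact ⟨n, h2, by simpa using h1⟩

theorem lo_arch (hC : ∀ f g : G, 1 < f → 1 < g → ∃ n : ℕ, 0 < n ∧ g < f * g ^ n)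
    {D : Subgroup G}
    (hmax : ∀ K : Subgroup G, (∀ x, 1 < x → ∀ c ∈ K, x < c → x ∈ K) → K ≠ ⊤ → K ≤ D)
    {f : G} (hf : 1 < f) (hfD : f ∉ D) (x : G) : ∃ n : ℕ, x < f ^ n := by
  obtain ⟨H, hH⟩ := lo_hull hC hf
  have hfH : f ∈ H := by
    rw [hH]
    refine ⟨2, ?_, ?_⟩
    · rw [pow_two]; exact lt_mul_of_one_lt_right' f hf
    · exact (Left.inv_lt_one_iff.mpr hf).trans (one_lt_pow' hf (by norm_num))
  have htop : H = ⊤ := by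
    by_contra hne
    refine hfD (hmax H ?_ hne hfH)
    intro x hx c hc hxc
    rw [hH] at hc ⊢
    obtain ⟨n, h1, h2⟩ := hc
    have h3 := hxc.trans h1
    exact ⟨n, h3, (Left.inv_lt_one_iff.mpr hx).trans (hx.trans h3)⟩
  have : x ∈ H := by rw [htop]; trivial
  rw [hH] at this
  obtain ⟨n, h, -⟩ := this
  exact ⟨n, h⟩

theorem lo_normal (hC : ∀ f g : G, 1 < f → 1 < g → ∃ n : ℕ, 0 < n ∧ g < f * g ^ n)
    {D : Subgroup G} (hD : ∀ x, 1 < x → ∀ c ∈ D, x < c → x ∈ D)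
    (hmax : ∀ K : Subgroup G, (∀ x, 1 < x → ∀ c ∈ K, x < c → x ∈ K) → K ≠ ⊤ → K ≤ D) :
    D.Normal := by
  have hlt : ∀ d ∈ D, ∀ h, 1 < h → h ∉ D → d < h := by
    intro d hd h hh hhD
    rcases lt_trichotomy d h with h1 | h1 | h1
    · exact h1
    · exact absurd (h1 ▸ hd) hhD
    · exact absurd (hD h hh d hd h1) hhD
  have s1 : ∀ h, 1 < h → h ∉ D → ∀ d ∈ D, 1 < h⁻¹ * d * h → h⁻¹ * d * h ∈ D := by
    intro h hh hhD d hd he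
    by_contra hcon
    obtain ⟨n, hn⟩ := lo_arch hC hmax he hcon h
    have e1 : (h⁻¹ * d * h) ^ n = h⁻¹ * (d ^ n * h) := by
      have := conj_pow (i := n) (a := h⁻¹) (b := d)
      rw [inv_inv] at this
      rw [this, mul_assoc]
    rw [e1, lt_inv_mul_iff_mul_lt, ← pow_two] at hn
    have hdn : d ^ n ∈ D := D.pow_mem hd n
    generalize d ^ n = δ at hn hdn
    have hh2 : h < h ^ 2 := by
      rw [pow_two]; exact lt_mul_of_one_lt_right' h hh
    rcases lt_trichotomy δ 1 with h1 | h1 | h1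
    · have := lo_lem2 hC (Left.one_lt_inv_iff.mpr h1) hh
      exact lt_asymm hn (lt_inv_mul_iff_mul_lt.mp this)
    · rw [h1, one_mul] at hn
      exact lt_asymm hn hh2
    · exact lt_asymm hn (lo_lem3 hC h1 (hlt _ (D.pow_mem hdn 2) h hh hhD))
  have s2 : ∀ h, 1 < h → h ∉ D → ∀ d ∈ D, 1 < h * d * h⁻¹ → h * d * h⁻¹ ∈ D := by
    intro h hh hhD d hd he
    by_contra hcon
    obtain ⟨n, hn⟩ := lo_arch hC hmax he hcon (h ^ 2)
    rw [conj_pow, pow_two, mul_assoc h] at hn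
    have h1 := lt_of_mul_lt_mul_left' hn
    have h2 : d ^ n * h⁻¹ < d ^ n * h⁻¹ * h := lt_mul_of_one_lt_right' _ hh
    rw [inv_mul_cancel_right] at h2
    exact lt_asymm (h1.trans h2) (hlt _ (D.pow_mem hd n) h hh hhD)
  have s3 : ∀ g d, d ∈ D → 1 < g * d * g⁻¹ → g * d * g⁻¹ ∈ D := by
    intro g d hd he
    by_cases hg : g ∈ D
    · exact D.mul_mem (D.mul_mem hg hd) (D.inv_mem hg)
    rcases lt_trichotomy g 1 with h | h | h
    · have := s1 g⁻¹ (Left.one_lt_inv_iff.mpr h) (by simpa using hg) d hd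
      rw [inv_inv] at this
      exact this he
    · exact absurd (h ▸ D.one_mem) hg
    · exact s2 g h hg d hd he
  refine ⟨fun d hd g => ?_⟩
  rcases lt_trichotomy (g * d * g⁻¹) 1 with h | h | h
  · have := s3 g d⁻¹ (D.inv_mem hd) (by rw [← conj_inv]; exact Left.one_lt_inv_iff.mpr h)
    rw [← conj_inv] at this
    simpa using D.inv_mem this
  · rw [h]; exact D.one_mem
  · exact s3 g d hd h

/-- Hölder -/
theorem lo_holder (hA : ∀ f : G, 1 < f → ∀ x, ∃ n : ℕ, x < f ^ n) (a b : G) : a * b = b * a := by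
  have hconj : ∀ g f : G, 1 < f → 1 < g * f * g⁻¹ := by
    intro g f hf
    by_contra hcon
    have hlt : g * f * g⁻¹ < 1 := by
      refine lt_of_le_of_ne (not_lt.mp hcon) ?_
      intro h
      rw [conj_eq_one_iff] at h
      exact hf.ne' h
    rcases lt_trichotomy g 1 with h | h | h
    · obtain ⟨n, hn⟩ := hA f hf g⁻¹
      have h1 : (g * f * g⁻¹) ^ n ≤ 1 := pow_le_one' hlt.le n
      rw [conj_pow, mul_assoc] at h1
      have h2 : f ^ n * g⁻¹ ≤ g⁻¹ := by
        have := mul_le_mul_right h1 g⁻¹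
        simpa using this
      have h3 : f ^ n < f ^ n * g⁻¹ := lt_mul_of_one_lt_right' _ (Left.one_lt_inv_iff.mpr h)
      exact lt_asymm hn (h3.trans_le h2)
    · simp [h] at hlt; exact lt_asymm hf hlt
    · obtain ⟨n, hn⟩ := hA _ (Left.one_lt_inv_iff.mpr hlt) g
      rw [conj_inv, conj_pow, mul_assoc] at hn
      have h1 : 1 < f⁻¹ ^ n * g⁻¹ := lt_of_mul_lt_mul_left' (a := g) (by simpa using hn)
      have h2 : (f⁻¹ ^ n * g⁻¹)⁻¹ < 1 := Left.inv_lt_one_iff.mpr h1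
      have h3 : (f⁻¹ ^ n * g⁻¹)⁻¹ = g * f ^ n := by simp
      rw [h3] at h2
      exact lt_asymm h2 (h.trans_le (le_mul_of_one_le_right' (one_le_pow_of_one_le' hf.le n)))
  have hright : ∀ x y z : G, x < y → x * z < y * z := by
    intro x y z h
    have := hconj z⁻¹ _ (lt_inv_mul_iff_lt.mpr h)
    rw [inv_inv] at this
    rw [← lt_inv_mul_iff_lt]
    convert this using 1
    group
  have : MulRightMono G := ⟨fun z x y h => by
    rcases h.eq_or_lt with h | h
    · simp [h]
    · exact (hright x y z h).le⟩
  have hfl : ∀ x : G, 1 < x → ∀ a : G, ∃ m : ℤ, x ^ m ≤ a ∧ a < x ^ (m + 1) := by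
    intro x hx a
    obtain ⟨n, hn⟩ := hA x hx a
    obtain ⟨k, hk⟩ := hA x hx a⁻¹
    have hk' : x ^ (-(k : ℤ)) ≤ a := by
      rw [zpow_neg, zpow_natCast, inv_le']
      exact hk.le
    have hmono : StrictMono (fun m : ℤ => x ^ m) := by
      refine strictMono_int_of_lt_succ fun m => ?_
      rw [zpow_add_one]
      exact lt_mul_of_one_lt_right' _ hx
    obtain ⟨m, hm1, hm2⟩ := Int.exists_greatest_of_bdd (P := fun m => x ^ m ≤ a)
      ⟨n, fun z hz => by
        have : x ^ z < x ^ (n : ℤ) := lt_of_le_of_lt hz (by simpa using hn)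
        exact (hmono.lt_iff_lt.mp this).le⟩ ⟨_, hk'⟩
    refine ⟨m, hm1, ?_⟩
    by_contra h
    have := hm2 _ (not_lt.mp h)
    omega
  have main : ∀ a b : G, b * a < a * b → False := by
    intro a b hab
    have hc : 1 < (b * a)⁻¹ * (a * b) := lt_inv_mul_iff_lt.mpr hab
    set c := (b * a)⁻¹ * (a * b) with hcdef
    by_cases hex : ∃ y, 1 < y ∧ y < c
    · have : ∃ x, 1 < x ∧ x * x ≤ c := by
        obtain ⟨y, h1, h2⟩ := hex
        by_cases hy : y * y ≤ c
        · exact ⟨y, h1, hy⟩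
        · refine ⟨y⁻¹ * c, lt_inv_mul_iff_lt.mpr h2, ?_⟩
          have h3 : y⁻¹ * c < y := inv_mul_lt_iff_lt_mul.mpr (not_le.mp hy)
          have h4 := hright _ _ (y⁻¹ * c) h3
          rw [mul_inv_cancel_left] at h4
          exact h4.le
      obtain ⟨x, hx1, hx2⟩ := this
      obtain ⟨m, hm1, hm2⟩ := hfl x hx1 a
      obtain ⟨n, hn1, hn2⟩ := hfl x hx1 b
      have e1 : a * b < x ^ (m + 1) * x ^ (n + 1) :=
        (hright _ _ _ hm2).trans (mul_lt_mul_right hn2 _)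
      have e2 : x ^ n * x ^ m ≤ b * a := mul_le_mul' hn1 hm1
      have e3 : x ^ (m + 1) * x ^ (n + 1) = (x ^ n * x ^ m) * (x * x) := by
        have : x * x = x ^ (2 : ℤ) := by rw [zpow_two]
        rw [this, ← zpow_add, ← zpow_add, ← zpow_add]
        congr 1; ring
      have e4 : a * b < b * a * c := by
        rw [e3] at e1
        exact e1.trans_le (mul_le_mul' e2 hx2)
      rw [hcdef, mul_inv_cancel_left] at e4
      exact lt_irrefl _ e4
    · have hmin : ∀ y, 1 < y → c ≤ y := fun y hy => by
        by_contra h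
        exact hex ⟨y, hy, not_le.mp h⟩
      have hpow : ∀ a, ∃ m : ℤ, a = c ^ m := by
        intro a
        obtain ⟨m, h1, h2⟩ := hfl c hc a
        refine ⟨m, ?_⟩
        by_contra hne
        have h3 : c ^ m < a := lt_of_le_of_ne h1 (Ne.symm hne)
        have h4 := hmin _ (lt_inv_mul_iff_lt.mpr h3)
        rw [zpow_add_one] at h2
        have h5 : (c ^ m)⁻¹ * a < c := inv_mul_lt_iff_lt_mul.mpr h2
        exact lt_irrefl _ (h4.trans_lt h5)
      obtain ⟨m, hm⟩ := hpow a
      obtain ⟨n, hn⟩ := hpow b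
      have : a * b = b * a := by
        rw [hm, hn, ← zpow_add, ← zpow_add, add_comm]
      exact hab.ne this.symm
  rcases lt_trichotomy (a * b) (b * a) with h | h | h
  · exact (main _ _ h).elim
  · exact h
  · exact (main _ _ h).elim

end LinOrd


section Cones
variable {G : Type*} [Group G]

def Cvx (P : Set G) (K : Subgroup G) : Prop := ∀ x ∈ P, ∀ c ∈ K, x⁻¹ * c ∈ P → x ∈ K

def Conr (P : Set G) : Prop := ∀ f ∈ P, ∀ g ∈ P, ∃ n : ℕ, 0 < n ∧ g⁻¹ * (f * g ^ n) ∈ P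

def Iso (P : Set G) (F : Finset G) : Prop :=
  (∀ f ∈ F, f ∈ P) ∧ ∀ Q : Set G, IsPosCone Q → (∀ f ∈ F, f ∈ Q) → Q = P

theorem pc_pow {P : Set G} (hP : IsPosCone P) {x : G} (hx : x ∈ P) {n : ℕ} (hn : 0 < n) :
    x ^ n ∈ P := by
  induction n with
  | zero => omega
  | succ k ih =>
    rcases Nat.eq_zero_or_pos k with h | h
    · simpa [h] using hx
    · rw [pow_succ]; exact hP.1 _ (ih h) _ hx

theorem pc_ne {P : Set G} (hP : IsPosCone P) {x : G} (hx : x ∈ P) : x ≠ 1 := by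
  rintro rfl; exact hP.2.2.1 hx

theorem pc_of_not {P : Set G} (hP : IsPosCone P) {x : G} (hx : x ∉ P) (h1 : x ≠ 1) :
    x⁻¹ ∈ P := by
  rcases hP.2.1 x with h | h | h
  · exact absurd h hx
  · exact h
  · exact absurd h h1

theorem pc_pow_iff {P : Set G} (hP : IsPosCone P) {x : G} {n : ℕ} (hn : 0 < n) :
    x ^ n ∈ P ↔ x ∈ P := by
  refine ⟨fun h => ?_, fun h => pc_pow hP h hn⟩
  by_contra hx
  by_cases h1 : x = 1
  · rw [h1, one_pow] at h; exact hP.2.2.1 h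
  · have := pc_pow hP (pc_of_not hP hx h1) hn
    rw [inv_pow] at this
    exact hP.2.2.2 _ h this

theorem pc_tf {P : Set G} (hP : IsPosCone P) {x : G} {n : ℕ} (hn : 0 < n) (h : x ^ n = 1) :
    x = 1 := by
  by_contra h1
  by_cases hx : x ∈ P
  · exact pc_ne hP (pc_pow hP hx hn) h
  · have := pc_pow hP (pc_of_not hP hx h1) hn
    rw [inv_pow, h, inv_one] at this
    exact hP.2.2.1 this

theorem pc_inv {P : Set G} (hP : IsPosCone P) : IsPosCone {x | x⁻¹ ∈ P} := by
  refine ⟨fun a ha b hb => ?_, fun g => ?_, ?_, fun g hg => ?_⟩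
  · simp only [Set.mem_ofPred_eq, mul_inv_rev] at *; exact hP.1 _ hb _ ha
  · simp only [Set.mem_ofPred_eq, inv_inv]
    rcases hP.2.1 g with h | h | h <;> tauto
  · simpa using hP.2.2.1
  · simp only [Set.mem_ofPred_eq] at *; exact hP.2.2.2 _ hg

theorem pc_order {P : Set G} (hP : IsPosCone P) :
    ∃ o : LinearOrder G, (letI := o; MulLeftMono G ∧ ∀ a b : G, a < b ↔ a⁻¹ * b ∈ P) := by
  classical
  have : IsStrictTotalOrder G (fun a b => a⁻¹ * b ∈ P) :=
    { irrefl := fun a => by simpa using hP.2.2.1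
      trans := fun a b c h1 h2 => by
        have := hP.1 _ h1 _ h2
        simpa [mul_assoc] using this
      trichotomous := fun a b h1 h2 => by
        rcases hP.2.1 (a⁻¹ * b) with h | h | h
        · exact absurd h h1
        · simp at h; exact absurd h h2
        · exact inv_mul_eq_one.mp h }
  refine ⟨linearOrderOfSTO (fun a b => a⁻¹ * b ∈ P), ?_⟩
  let _ := linearOrderOfSTO (fun a b : G => a⁻¹ * b ∈ P)
  have hlt : ∀ a b : G, a < b ↔ a⁻¹ * b ∈ P := fun a b => Iff.rfl
  refine ⟨⟨fun c a b h => ?_⟩, hlt⟩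
  rcases h.eq_or_lt with h | h
  · simp [h]
  · refine le_of_lt ?_
    rw [hlt] at h ⊢
    simpa [mul_assoc] using h

theorem cvx_absorb_right {P : Set G} (hP : IsPosCone P) {K : Subgroup G} (hK : Cvx P K) {x k : G}
    (hx : x ∈ P) (hxK : x ∉ K) (hk : k ∈ K) : x * k ∈ P := by
  rcases hP.2.1 (x * k) with h | h | h
  · exact h
  · exfalso
    have := hK _ h k⁻¹ (K.inv_mem hk) (by simpa using hx)
    rw [K.inv_mem_iff, K.mul_mem_cancel_right hk] at this
    exact hxK this
  · exfalso
    apply hxK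
    rw [← K.mul_mem_cancel_right hk, h]; exact K.one_mem

theorem cvx_absorb_left {P : Set G} (hP : IsPosCone P) {K : Subgroup G} (hK : Cvx P K) {x k : G}
    (hx : x ∈ P) (hxK : x ∉ K) (hk : k ∈ K) : k * x ∈ P := by
  rcases hP.2.1 (k * x) with h | h | h
  · exact h
  · exact absurd (hK x hx k⁻¹ (K.inv_mem hk) (by simpa using h)) hxK
  · exfalso
    apply hxK
    rw [← K.mul_mem_cancel_left hk, h]; exact K.one_mem

theorem cvx_absorb_iff {P : Set G} (hP : IsPosCone P) {K : Subgroup G} (hK : Cvx P K) {x k : G}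
    (hxK : x ∉ K) (hk : k ∈ K) : x * k ∈ P ↔ x ∈ P := by
  refine ⟨fun h => ?_, fun h => cvx_absorb_right hP hK h hxK hk⟩
  have := cvx_absorb_right hP hK h (by rwa [K.mul_mem_cancel_right hk]) (K.inv_mem hk)
  simpa using this

theorem cvx_root {P : Set G} (hP : IsPosCone P) {K : Subgroup G} (hK : Cvx P K) {x : G} {n : ℕ}
    (hn : 0 < n) (h : x ^ n ∈ K) : x ∈ K := by
  have key : ∀ x ∈ P, x ^ n ∈ K → x ∈ K := by
    intro x hx h
    by_contra hxK
    obtain ⟨m, rfl⟩ : ∃ m, n = m + 1 := ⟨n - 1, by omega⟩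
    rcases Nat.eq_zero_or_pos m with h0 | h0
    · subst h0; simp at h; exact hxK h
    · refine hxK (hK x hx _ h ?_)
      rw [pow_succ', inv_mul_cancel_left]; exact pc_pow hP hx h0
  rcases hP.2.1 x with h1 | h1 | h1
  · exact key x h1 h
  · have := key _ h1 (by rw [inv_pow]; exact K.inv_mem h)
    simpa using this
  · rw [h1]; exact K.one_mem

theorem cvx_bot {P : Set G} (hP : IsPosCone P) : Cvx P (⊥ : Subgroup G) := by
  intro x hx c hc h
  rw [Subgroup.mem_bot] at hc
  rw [hc, mul_one] at h
  exact absurd h (hP.2.2.2 _ hx)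

theorem cvx_top (P : Set G) : Cvx P (⊤ : Subgroup G) := fun _ _ _ _ _ => trivial

theorem cvx_inv {P : Set G} {K : Subgroup G} (hK : Cvx P K) : Cvx {x | x⁻¹ ∈ P} K := by
  intro x hx c hc h
  simp only [Set.mem_ofPred_eq, mul_inv_rev, inv_inv] at h hx
  have := hK _ h c⁻¹ (K.inv_mem hc) (by simpa using hx)
  rwa [K.mul_mem_cancel_left (K.inv_mem hc)] at this

theorem cvx_nested {P : Set G} (hP : IsPosCone P) {K L : Subgroup G} (hK : Cvx P K)
    (hL : Cvx P L) : K ≤ L ∨ L ≤ K := by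
  by_contra hcon
  rw [not_or, SetLike.not_le_iff_exists, SetLike.not_le_iff_exists] at hcon
  obtain ⟨⟨x, hxK, hxL⟩, ⟨y, hyL, hyK⟩⟩ := hcon
  have key : ∀ (K : Subgroup G) (x : G), x ∈ K → x ≠ 1 → ∃ z ∈ P, z ∈ K ∧ (z = x ∨ z = x⁻¹) := by
    intro K x hx h1
    by_cases h : x ∈ P
    · exact ⟨x, h, hx, Or.inl rfl⟩
    · exact ⟨x⁻¹, pc_of_not hP h h1, K.inv_mem hx, Or.inr rfl⟩
  obtain ⟨a, haP, haK, ha⟩ := key K x hxK (by rintro rfl; exact hxL L.one_mem)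
  obtain ⟨b, hbP, hbL, hb⟩ := key L y hyL (by rintro rfl; exact hyK K.one_mem)
  have haL : a ∉ L := by rcases ha with rfl | rfl <;> simpa using hxL
  have hbK : b ∉ K := by rcases hb with rfl | rfl <;> simpa using hyK
  rcases hP.2.1 (a⁻¹ * b) with h | h | h
  · exact haL (hL a haP b hbL h)
  · exact hbK (hK b hbP a haK (by simpa using h))
  · rw [inv_mul_eq_one] at h; exact haL (h ▸ hbL)

theorem cvx_sSup {P : Set G} (hP : IsPosCone P) {S : Set (Subgroup G)} (hne : S.Nonempty)
    (hS : ∀ K ∈ S, Cvx P K) : Cvx P (sSup S) ∧ ∀ x, x ∈ sSup S ↔ ∃ K ∈ S, x ∈ K := by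
  have hdir : DirectedOn (· ≤ ·) S := by
    intro K hK L hL
    rcases cvx_nested hP (hS K hK) (hS L hL) with h | h
    · exact ⟨L, hL, h, le_rfl⟩
    · exact ⟨K, hK, le_rfl, h⟩
  have hmem : ∀ x, x ∈ sSup S ↔ ∃ K ∈ S, x ∈ K := fun x =>
    Subgroup.mem_sSup_of_directedOn hne hdir
  refine ⟨fun x hx c hc h => ?_, hmem⟩
  rw [hmem] at hc ⊢
  obtain ⟨K, hK, hcK⟩ := hc
  exact ⟨K, hK, hS K hK x hx c hcK h⟩

theorem cvx_sInf {P : Set G} {S : Set (Subgroup G)}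
    (hS : ∀ K ∈ S, Cvx P K) : Cvx P (sInf S) := by
  intro x hx c hc h
  rw [Subgroup.mem_sInf] at hc ⊢
  exact fun K hK => hS K hK x hx c (hc K hK) h

def glue (P : Set G) (L : Subgroup G) (Q : Set L) : Set G :=
  {x | (∃ h : x ∈ L, (⟨x, h⟩ : L) ∈ Q) ∨ (x ∈ P ∧ x ∉ L)}

theorem pc_glue {P : Set G} (hP : IsPosCone P) {L : Subgroup G} (hL : Cvx P L) {Q : Set L}
    (hQ : IsPosCone Q) : IsPosCone (glue P L Q) := by
  refine ⟨?_, ?_, ?_, ?_⟩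
  · rintro a (⟨ha, haQ⟩ | ⟨haP, haL⟩) b (⟨hb, hbQ⟩ | ⟨hbP, hbL⟩)
    · exact Or.inl ⟨L.mul_mem ha hb, hQ.1 _ haQ _ hbQ⟩
    · exact Or.inr ⟨cvx_absorb_left hP hL hbP hbL ha, by rwa [L.mul_mem_cancel_left ha]⟩
    · exact Or.inr ⟨cvx_absorb_right hP hL haP haL hb, by rwa [L.mul_mem_cancel_right hb]⟩
    · refine Or.inr ⟨hP.1 _ haP _ hbP, fun h => haL (hL a haP _ h (by simpa using hbP))⟩
  · intro g
    by_cases hg : g ∈ L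
    · rcases hQ.2.1 ⟨g, hg⟩ with h | h | h
      · exact Or.inl (Or.inl ⟨hg, h⟩)
      · exact Or.inr (Or.inl (Or.inl ⟨L.inv_mem hg, h⟩))
      · exact Or.inr (Or.inr (congrArg Subtype.val h))
    · rcases hP.2.1 g with h | h | h
      · exact Or.inl (Or.inr ⟨h, hg⟩)
      · exact Or.inr (Or.inl (Or.inr ⟨h, by simpa using hg⟩))
      · exact Or.inr (Or.inr h)
  · rintro (⟨h, h1⟩ | ⟨h, -⟩)
    · exact hQ.2.2.1 h1
    · exact hP.2.2.1 h
  · rintro g (⟨h, h1⟩ | ⟨h, hL'⟩) (⟨h', h1'⟩ | ⟨h', h1'⟩)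
    · exact hQ.2.2.2 _ h1 h1'
    · exact h1' (L.inv_mem h)
    · exact hL' (by simpa using h')
    · exact hP.2.2.2 _ h h'

theorem pc_restrict {P : Set G} (hP : IsPosCone P) (L : Subgroup G) :
    IsPosCone ((↑) ⁻¹' P : Set L) := by
  refine ⟨fun a ha b hb => hP.1 _ ha _ hb, fun g => ?_, hP.2.2.1, fun g hg => hP.2.2.2 _ hg⟩
  rcases hP.2.1 (g : G) with h | h | h
  · exact Or.inl h
  · exact Or.inr (Or.inl h)
  · exact Or.inr (Or.inr (Subtype.ext h))

theorem iso_sub {P : Set G} (hP : IsPosCone P) {F : Finset G} (hF : Iso P F) {L : Subgroup G}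
    (hL : Cvx P L) : ∃ F' : Finset L, (∀ f, f ∈ F' ↔ (f : G) ∈ F) ∧ Iso ((↑) ⁻¹' P : Set L) F' := by
  classical
  refine ⟨F.subtype (· ∈ L), fun f => Finset.mem_subtype, fun f hf => ?_, fun Q hQ hFQ => ?_⟩
  · exact hF.1 _ (Finset.mem_subtype.mp hf)
  · have h := hF.2 _ (pc_glue hP hL hQ) (fun f hf => by
      by_cases hfL : f ∈ L
      · exact Or.inl ⟨hfL, hFQ _ (Finset.mem_subtype.mpr hf)⟩
      · exact Or.inr ⟨hF.1 f hf, hfL⟩)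
    ext ⟨x, hx⟩
    have h2 : x ∈ glue P L Q ↔ x ∈ P := by rw [h]
    constructor
    · intro hq; exact h2.mp (Or.inl ⟨hx, hq⟩)
    · intro hp
      rcases h2.mpr hp with ⟨_, h3⟩ | ⟨_, h3⟩
      · exact h3
      · exact absurd hx h3

theorem iso_jump {P : Set G} (hP : IsPosCone P) {F : Finset G} (hF : Iso P F) {K L : Subgroup G}
    (hK : Cvx P K) (hL : Cvx P L) {x : G} (hxL : x ∈ L) (hxK : x ∉ K) :
    ∃ f ∈ F, f ∈ L ∧ f ∉ K := by
  by_contra hcon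
  push Not at hcon
  have hR := pc_glue (pc_inv hP) (cvx_inv hK) (pc_restrict hP K)
  have hQ := pc_glue hP hL (pc_restrict hR L)
  have h := hF.2 _ hQ (fun f hf => by
    by_cases hfL : f ∈ L
    · exact Or.inl ⟨hfL, Or.inl ⟨hcon f hf hfL, hF.1 f hf⟩⟩
    · exact Or.inr ⟨hF.1 f hf, hfL⟩)
  have key : ∀ x, x ∈ P → x ∈ L → x ∉ K → False := by
    intro x hxP hxL hxK
    rw [← h] at hxP
    have hxP' := hxP
    rw [h] at hxP'
    rcases hxP with ⟨_, h1⟩ | ⟨_, h1⟩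
    · rcases h1 with ⟨h2, _⟩ | ⟨h2, _⟩
      · exact hxK h2
      · exact hP.2.2.2 _ hxP' h2
    · exact h1 hxL
  rcases hP.2.1 x with h1 | h1 | h1
  · exact key x h1 hxL hxK
  · exact key _ h1 (L.inv_mem hxL) (by simpa using hxK)
  · exact hxK (h1 ▸ K.one_mem)

def qcone (P : Set G) (D : Subgroup G) : Set (G ⧸ D) := {q | ∃ x ∈ P, x ∉ D ∧ (x : G ⧸ D) = q}

theorem qcone_mem {P : Set G} (hP : IsPosCone P) {D : Subgroup G} (hD : Cvx P D) {x : G} :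
    (x : G ⧸ D) ∈ qcone P D ↔ x ∈ P ∧ x ∉ D := by
  constructor
  · rintro ⟨y, hy, hyD, h⟩
    rw [QuotientGroup.eq] at h
    have e : x = y * (y⁻¹ * x) := by group
    rw [e]
    exact ⟨cvx_absorb_right hP hD hy hyD h, by rwa [D.mul_mem_cancel_right h]⟩
  · rintro ⟨h1, h2⟩; exact ⟨x, h1, h2, rfl⟩

theorem pc_qcone {P : Set G} (hP : IsPosCone P) {D : Subgroup G} [D.Normal] (hD : Cvx P D) :
    IsPosCone (qcone P D) := by
  refine ⟨?_, ?_, ?_, ?_⟩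
  · rintro _ ⟨a, ha, haD, rfl⟩ _ ⟨b, hb, hbD, rfl⟩
    rw [← QuotientGroup.mk_mul, qcone_mem hP hD]
    exact ⟨hP.1 _ ha _ hb, fun h => haD (hD a ha _ h (by simpa using hb))⟩
  · intro g
    obtain ⟨x, rfl⟩ := QuotientGroup.mk_surjective g
    by_cases hx : x ∈ D
    · exact Or.inr (Or.inr ((QuotientGroup.eq_one_iff x).mpr hx))
    · rw [← QuotientGroup.mk_inv, qcone_mem hP hD, qcone_mem hP hD]
      rcases hP.2.1 x with h | h | h
      · exact Or.inl ⟨h, hx⟩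
      · exact Or.inr (Or.inl ⟨h, by simpa using hx⟩)
      · exact absurd (h ▸ D.one_mem) hx
  · rw [← QuotientGroup.mk_one, qcone_mem hP hD]
    exact fun h => hP.2.2.1 h.1
  · rintro _ ⟨a, ha, haD, rfl⟩
    rw [← QuotientGroup.mk_inv, qcone_mem hP hD]
    exact fun h => hP.2.2.2 _ ha h.1

theorem iso_quot {P : Set G} (hP : IsPosCone P) {F : Finset G} (hF : Iso P F) {D : Subgroup G}
    [D.Normal] (hD : Cvx P D) : ∃ F' : Finset (G ⧸ D), Iso (qcone P D) F' := by
  classical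
  refine ⟨(F.filter (· ∉ D)).image (fun x : G => (QuotientGroup.mk x : G ⧸ D)), ?_, ?_⟩
  · intro f hf
    rw [Finset.mem_image] at hf
    obtain ⟨x, hx, rfl⟩ := hf
    rw [Finset.mem_filter] at hx
    exact ⟨x, hF.1 x hx.1, hx.2, rfl⟩
  · intro Q hQ hFQ
    have hR : IsPosCone {x : G | (x : G ⧸ D) ∈ Q ∨ (x ∈ D ∧ x ∈ P)} := by
      have h1 : ∀ x : G, x ∈ D → (x : G ⧸ D) = 1 := fun x hx => (QuotientGroup.eq_one_iff x).mpr hx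
      refine ⟨?_, ?_, ?_, ?_⟩
      · rintro a (ha | ⟨ha, haP⟩) b (hb | ⟨hb, hbP⟩)
        · exact Or.inl (hQ.1 _ ha _ hb)
        · left; rw [QuotientGroup.mk_mul, h1 b hb, mul_one]; exact ha
        · left; rw [QuotientGroup.mk_mul, h1 a ha, one_mul]; exact hb
        · exact Or.inr ⟨D.mul_mem ha hb, hP.1 _ haP _ hbP⟩
      · intro g
        rcases hQ.2.1 (g : G ⧸ D) with h | h | h
        · exact Or.inl (Or.inl h)
        · exact Or.inr (Or.inl (Or.inl h))
        · rw [QuotientGroup.eq_one_iff] at h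
          rcases hP.2.1 g with h' | h' | h'
          · exact Or.inl (Or.inr ⟨h, h'⟩)
          · exact Or.inr (Or.inl (Or.inr ⟨D.inv_mem h, h'⟩))
          · exact Or.inr (Or.inr h')
      · rintro (h | ⟨-, h⟩)
        · exact hQ.2.2.1 h
        · exact hP.2.2.1 h
      · rintro g (h | ⟨hd, h⟩) (h' | ⟨hd', h'⟩)
        · exact hQ.2.2.2 _ h h'
        · rw [h1 g (by simpa using hd')] at h; exact hQ.2.2.1 h
        · rw [h1 _ (D.inv_mem hd)] at h'; exact hQ.2.2.1 h'
        · exact hP.2.2.2 _ h h'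
    have h := hF.2 _ hR (fun f hf => by
      by_cases hfD : f ∈ D
      · exact Or.inr ⟨hfD, hF.1 f hf⟩
      · exact Or.inl (hFQ _ (Finset.mem_image.mpr ⟨f, Finset.mem_filter.mpr ⟨hf, hfD⟩, rfl⟩)))
    ext q
    obtain ⟨x, rfl⟩ := QuotientGroup.mk_surjective q
    rw [qcone_mem hP hD]
    constructor
    · intro hx
      have hxP : x ∈ P := by rw [← h]; exact Or.inl hx
      refine ⟨hxP, fun hxD => ?_⟩
      rw [(QuotientGroup.eq_one_iff x).mpr hxD] at hx
      exact hQ.2.2.1 hx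
    · rintro ⟨hx, hxD⟩
      rw [← h] at hx
      rcases hx with hx | hx
      · exact hx
      · exact absurd hx.1 hxD

theorem conrad_jump {P : Set G} (hP : IsPosCone P) (hC : Conr P) {D : Subgroup G} (hD : Cvx P D)
    (hmax : ∀ K : Subgroup G, Cvx P K → K ≠ ⊤ → K ≤ D) :
    D.Normal ∧ ∀ a b, (b * a)⁻¹ * (a * b) ∈ D := by
  obtain ⟨o, ho, hlt⟩ := pc_order hP
  let _ := o
  have : MulLeftMono G := ho
  have h1 : ∀ x : G, 1 < x ↔ x ∈ P := fun x => by rw [hlt]; simp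
  have hC' : ∀ f g : G, 1 < f → 1 < g → ∃ n : ℕ, 0 < n ∧ g < f * g ^ n := by
    intro f g hf hg
    obtain ⟨n, hn, h⟩ := hC f ((h1 _).mp hf) g ((h1 _).mp hg)
    exact ⟨n, hn, (hlt _ _).mpr h⟩
  have hcvx : ∀ K : Subgroup G, (∀ x, 1 < x → ∀ c ∈ K, x < c → x ∈ K) ↔ Cvx P K := by
    intro K
    simp only [h1, hlt, Cvx]
  have hmax' : ∀ K : Subgroup G, (∀ x, 1 < x → ∀ c ∈ K, x < c → x ∈ K) → K ≠ ⊤ → K ≤ D :=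
    fun K hK => hmax K ((hcvx K).mp hK)
  have hN : D.Normal := lo_normal hC' ((hcvx D).mpr hD) hmax'
  refine ⟨hN, ?_⟩
  have harch : ∀ f ∈ P, f ∉ D → ∀ x, ∃ n : ℕ, x⁻¹ * f ^ n ∈ P := by
    intro f hf hfD x
    obtain ⟨n, hn⟩ := lo_arch hC' hmax' ((h1 f).mpr hf) hfD x
    exact ⟨n, (hlt _ _).mp hn⟩
  have hq := pc_qcone hP hD
  obtain ⟨o', ho', hlt'⟩ := pc_order hq
  let _ := o'
  have : MulLeftMono (G ⧸ D) := ho'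
  have h1' : ∀ x : G ⧸ D, 1 < x ↔ x ∈ qcone P D := fun x => by rw [hlt']; simp
  have := lo_holder (G := G ⧸ D) (by
    intro f hf x
    rw [h1'] at hf
    obtain ⟨f, hfP, hfD, rfl⟩ := hf
    obtain ⟨x, rfl⟩ := QuotientGroup.mk_surjective x
    obtain ⟨n, hn⟩ := harch f hfP hfD x
    by_cases hnD : x⁻¹ * f ^ n ∈ D
    · refine ⟨n + 1, ?_⟩
      rw [hlt', ← QuotientGroup.mk_inv, ← QuotientGroup.mk_pow, ← QuotientGroup.mk_mul,
        qcone_mem hP hD, pow_succ, ← mul_assoc]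
      exact ⟨hP.1 _ hn _ hfP, by rwa [D.mul_mem_cancel_left hnD]⟩
    · refine ⟨n, ?_⟩
      rw [hlt', ← QuotientGroup.mk_inv, ← QuotientGroup.mk_pow, ← QuotientGroup.mk_mul,
        qcone_mem hP hD]
      exact ⟨hn, hnD⟩)
  intro a b
  have h := this (b : G ⧸ D) (a : G ⧸ D)
  rw [← QuotientGroup.mk_mul, ← QuotientGroup.mk_mul, QuotientGroup.eq] at h
  exact h

end Cones


section Abel
variable {A : Type*} [CommGroup A]

theorem ab_extend (htf : ∀ (x : A) (n : ℕ), 0 < n → x ^ n = 1 → x = 1) (S : Submonoid A)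
    (hS : ∀ x ∈ S, x⁻¹ ∈ S → x = 1) : ∃ Q : Set A, IsPosCone Q ∧ ∀ s ∈ S, s ≠ 1 → s ∈ Q := by
  obtain ⟨M, hSM, hM⟩ := zorn_le_nonempty₀ {M : Submonoid A | ∀ x ∈ M, x⁻¹ ∈ M → x = 1} (by
    intro c hc hch y hy
    refine ⟨sSup c, ?_, fun z hz => le_sSup hz⟩
    have hmem : ∀ x, x ∈ sSup c ↔ ∃ s ∈ c, x ∈ s := fun x =>
      Submonoid.mem_sSup_of_directedOn ⟨y, hy⟩ hch.directedOn
    intro x hx hx'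
    rw [hmem] at hx hx'
    obtain ⟨s, hs, hxs⟩ := hx
    obtain ⟨t, ht, hxt⟩ := hx'
    rcases hch.total hs ht with h | h
    · exact hc ht x (h hxs) hxt
    · exact hc hs x hxs (h hxt)) S hS
  have hMp : ∀ x ∈ M, x⁻¹ ∈ M → x = 1 := hM.1
  have hstep : ∀ g : A, g ∉ M → ∃ k : ℕ, 0 < k ∧ (g⁻¹) ^ k ∈ M := by
    intro g hg
    by_contra hcon
    push Not at hcon
    let N : Submonoid A :=
      { carrier := {x | ∃ c ∈ M, ∃ k : ℕ, x = c * g ^ k}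
        one_mem' := ⟨1, M.one_mem, 0, by simp⟩
        mul_mem' := by
          rintro _ _ ⟨c, hc, k, rfl⟩ ⟨d, hd, l, rfl⟩
          exact ⟨c * d, M.mul_mem hc hd, k + l, by rw [pow_add, mul_mul_mul_comm]⟩ }
    have hMN : M ≤ N := fun x hx => ⟨x, hx, 0, by simp⟩
    have hN : N ∈ {M : Submonoid A | ∀ x ∈ M, x⁻¹ ∈ M → x = 1} := by
      rintro x ⟨c, hc, k, rfl⟩ ⟨d, hd, l, h⟩
      have h2 : c * d * g ^ (k + l) = 1 := by
        rw [pow_add, mul_mul_mul_comm, ← h, mul_inv_cancel]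
      rcases Nat.eq_zero_or_pos (k + l) with h0 | h0
      · rw [h0, pow_zero, mul_one] at h2
        have : k = 0 := by omega
        rw [this, pow_zero, mul_one]
        refine hMp c hc ?_
        rw [inv_eq_of_mul_eq_one_right h2]; exact hd
      · exfalso
        refine hcon _ h0 ?_
        rw [inv_pow, ← eq_inv_of_mul_eq_one_left h2]
        exact M.mul_mem hc hd
    exact hg (hM.2 hN hMN ⟨1, M.one_mem, 1, by simp⟩)
  refine ⟨{x | x ∈ M ∧ x ≠ 1}, ⟨?_, ?_, ?_, ?_⟩, fun s hs h1 => ⟨hSM hs, h1⟩⟩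
  · rintro a ⟨ha, ha1⟩ b ⟨hb, hb1⟩
    refine ⟨M.mul_mem ha hb, fun h => ha1 (hMp a ha ?_)⟩
    rw [inv_eq_of_mul_eq_one_right h]; exact hb
  · intro g
    by_cases h1 : g = 1
    · exact Or.inr (Or.inr h1)
    by_cases hg : g ∈ M
    · exact Or.inl ⟨hg, h1⟩
    by_cases hg' : g⁻¹ ∈ M
    · exact Or.inr (Or.inl ⟨hg', by simpa using h1⟩)
    exfalso
    obtain ⟨k, hk, h2⟩ := hstep g hg
    obtain ⟨l, hl, h3⟩ := hstep g⁻¹ hg'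
    rw [inv_inv] at h3
    have h4 : (g ^ l) ^ k ∈ M := M.pow_mem h3 k
    have h5 : ((g ^ l) ^ k)⁻¹ ∈ M := by
      have := M.pow_mem h2 l
      rw [← pow_mul, inv_pow, mul_comm k l] at this
      rwa [← pow_mul]
    have h6 := hMp _ h4 h5
    exact h1 (htf g l hl (htf _ k hk h6))
  · exact fun h => h.2 rfl
  · rintro g ⟨h, h1⟩ ⟨h', -⟩
    exact h1 (hMp g h h')

theorem ab_closure_pos {P : Set A} (hP : IsPosCone P) {F : Finset A} (hF : ∀ f ∈ F, f ∈ P)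
    {c : A} (hc : c ∈ Submonoid.closure (F : Set A)) : c ∈ P ∨ c = 1 := by
  induction hc using Submonoid.closure_induction with
  | mem x hx => exact Or.inl (hF x hx)
  | one => exact Or.inr rfl
  | mul x y _ _ hx hy =>
    rcases hx with hx | rfl
    · rcases hy with hy | rfl
      · exact Or.inl (hP.1 _ hx _ hy)
      · left; simpa using hx
    · simpa using hy

theorem ab_gen {P : Set A} (hP : IsPosCone P) {F : Finset A} (hF : Iso P F) (g : A) (hg : g ∈ P) :
    ∃ m : ℕ, 0 < m ∧ g ^ m ∈ Submonoid.closure (F : Set A) := by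
  by_contra hcon
  push Not at hcon
  let S : Submonoid A :=
    { carrier := {x | ∃ c ∈ Submonoid.closure (F : Set A), ∃ k : ℕ, x = c * (g⁻¹) ^ k}
      one_mem' := ⟨1, Submonoid.one_mem _, 0, by simp⟩
      mul_mem' := by
        rintro _ _ ⟨c, hc, k, rfl⟩ ⟨d, hd, l, rfl⟩
        exact ⟨c * d, Submonoid.mul_mem _ hc hd, k + l, by rw [pow_add, mul_mul_mul_comm]⟩ }
  obtain ⟨Q, hQ, hSQ⟩ := ab_extend (fun x n hn h => pc_tf hP hn h) S (by
    rintro x ⟨c, hc, k, rfl⟩ ⟨d, hd, l, h⟩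
    have h2 : c * d * (g⁻¹) ^ (k + l) = 1 := by
      rw [pow_add, mul_mul_mul_comm, ← h, mul_inv_cancel]
    rcases Nat.eq_zero_or_pos (k + l) with h0 | h0
    · rw [h0, pow_zero, mul_one] at h2
      have : k = 0 := by omega
      rw [this, pow_zero, mul_one]
      rcases ab_closure_pos hP hF.1 hc with h3 | h3
      · rcases ab_closure_pos hP hF.1 hd with h4 | h4
        · exact absurd h2 (pc_ne hP (hP.1 _ h3 _ h4))
        · rw [h4, mul_one] at h2; exact h2
      · exact h3
    · exfalso
      refine hcon _ h0 ?_
      rw [inv_pow, mul_inv_eq_one] at h2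
      rw [← h2]
      exact Submonoid.mul_mem _ hc hd)
  have h := hF.2 Q hQ (fun f hf => hSQ f ⟨f, Submonoid.subset_closure hf, 0, by simp⟩
    (pc_ne hP (hF.1 f hf)))
  have h1 : g⁻¹ ∈ Q := hSQ _ ⟨1, Submonoid.one_mem _, 1, by simp⟩ (by
    rw [Ne, inv_eq_one]; exact pc_ne hP hg)
  rw [h] at h1
  exact hP.2.2.2 _ hg h1

theorem ab_rank {P : Set A} (hP : IsPosCone P) (n : ℕ) : ∀ F : Finset A, F.card ≤ n →
    (∀ f ∈ F, f ∈ P) → (∀ g ∈ P, ∃ m : ℕ, 0 < m ∧ g ^ m ∈ Submonoid.closure (F : Set A)) →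
    ∀ x ∈ P, ∀ y ∈ P, ∃ m n : ℕ, 0 < m ∧ 0 < n ∧ x ^ m = y ^ n := by
  classical
  induction n with
  | zero =>
    intro F hn hF hgen x hx
    have : F = ∅ := by simpa using hn
    obtain ⟨m, hm, h⟩ := hgen x hx
    rw [this] at h
    simp at h
    exact absurd (pc_tf hP hm h) (pc_ne hP hx)
  | succ n ih =>
    intro F hn hF hgen
    by_cases hcard : F.card ≤ 1
    · intro x hx y hy
      have : ∃ f, F ⊆ {f} := Finset.card_le_one_iff_subset_singleton.mp hcard
      obtain ⟨f, hf⟩ := this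
      have hle : Submonoid.closure (F : Set A) ≤ Submonoid.powers f := by
        rw [Submonoid.closure_le]
        intro z hz
        have := hf hz
        rw [Finset.mem_singleton] at this
        exact ⟨1, by simp [this]⟩
      obtain ⟨m, hm, h⟩ := hgen x hx
      obtain ⟨k, hk, h'⟩ := hgen y hy
      obtain ⟨i, hi⟩ := hle h
      obtain ⟨j, hj⟩ := hle h'
      simp only at hi hj
      have hi0 : 0 < i := by
        rcases Nat.eq_zero_or_pos i with h0 | h0
        · rw [h0, pow_zero] at hi
          exact absurd hi.symm (pc_ne hP (pc_pow hP hx hm))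
        · exact h0
      have hj0 : 0 < j := by
        rcases Nat.eq_zero_or_pos j with h0 | h0
        · rw [h0, pow_zero] at hj
          exact absurd hj.symm (pc_ne hP (pc_pow hP hy hk))
        · exact h0
      refine ⟨m * j, k * i, Nat.mul_pos hm hj0, Nat.mul_pos hk hi0, ?_⟩
      rw [pow_mul, pow_mul, ← hi, ← hj, ← pow_mul, ← pow_mul, mul_comm]
    · have : ∃ f₁ ∈ F, ∃ f₂ ∈ F, f₁⁻¹ * f₂ ∈ P := by
        obtain ⟨a, ha, b, hb, hab⟩ := Finset.one_lt_card.mp (not_le.mp hcard)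
        rcases hP.2.1 (a⁻¹ * b) with h | h | h
        · exact ⟨a, ha, b, hb, h⟩
        · exact ⟨b, hb, a, ha, by simpa using h⟩
        · exact absurd (inv_mul_eq_one.mp h) hab
      obtain ⟨f₁, h1, f₂, h2, h12⟩ := this
      have hne : f₁ ≠ f₂ := by
        rintro rfl; simp at h12; exact hP.2.2.1 h12
      set F' := F.erase f₂ with hF'
      have hF'P : ∀ f ∈ F', f ∈ P := fun f hf => hF f (Finset.mem_of_mem_erase hf)
      have hdec : ∀ z ∈ Submonoid.closure (F : Set A),
          ∃ j : ℕ, ∃ c ∈ Submonoid.closure (F' : Set A), z = f₂ ^ j * c := by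
        intro z hz
        induction hz using Submonoid.closure_induction with
        | mem z hz =>
          by_cases h : z = f₂
          · exact ⟨1, 1, Submonoid.one_mem _, by simp [h]⟩
          · exact ⟨0, z, Submonoid.subset_closure (Finset.mem_coe.mpr
              (Finset.mem_erase.mpr ⟨h, hz⟩)), by simp⟩
        | one => exact ⟨0, 1, Submonoid.one_mem _, by simp⟩
        | mul x y _ _ hx hy =>
          obtain ⟨i, c, hc, rfl⟩ := hx
          obtain ⟨j, d, hd, rfl⟩ := hy
          exact ⟨i + j, c * d, Submonoid.mul_mem _ hc hd, by rw [pow_add, mul_mul_mul_comm]⟩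
      have hf2 : ∃ k : ℕ, 0 < k ∧ f₂ ^ k ∈ Submonoid.closure (F' : Set A) := by
        obtain ⟨m, hm, h⟩ := hgen _ h12
        obtain ⟨j, c, hc, hjc⟩ := hdec _ h
        have h3 : f₂ ^ m = f₁ ^ m * (f₂ ^ j * c) := by
          rw [← hjc, ← mul_pow, mul_inv_cancel_left]
        have hf1 : f₁ ^ m ∈ Submonoid.closure (F' : Set A) :=
          Submonoid.pow_mem _ (Submonoid.subset_closure (Finset.mem_coe.mpr
              (Finset.mem_erase.mpr ⟨hne, h1⟩))) m
        by_cases hjm : m ≤ j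
        · exfalso
          obtain ⟨i, rfl⟩ := Nat.exists_eq_add_of_le hjm
          have h4 : f₁ ^ m * c * f₂ ^ i = 1 := by
            rw [pow_add] at h3
            have : f₂ ^ m * 1 = f₂ ^ m * (f₁ ^ m * c * f₂ ^ i) := by
              rw [mul_one]
              refine h3.trans ?_
              ac_rfl
            exact (mul_left_cancel this).symm
          have hp1 : f₁ ^ m ∈ P := pc_pow hP (hF _ h1) hm
          have hp2 : f₁ ^ m * c ∈ P := by
            rcases ab_closure_pos hP hF'P hc with h | h
            · exact hP.1 _ hp1 _ h
            · rw [h, mul_one]; exact hp1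
          have hp3 : f₁ ^ m * c * f₂ ^ i ∈ P := by
            rcases Nat.eq_zero_or_pos i with h | h
            · rw [h, pow_zero, mul_one]; exact hp2
            · exact hP.1 _ hp2 _ (pc_pow hP (hF _ h2) h)
          exact pc_ne hP hp3 h4
        · obtain ⟨i, rfl⟩ := Nat.exists_eq_add_of_lt (not_le.mp hjm)
          refine ⟨i + 1, by omega, ?_⟩
          have : f₂ ^ (i + 1) = f₁ ^ (j + i + 1) * c := by
            have e : f₂ ^ j * f₂ ^ (i + 1) = f₂ ^ j * (f₁ ^ (j + i + 1) * c) := by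
              rw [← pow_add, ← add_assoc, h3]
              ac_rfl
            exact mul_left_cancel e
          rw [this]
          exact Submonoid.mul_mem _ hf1 hc
      obtain ⟨k, hk, hk2⟩ := hf2
      refine ih F' ?_ hF'P ?_
      · rw [hF', Finset.card_erase_of_mem h2]; omega
      · intro g hg
        obtain ⟨m, hm, h⟩ := hgen g hg
        obtain ⟨j, c, hc, hjc⟩ := hdec _ h
        refine ⟨m * k, Nat.mul_pos hm hk, ?_⟩
        rw [pow_mul, hjc, mul_pow, ← pow_mul, mul_comm j k, pow_mul]
        exact Submonoid.mul_mem _ (Submonoid.pow_mem _ hk2 j) (Submonoid.pow_mem _ hc k)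

end Abel

theorem ab_iso {G : Type*} [Group G] (hcomm : ∀ a b : G, a * b = b * a) {P : Set G}
    (hP : IsPosCone P) {F : Finset G} (hF : Iso P F) :
    ∀ x ∈ P, ∀ y ∈ P, ∃ m n : ℕ, 0 < m ∧ 0 < n ∧ x ^ m = y ^ n := by
  let _ : CommGroup G := { (inferInstance : Group G) with mul_comm := hcomm }
  exact ab_rank (A := G) hP F.card F le_rfl hF.1 (ab_gen hP hF)

theorem jump_iso {G : Type*} [Group G] {P : Set G} (hP : IsPosCone P) (hC : Conr P)
    {F : Finset G} (hF : Iso P F) {D : Subgroup G} (hD : Cvx P D)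
    (hmax : ∀ K : Subgroup G, Cvx P K → K ≠ ⊤ → K ≤ D) :
    D.Normal ∧ (∀ a b, (b * a)⁻¹ * (a * b) ∈ D) ∧
    ∀ x ∈ P, x ∉ D → ∀ y ∈ P, y ∉ D → ∃ m n : ℕ, 0 < m ∧ 0 < n ∧ (y ^ n)⁻¹ * x ^ m ∈ D := by
  obtain ⟨hN, hcomm⟩ := conrad_jump hP hC hD hmax
  refine ⟨hN, hcomm, ?_⟩
  obtain ⟨F', hF'⟩ := iso_quot hP hF hD
  have := ab_iso (G := G ⧸ D) (by
    intro a b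
    obtain ⟨a, rfl⟩ := QuotientGroup.mk_surjective a
    obtain ⟨b, rfl⟩ := QuotientGroup.mk_surjective b
    rw [← QuotientGroup.mk_mul, ← QuotientGroup.mk_mul, QuotientGroup.eq]
    exact hcomm b a) (pc_qcone hP hD) hF'
  intro x hx hxD y hy hyD
  obtain ⟨m, n, hm, hn, h⟩ := this x ((qcone_mem hP hD).mpr ⟨hx, hxD⟩) y
    ((qcone_mem hP hD).mpr ⟨hy, hyD⟩)
  refine ⟨m, n, hm, hn, ?_⟩
  rw [← QuotientGroup.mk_pow, ← QuotientGroup.mk_pow] at h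
  rw [← QuotientGroup.eq]
  exact h.symm


section NI
set_option linter.unusedSectionVars false
variable {E : Type*} [Group E] [LinearOrder E] [MulLeftMono E] [MulRightMono E]

def UpOn (B : Subgroup E) (x : E) : Prop := ∀ c ∈ B, 1 < c → c < x * c * x⁻¹

theorem ni_cone (T : E) :
    IsPosCone {g : E | g * T * g⁻¹ < T ∨ (g * T * g⁻¹ = T ∧ 1 < g)} := by
  have hmono : ∀ g a b : E, a ≤ b → g * a * g⁻¹ ≤ g * b * g⁻¹ := by
    intro g a b h; gcongr
  have hsmono : ∀ g a b : E, a < b → g * a * g⁻¹ < g * b * g⁻¹ := by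
    intro g a b h; gcongr
  have hinv : ∀ g : E, g * T * g⁻¹ < T → T < g⁻¹ * T * g⁻¹⁻¹ := by
    intro g h
    have := hsmono g⁻¹ _ _ h
    have e : g⁻¹ * (g * T * g⁻¹) * g⁻¹⁻¹ = T := by group
    rwa [e] at this
  refine ⟨?_, ?_, ?_, ?_⟩
  · intro a ha b hb
    simp only [Set.mem_ofPred_eq] at *
    have e : a * b * T * (a * b)⁻¹ = a * (b * T * b⁻¹) * a⁻¹ := by group
    rw [e]
    rcases ha with ha | ⟨ha, ha'⟩
    · left
      rcases hb with hb | ⟨hb, hb'⟩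
      · exact (hsmono a _ _ hb).trans ha
      · rw [hb]; exact ha
    · rcases hb with hb | ⟨hb, hb'⟩
      · left; exact (hsmono a _ _ hb).trans_le ha.le
      · right; rw [hb]; exact ⟨ha, one_lt_mul' ha' hb'⟩
  · intro g
    simp only [Set.mem_ofPred_eq]
    rcases lt_trichotomy (g * T * g⁻¹) T with h | h | h
    · exact Or.inl (Or.inl h)
    · rcases lt_trichotomy 1 g with h1 | h1 | h1
      · exact Or.inl (Or.inr ⟨h, h1⟩)
      · exact Or.inr (Or.inr h1.symm)
      · refine Or.inr (Or.inl (Or.inr ⟨?_, by simpa using h1⟩))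
        nth_rewrite 1 [← h]; group
    · refine Or.inr (Or.inl (Or.inl ?_))
      have := hsmono g⁻¹ _ _ h
      have e : g⁻¹ * (g * T * g⁻¹) * g⁻¹⁻¹ = T := by group
      rwa [e] at this
  · simp
  · intro g hg hg'
    simp only [Set.mem_ofPred_eq] at *
    rcases hg with hg | ⟨hg, h1⟩
    · have := hinv g hg
      rcases hg' with h | ⟨h, -⟩
      · exact lt_asymm h this
      · exact this.ne' h
    · rcases hg' with h | ⟨h, h1'⟩
      · have := hinv _ h
        rw [inv_inv, hg] at this
        exact lt_irrefl _ this
      · rw [Left.one_lt_inv_iff] at h1'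
        exact lt_asymm h1 h1'

theorem ni_arch {B : Subgroup E}
    (hB1 : ∀ x ∈ B, ∀ y ∈ B, 1 < x → 1 < y → ∃ m n : ℕ, 0 < m ∧ 0 < n ∧ x ^ m = y ^ n)
    {w β : E} (hw : w ∈ B) (hw1 : 1 < w) (hβ : β ∈ B) :
    ∀ᶠ k : ℕ in Filter.atTop, β < w ^ k := by
  by_cases h : 1 < β
  · obtain ⟨m, n, hm, hn, hmn⟩ := hB1 β hβ w hw h hw1
    filter_upwards [Filter.eventually_gt_atTop n] with k hk
    calc β ≤ β ^ m := le_self_pow h.le hm.ne'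
      _ = w ^ n := hmn
      _ < w ^ k := pow_lt_pow_right' hw1 hk
  · filter_upwards [Filter.eventually_gt_atTop 0] with k hk
    exact (not_lt.mp h).trans_lt (one_lt_pow' hw1 hk.ne')

theorem ni_core {B : Subgroup E} [B.Normal]
    (hcv : ∀ x, 1 < x → ∀ c ∈ B, x < c → x ∈ B)
    (hBc : ∀ x ∈ B, ∀ y ∈ B, x * y = y * x)
    (hB1 : ∀ x ∈ B, ∀ y ∈ B, 1 < x → 1 < y → ∃ m n : ℕ, 0 < m ∧ 0 < n ∧ x ^ m = y ^ n)
    (hqc : ∀ a b : E, (b * a)⁻¹ * (a * b) ∈ B)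
    {t b b1 : E} (ht : t ∉ B) (hut : UpOn B t) (hb : b ∈ B) (hb1 : b1 ∈ B) (hb1' : 1 < b1)
    (hfb : ∀ f, 1 < f → f ∉ B → b < f * b * f⁻¹)
    {F : Finset E} (hF : Iso {g : E | 1 < g} F) : False := by
  have hev : ∀ᶠ k : ℕ in Filter.atTop, ∀ f ∈ F,
      f * (b ^ k * t * (b ^ k)⁻¹) * f⁻¹ < b ^ k * t * (b ^ k)⁻¹ := by
    rw [Filter.eventually_all_finset]
    intro f hfF
    have hf1 : 1 < f := hF.1 f hfF
    by_cases hfB : f ∈ B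
    · refine Filter.Eventually.of_forall fun k => ?_
      have hbk : b ^ k ∈ B := B.pow_mem hb k
      have h1 := hut f hfB hf1
      rw [mul_inv_lt_iff_lt_mul]
      have e1 : f * (b ^ k * t * (b ^ k)⁻¹) = b ^ k * (f * t) * (b ^ k)⁻¹ := by
        rw [← mul_assoc, ← mul_assoc, hBc f hfB _ hbk]; group
      have e2 : b ^ k * t * (b ^ k)⁻¹ * f = b ^ k * (t * f) * (b ^ k)⁻¹ := by
        rw [mul_assoc _ _ f, hBc _ (B.inv_mem hbk) f hfB]; group
      rw [e1, e2]
      have : f * t < t * f := by rwa [lt_mul_inv_iff_mul_lt] at h1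
      gcongr
    · have hc : 1 < f * b * f⁻¹ * b⁻¹ := by
        rw [lt_mul_inv_iff_mul_lt, one_mul]; exact hfb f hf1 hfB
      set c := f * b * f⁻¹ * b⁻¹ with hcdef
      have hcB : c ∈ B := B.mul_mem (Subgroup.Normal.conj_mem inferInstance b hb f) (B.inv_mem hb)
      have huB : t * c * t⁻¹ ∈ B := Subgroup.Normal.conj_mem inferInstance c hcB t
      have hβB : f * t * f⁻¹ * t⁻¹ ∈ B := by
        have := hqc f⁻¹ t⁻¹
        have e : (t⁻¹ * f⁻¹)⁻¹ * (f⁻¹ * t⁻¹) = f * t * f⁻¹ * t⁻¹ := by group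
        rwa [e] at this
      set u := t * c * t⁻¹ with hu
      set β := f * t * f⁻¹ * t⁻¹ with hβ
      have hw1 : 1 < u * c⁻¹ := by
        rw [lt_mul_inv_iff_mul_lt, one_mul]; exact hut c hcB hc
      have hwB : u * c⁻¹ ∈ B := B.mul_mem huB (B.inv_mem hcB)
      filter_upwards [ni_arch hB1 hwB hw1 hβB] with k hk
      have hbk : b ^ k ∈ B := B.pow_mem hb k
      have hck : c ^ k ∈ B := B.pow_mem hcB k
      have huk : u ^ k ∈ B := B.pow_mem huB k
      have hwk : (u * c⁻¹) ^ k = u ^ k * (c ^ k)⁻¹ := by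
        rw [Commute.mul_pow (hBc _ huB _ (B.inv_mem hcB)), inv_pow]
      rw [hwk, lt_mul_inv_iff_mul_lt] at hk
      have hcb : c ^ k * b ^ k = f * b ^ k * f⁻¹ := by
        rw [← Commute.mul_pow (hBc _ hcB _ hb), ← conj_pow, hcdef]; group
      have huk' : u ^ k = t * c ^ k * t⁻¹ := by rw [hu, conj_pow]
      have h2 : β * c ^ k * b ^ k * t < u ^ k * b ^ k * t := by gcongr
      have e1 : β * c ^ k * b ^ k * t = f * b ^ k * t * f⁻¹ := by
        rw [mul_assoc β, hBc _ hβB _ (B.mul_mem hck hbk), hcb, hβ]; group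
      have e2 : u ^ k * b ^ k * t = b ^ k * t * c ^ k := by
        rw [hBc _ huk _ hbk, huk']; group
      rw [e1, e2] at h2
      have e3 : f * (b ^ k * t * (b ^ k)⁻¹) * f⁻¹ = f * b ^ k * t * f⁻¹ * (f * b ^ k * f⁻¹)⁻¹ := by
        group
      rw [e3, mul_inv_lt_iff_lt_mul]
      refine h2.trans_eq ?_
      rw [← hcb, hBc _ hck _ hbk]; group
  obtain ⟨k, hk⟩ := hev.exists
  set T := b ^ k * t * (b ^ k)⁻¹ with hT
  have hbk : b ^ k ∈ B := B.pow_mem hb k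
  have hTB : T ∉ B := by
    intro h
    rw [hT, B.mul_mem_cancel_right (B.inv_mem hbk), B.mul_mem_cancel_left hbk] at h
    exact ht h
  have hTb : T < b1⁻¹ * T * b1 := by
    rw [mul_assoc, lt_inv_mul_iff_mul_lt]
    have h1 := hut b1 hb1 hb1'
    have e1 : b1 * T = b ^ k * (b1 * t) * (b ^ k)⁻¹ := by
      rw [hT, ← mul_assoc, ← mul_assoc, hBc b1 hb1 _ hbk]; group
    have e2 : T * b1 = b ^ k * (t * b1) * (b ^ k)⁻¹ := by
      rw [hT, mul_assoc _ _ b1, hBc _ (B.inv_mem hbk) b1 hb1]; group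
    rw [e1, e2]
    have : b1 * t < t * b1 := by rwa [lt_mul_inv_iff_mul_lt] at h1
    gcongr
  have hQ := hF.2 _ (ni_cone T) (fun f hf => Or.inl (hk f hf))
  have hs : ∃ s, 1 < s ∧ s ∉ B ∧ s * T * s⁻¹ = T := by
    rcases lt_trichotomy 1 T with h | h | h
    · exact ⟨T, h, hTB, by group⟩
    · exact absurd (h ▸ B.one_mem) hTB
    · exact ⟨T⁻¹, by simpa using h, by rwa [B.inv_mem_iff], by group⟩
  obtain ⟨s, hs1, hsB, hsT⟩ := hs
  have hg : (1 : E) < b1⁻¹ * s := by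
    rw [lt_inv_mul_iff_mul_lt, mul_one]
    rcases lt_trichotomy s b1 with h | h | h
    · exact absurd (hcv s hs1 b1 hb1 h) hsB
    · exact absurd (h ▸ hb1) hsB
    · exact h
  have hg' : b1⁻¹ * s ∈ {g : E | 1 < g} := hg
  rw [← hQ] at hg'
  have e : b1⁻¹ * s * T * (b1⁻¹ * s)⁻¹ = b1⁻¹ * T * b1 := by
    nth_rewrite 2 [← hsT]; group
  simp only [Set.mem_ofPred_eq, e] at hg'
  rcases hg' with h | ⟨h, -⟩
  · exact lt_asymm h hTb
  · exact hTb.ne' h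

theorem ni_root {x y : E} {m : ℕ} (hm : 0 < m) (h : x ^ m * y = y * x ^ m) : x * y = y * x := by
  have h1 : (y * x * y⁻¹) ^ m = x ^ m := by rw [conj_pow, ← h]; group
  have h2 : y * x * y⁻¹ = x := by
    rcases lt_trichotomy (y * x * y⁻¹) x with h | h | h
    · exact absurd h1 (pow_left_strictMono hm.ne' h).ne
    · exact h
    · exact absurd h1 (pow_left_strictMono hm.ne' h).ne'
  nth_rewrite 1 [← h2]; group

theorem ni_tri {B : Subgroup E} [B.Normal]
    (hB1 : ∀ x ∈ B, ∀ y ∈ B, 1 < x → 1 < y → ∃ m n : ℕ, 0 < m ∧ 0 < n ∧ x ^ m = y ^ n)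
    {b1 : E} (hb1 : b1 ∈ B) (hb1' : 1 < b1) (x : E) :
    UpOn B x ∨ UpOn B x⁻¹ ∨ ∀ c ∈ B, x * c = c * x := by
  have key : ∀ x : E, b1 < x * b1 * x⁻¹ → UpOn B x := by
    intro x h d hd hd1
    obtain ⟨m, n, hm, hn, hmn⟩ := hB1 b1 hb1 d hd hb1' hd1
    have h1 : b1 ^ m < (x * b1 * x⁻¹) ^ m := pow_left_strictMono hm.ne' h
    rw [conj_pow, hmn, ← conj_pow] at h1
    by_contra hcon
    exact absurd h1 (not_lt.mpr ((pow_left_strictMono hn.ne').monotone (not_lt.mp hcon)))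
  rcases lt_trichotomy b1 (x * b1 * x⁻¹) with h | h | h
  · exact Or.inl (key x h)
  · right; right
    have hpos : ∀ c ∈ B, 1 < c → x * c = c * x := by
      intro d hd hd1
      obtain ⟨m, n, hm, hn, hmn⟩ := hB1 b1 hb1 d hd hb1' hd1
      refine (ni_root hn ?_).symm
      rw [← hmn]
      have : Commute b1 x := by
        show b1 * x = x * b1
        nth_rewrite 1 [h]; group
      exact (this.pow_left m)
    intro c hc
    rcases lt_trichotomy 1 c with h1 | h1 | h1
    · exact hpos c hc h1
    · rw [← h1]; simp
    · have := hpos c⁻¹ (B.inv_mem hc) (by simpa using h1)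
      have h2 : Commute x c⁻¹ := this
      exact (Commute.inv_right_iff.mp h2)
  · right; left
    apply key
    have h2 : x⁻¹ * (x * b1 * x⁻¹) * x < x⁻¹ * b1 * x := by gcongr
    have e : x⁻¹ * (x * b1 * x⁻¹) * x = b1 := by group
    rw [e] at h2; simpa using h2

theorem ni_up_pow {B : Subgroup E} [B.Normal] {x : E} (h : UpOn B x) {m : ℕ} (hm : 0 < m) :
    UpOn B (x ^ m) := by
  induction m with
  | zero => omega
  | succ k ih =>
    rcases Nat.eq_zero_or_pos k with h0 | h0
    · simpa [h0] using h
    · intro c hc hc1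
      have h1 := ih h0 c hc hc1
      have h2 : x * c * x⁻¹ < x * (x ^ k * c * (x ^ k)⁻¹) * x⁻¹ := by gcongr
      refine (h c hc hc1).trans (h2.trans_eq ?_)
      rw [pow_succ']; group

theorem ni_not_both {B : Subgroup E} [B.Normal] {b1 : E} (hb1 : b1 ∈ B) (hb1' : 1 < b1) {x : E}
    (h : UpOn B x) (h' : UpOn B x⁻¹) : False := by
  have h1 := h b1 hb1 hb1'
  have h2 := h' b1 hb1 hb1'
  have h3 : x⁻¹ * b1 * x < x⁻¹ * (x * b1 * x⁻¹) * x := by gcongr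
  have e : x⁻¹ * (x * b1 * x⁻¹) * x = b1 := by group
  rw [e] at h3
  rw [inv_inv] at h2
  exact lt_asymm h2 h3

theorem ni_transfer {B : Subgroup E} [B.Normal]
    (hB1 : ∀ x ∈ B, ∀ y ∈ B, 1 < x → 1 < y → ∃ m n : ℕ, 0 < m ∧ 0 < n ∧ x ^ m = y ^ n)
    {b1 : E} (hb1 : b1 ∈ B) (hb1' : 1 < b1) {x y : E} (hx : UpOn B x) {m n : ℕ} (hm : 0 < m)
    (hn : 0 < n) (hxy : ∀ c ∈ B, x ^ m * c * (x ^ m)⁻¹ = y ^ n * c * (y ^ n)⁻¹) : UpOn B y := by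
  have hxm := ni_up_pow hx hm
  have hyn : UpOn B (y ^ n) := fun c hc hc1 => by rw [← hxy c hc]; exact hxm c hc hc1
  rcases ni_tri hB1 hb1 hb1' y with h | h | h
  · exact h
  · have := ni_up_pow h hn
    rw [inv_pow] at this
    exact (ni_not_both hb1 hb1' hyn this).elim
  · exfalso
    have h1 := hyn b1 hb1 hb1'
    have h2 : Commute y b1 := h b1 hb1
    rw [(h2.pow_left n).eq] at h1
    simp at h1

theorem ni_ord {B : Subgroup E} [B.Normal]
    (hcv : ∀ x, 1 < x → ∀ c ∈ B, x < c → x ∈ B)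
    (hBc : ∀ x ∈ B, ∀ y ∈ B, x * y = y * x)
    (hB1 : ∀ x ∈ B, ∀ y ∈ B, 1 < x → 1 < y → ∃ m n : ℕ, 0 < m ∧ 0 < n ∧ x ^ m = y ^ n)
    (hqc : ∀ a b : E, (b * a)⁻¹ * (a * b) ∈ B)
    (hq : ∀ x, 1 < x → x ∉ B → ∀ y, 1 < y → y ∉ B →
      ∃ m n : ℕ, 0 < m ∧ 0 < n ∧ (y ^ n)⁻¹ * x ^ m ∈ B)
    {t b : E} (ht : t ∉ B) (hb : b ∈ B) (hb0 : b ≠ 1)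
    {F : Finset E} (hF : Iso {g : E | 1 < g} F) : False := by
  have hb1 : ∃ b1 ∈ B, 1 < b1 := by
    rcases lt_or_gt_of_ne hb0 with h | h
    · exact ⟨b⁻¹, B.inv_mem hb, by simpa using h⟩
    · exact ⟨b, hb, h⟩
  obtain ⟨b1, hb1, hb1'⟩ := hb1
  have hs : ∃ s, 1 < s ∧ s ∉ B := by
    rcases lt_trichotomy 1 t with h | h | h
    · exact ⟨t, h, ht⟩
    · exact absurd (h ▸ B.one_mem) ht
    · exact ⟨t⁻¹, by simpa using h, by rwa [B.inv_mem_iff]⟩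
  obtain ⟨s, hs, hsB⟩ := hs
  have hconj : ∀ x y : E, y⁻¹ * x ∈ B → ∀ c ∈ B, x * c * x⁻¹ = y * c * y⁻¹ := by
    intro x y h c hc
    have e : x * c * x⁻¹ = y * ((y⁻¹ * x) * c) * (y⁻¹ * x)⁻¹ * y⁻¹ := by group
    rw [e, hBc _ h c hc]; group
  have hconj' : ∀ x y : E, y⁻¹ * x ∈ B → ∀ c ∈ B, x⁻¹ * c * x = y⁻¹ * c * y := by
    intro x y h c hc
    have h' : (y⁻¹)⁻¹ * x⁻¹ ∈ B := by
      have := Subgroup.Normal.conj_mem inferInstance _ (B.inv_mem h) y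
      have e : y * (y⁻¹ * x)⁻¹ * y⁻¹ = y⁻¹⁻¹ * x⁻¹ := by group
      rwa [e] at this
    simpa using hconj x⁻¹ y⁻¹ h' c hc
  rcases ni_tri hB1 hb1 hb1' s with h | h | h
  · refine ni_core hcv hBc hB1 hqc hsB h hb1 hb1 hb1' ?_ hF
    intro f hf hfB
    obtain ⟨m, n, hm, hn, hmn⟩ := hq s hs hsB f hf hfB
    exact ni_transfer hB1 hb1 hb1' h hm hn (hconj _ _ hmn) b1 hb1 hb1'
  · refine ni_core hcv hBc hB1 hqc (t := s⁻¹) (by rwa [B.inv_mem_iff]) h (B.inv_mem hb1) hb1 hb1' ?_ hF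
    intro f hf hfB
    obtain ⟨m, n, hm, hn, hmn⟩ := hq s hs hsB f hf hfB
    have := ni_transfer hB1 hb1 hb1' (y := f⁻¹) h hm hn (by
      intro c hc
      have := hconj' _ _ hmn c hc
      simpa using this) b1 hb1 hb1'
    rw [inv_inv] at this
    have h3 : f * b1 * f⁻¹ < f * (f⁻¹ * b1 * f) * f⁻¹ := by gcongr
    have e : f * (f⁻¹ * b1 * f) * f⁻¹ = b1 := by group
    rw [e] at h3
    rw [← conj_inv]
    exact inv_lt_inv_iff.mpr h3
  · have hcen : ∀ y, 1 < y → ∀ c ∈ B, y * c = c * y := by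
      intro y hy c hc
      by_cases hyB : y ∈ B
      · exact hBc y hyB c hc
      · obtain ⟨m, n, hm, hn, hmn⟩ := hq s hs hsB y hy hyB
        apply ni_root hn
        have h1 := hconj _ _ hmn c hc
        have h2 : Commute s c := h c hc
        rw [(h2.pow_left m).eq, mul_inv_cancel_right] at h1
        nth_rewrite 2 [h1]; group
    have hcomm1 : ∀ x : E, 1 < x → ∀ y : E, 1 < y → x * y = y * x := by
      intro x hx y hy
      by_cases hxB : x ∈ B
      · exact (hcen y hy x hxB).symm
      · by_cases hyB : y ∈ B
        · exact hcen x hx y hyB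
        · obtain ⟨m, n, hm, hn, hmn⟩ := hq x hx hxB y hy hyB
          apply ni_root hm
          have h1 := hcen y hy _ hmn
          have h2 : Commute y ((y ^ n)⁻¹ * x ^ m) := h1
          have h3 : Commute y (y ^ n) := (Commute.refl y).pow_right n
          have h4 := h3.mul_right h2
          rw [mul_inv_cancel_left] at h4
          exact h4.eq.symm
    have hcomm2 : ∀ x : E, 1 < x → ∀ y : E, x * y = y * x := by
      intro x hx y
      rcases lt_trichotomy 1 y with h1 | h1 | h1
      · exact hcomm1 x hx y h1
      · rw [← h1]; simp
      · have : Commute x y⁻¹ := hcomm1 x hx y⁻¹ (by simpa using h1)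
        exact Commute.inv_right_iff.mp this
    have hcomm : ∀ x y : E, x * y = y * x := by
      intro x y
      rcases lt_trichotomy 1 x with h1 | h1 | h1
      · exact hcomm2 x h1 y
      · rw [← h1]; simp
      · have : Commute x⁻¹ y := hcomm2 x⁻¹ (by simpa using h1) y
        exact Commute.inv_left_iff.mp this
    have hP : IsPosCone {g : E | 1 < g} := by
      have := ni_cone (1 : E)
      simpa using this
    obtain ⟨m, n, hm, hn, hmn⟩ := ab_iso hcomm hP hF s hs b1 hb1'
    apply hsB
    refine cvx_root hP (K := B) (fun x hx c hc hxc => hcv x hx c hc ?_) hm (hmn ▸ B.pow_mem hb1 n)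
    simpa using hxc

end NI

theorem ni_main {E : Type*} [Group E] {P : Set E} (hP : IsPosCone P)
    (hbi : ∀ g, ∀ x ∈ P, g * x * g⁻¹ ∈ P) {B : Subgroup E} (hBn : B.Normal) (hcv : Cvx P B)
    (hBc : ∀ x ∈ B, ∀ y ∈ B, x * y = y * x)
    (hB1 : ∀ x ∈ B, ∀ y ∈ B, x ∈ P → y ∈ P → ∃ m n : ℕ, 0 < m ∧ 0 < n ∧ x ^ m = y ^ n)
    (hqc : ∀ a b : E, (b * a)⁻¹ * (a * b) ∈ B)
    (hq : ∀ x ∈ P, x ∉ B → ∀ y ∈ P, y ∉ B →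
      ∃ m n : ℕ, 0 < m ∧ 0 < n ∧ (y ^ n)⁻¹ * x ^ m ∈ B)
    (ht : B ≠ ⊤) (hb0 : B ≠ ⊥)
    {F : Finset E} (hF : Iso P F) : False := by
  obtain ⟨o, ho, hlt⟩ := pc_order hP
  let _ := o
  have : MulLeftMono E := ho
  have h1 : ∀ x : E, 1 < x ↔ x ∈ P := fun x => by rw [hlt]; simp
  have : MulRightMono E := by
    refine ⟨fun c a b hab => ?_⟩
    rcases hab.lt_or_eq with h | h
    · refine le_of_lt ?_
      rw [hlt] at h
      show a * c < b * c
      rw [hlt]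
      have := hbi c⁻¹ _ h
      have e : c⁻¹ * (a⁻¹ * b) * c⁻¹⁻¹ = (a * c)⁻¹ * (b * c) := by group
      rwa [e] at this
    · rw [h]
  obtain ⟨b, hb, hb1⟩ := Subgroup.ne_bot_iff_exists_ne_one.mp hb0 |>.elim
    fun a ha => (⟨a, a.2, fun h => ha (Subtype.ext h)⟩ : ∃ b ∈ B, b ≠ 1)
  obtain ⟨t, ht⟩ : ∃ t, t ∉ B := by
    by_contra hcon; push Not at hcon
    exact ht (eq_top_iff.mpr fun x _ => hcon x)
  have hPe : P = {g : E | 1 < g} := by ext x; exact (h1 x).symm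
  subst hPe
  refine ni_ord (B := B) (fun x hx c hc hxc => hcv x hx c hc ?_) hBc
    (fun x hx y hy h1 h2 => hB1 x hx y hy h1 h2) hqc (fun x hx hxB y hy hyB => hq x hx hxB y hy hyB)
    ht hb hb1 hF
  rwa [hlt] at hxc


section L2
variable {G : Type*} [Group G]

theorem l2_hull {Q : Set G} (hQ : IsPosCone Q) {D : Subgroup G} [hN : D.Normal] :
    ∃ K : Subgroup G, Cvx Q K ∧ D ≤ K ∧
      ∀ x ∈ K, ∃ d ∈ D, x⁻¹ * d ∈ Q ∨ x = d := by
  obtain ⟨o, ho, hlt⟩ := pc_order hQ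
  let _ := o
  have : MulLeftMono G := ho
  have h1 : ∀ x : G, 1 < x ↔ x ∈ Q := fun x => by rw [hlt]; simp
  let K : Subgroup G :=
    { carrier := {x | ∃ d ∈ D, ∃ d' ∈ D, d ≤ x ∧ x ≤ d'}
      one_mem' := ⟨1, D.one_mem, 1, D.one_mem, le_rfl, le_rfl⟩
      mul_mem' := by
        rintro x y ⟨d1, hd1, e1, he1, h1, h2⟩ ⟨d2, hd2, e2, he2, h3, h4⟩
        refine ⟨x * d2 * x⁻¹ * d1, D.mul_mem (hN.conj_mem _ hd2 x) hd1,
          x * e2 * x⁻¹ * e1, D.mul_mem (hN.conj_mem _ he2 x) he1, ?_, ?_⟩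
        · calc x * d2 * x⁻¹ * d1 ≤ x * d2 * x⁻¹ * x := mul_le_mul_right h1 _
            _ = x * d2 := by group
            _ ≤ x * y := mul_le_mul_right h3 _
        · calc x * y ≤ x * e2 := mul_le_mul_right h4 _
            _ = x * e2 * x⁻¹ * x := by group
            _ ≤ _ := mul_le_mul_right h2 _
      inv_mem' := by
        rintro x ⟨d, hd, e, he, h1, h2⟩
        have hc : ∀ z ∈ D, x⁻¹ * z⁻¹ * x ∈ D := fun z hz => by
          simpa using hN.conj_mem _ (D.inv_mem hz) x⁻¹
        refine ⟨x⁻¹ * e⁻¹ * x, hc e he, x⁻¹ * d⁻¹ * x, hc d hd, ?_, ?_⟩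
        · calc x⁻¹ * e⁻¹ * x ≤ x⁻¹ * e⁻¹ * e := mul_le_mul_right h2 _
            _ = x⁻¹ := by group
        · calc x⁻¹ = x⁻¹ * d⁻¹ * d := by group
            _ ≤ _ := mul_le_mul_right h1 _ }
  have hK : ∀ x, x ∈ K ↔ ∃ d ∈ D, ∃ d' ∈ D, d ≤ x ∧ x ≤ d' := fun x => Iff.rfl
  refine ⟨K, ?_, ?_, ?_⟩
  · intro x hx c hc hxc
    rw [← hlt] at hxc
    rw [hK] at hc ⊢
    obtain ⟨d, hd, e, he, h2, h3⟩ := hc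
    exact ⟨1, D.one_mem, e, he, ((h1 x).mpr hx).le, hxc.le.trans h3⟩
  · intro x hx
    exact ⟨x, hx, x, hx, le_rfl, le_rfl⟩
  · intro x hx
    obtain ⟨d, hd, e, he, h2, h3⟩ := hx
    refine ⟨e, he, ?_⟩
    rcases h3.lt_or_eq with h | h
    · exact Or.inl ((hlt _ _).mp h)
    · exact Or.inr h

theorem l2_main {Q : Set G} (hQ : IsPosCone Q) {D D' : Subgroup G} (hN : D.Normal) (hN' : D'.Normal)
    (hA : ∀ z ∈ D, z ∉ D' → z ∈ Q → ∀ d ∈ D, ∃ n : ℕ, 0 < n ∧ d⁻¹ * z ^ n ∈ Q)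
    {t : G} (ht : ∀ z ∈ D, z ∉ D' → z ∈ Q → (t * z * t⁻¹)⁻¹ ∈ Q)
    {e : G} (he : e ∈ D) (heD : e ∉ D')
    (hq : ∀ v, v ∉ D → ∃ w, (w = v ∨ w = v⁻¹) ∧ ∃ m n : ℕ, 0 < m ∧ 0 < n ∧ (w ^ n)⁻¹ * t ^ m ∈ D) :
    Cvx Q D := by
  have hconj : ∀ g z : G, z ∉ D' → g * z * g⁻¹ ∉ D' := by
    intro g z hz h
    apply hz
    have := hN'.conj_mem _ h g⁻¹
    have e : g⁻¹ * (g * z * g⁻¹) * g⁻¹⁻¹ = z := by group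
    rwa [e] at this
  obtain ⟨e, he, heD, heQ⟩ : ∃ e ∈ D, e ∉ D' ∧ e ∈ Q := by
    by_cases h : e ∈ Q
    · exact ⟨e, he, heD, h⟩
    · exact ⟨e⁻¹, D.inv_mem he, by rwa [D'.inv_mem_iff], pc_of_not hQ h (by
        rintro rfl; exact heD D'.one_mem)⟩
  have ht' : ∀ z ∈ D, z ∉ D' → z ∈ Q → (t⁻¹ * z * t⁻¹⁻¹)⁻¹ ∈ Q := by
    intro z hz hzD hzQ
    apply pc_of_not hQ
    · intro hy
      have := ht _ (hN.conj_mem z hz t⁻¹) (hconj t⁻¹ z hzD) hy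
      have e : t * (t⁻¹ * z * t⁻¹⁻¹) * t⁻¹ = z := by group
      rw [e] at this
      exact hQ.2.2.2 _ hzQ this
    · intro h
      exact hconj t⁻¹ z hzD (h ▸ D'.one_mem)
  obtain ⟨K, hK, hDK, hKb⟩ := l2_hull hQ (D := D)
  have hno : ∀ s ∈ K, s ∈ Q → (∀ z ∈ D, z ∉ D' → z ∈ Q → (s * z * s⁻¹)⁻¹ ∈ Q) → False := by
    intro s hs hsQ hrev
    obtain ⟨d, hd, hsd⟩ := hKb s hs
    have hz := hrev e he heD heQ
    have hzD : (s * e * s⁻¹)⁻¹ ∈ D := D.inv_mem (hN.conj_mem e he s)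
    have hzD' : (s * e * s⁻¹)⁻¹ ∉ D' := by
      rw [D'.inv_mem_iff]; exact hconj s e heD
    obtain ⟨n, hn, h⟩ := hA _ hzD hzD' hz d hd
    have h2 : s⁻¹ * ((s * e * s⁻¹)⁻¹) ^ n ∈ Q := by
      rcases hsd with h3 | h3
      · have := hQ.1 _ h3 _ h
        have e' : s⁻¹ * d * (d⁻¹ * (s * e * s⁻¹)⁻¹ ^ n) = s⁻¹ * (s * e * s⁻¹)⁻¹ ^ n := by group
        rwa [e'] at this
      · rw [h3]; rw [h3] at h; exact h
    have h3 := hQ.1 _ (hQ.1 _ hsQ _ (pc_pow hQ heQ hn)) _ h2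
    have e' : s * e ^ n * (s⁻¹ * (s * e * s⁻¹)⁻¹ ^ n) = 1 := by
      rw [inv_pow, conj_pow]; group
    rw [e'] at h3
    exact hQ.2.2.1 h3
  have htK : t ∉ K := by
    intro htK
    rcases hQ.2.1 t with h | h | h
    · exact hno t htK h ht
    · exact hno t⁻¹ (K.inv_mem htK) h ht'
    · have := ht e he heD heQ
      rw [h] at this
      simp only [one_mul, inv_one, mul_one] at this
      exact hQ.2.2.2 _ heQ this
  have hKD : ∀ v ∈ K, v ∈ D := by
    intro v hv
    by_contra hvD
    obtain ⟨w, hw, m, n, hm, hn, h⟩ := hq v hvD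
    have hwK : w ∈ K := by
      rcases hw with rfl | rfl
      · exact hv
      · exact K.inv_mem hv
    have := K.mul_mem (K.pow_mem hwK n) (hDK h)
    rw [mul_inv_cancel_left] at this
    exact htK (cvx_root hQ hK hm this)
  intro x hx c hc h
  exact hKD x (hK x hx c (hDK hc) h)

end L2


section Main
universe u

def FlipP {G : Type u} [Group G] (P : Set G) : Prop :=
  ∀ Q : Set G, IsPosCone Q → ∀ x ∈ P, ∀ y ∈ P, (∀ K, Cvx P K → (x ∈ K ↔ y ∈ K)) → (x ∈ Q ↔ y ∈ Q)

variable {G : Type u} [Group G]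

theorem max_proper {P : Set G} (hP : IsPosCone P) {F : Finset G} (hF : Iso P F)
    (hne : (⊥ : Subgroup G) ≠ ⊤) :
    ∃ D : Subgroup G, Cvx P D ∧ D ≠ ⊤ ∧ ∀ K, Cvx P K → K ≠ ⊤ → K ≤ D := by
  classical
  let S : Set (Subgroup G) := {K | Cvx P K ∧ K ≠ ⊤}
  obtain ⟨hcv, hmem⟩ := cvx_sSup hP (S := S) ⟨⊥, cvx_bot hP, hne⟩ (fun K hK => hK.1)
  refine ⟨sSup S, hcv, ?_, fun K hK hKt => le_sSup (show K ∈ S from ⟨hK, hKt⟩)⟩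
  intro htop
  have key : ∀ F' : Finset G, ∃ K, Cvx P K ∧ K ≠ ⊤ ∧ ∀ f ∈ F', f ∈ K := by
    intro F'
    induction F' using Finset.induction_on with
    | empty => exact ⟨⊥, cvx_bot hP, hne, by simp⟩
    | insert a s _ ih =>
      obtain ⟨K, hK, hKt, hKs⟩ := ih
      obtain ⟨L, hL, haL⟩ := (hmem a).mp (by rw [htop]; trivial)
      rcases cvx_nested hP hK hL.1 with h | h
      · refine ⟨L, hL.1, hL.2, fun f hf => ?_⟩
        rcases Finset.mem_insert.mp hf with rfl | hf
        · exact haL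
        · exact h (hKs f hf)
      · refine ⟨K, hK, hKt, fun f hf => ?_⟩
        rcases Finset.mem_insert.mp hf with rfl | hf
        · exact h haL
        · exact hKs f hf
  obtain ⟨K, hK, hKt, hKF⟩ := key F
  obtain ⟨x, hx⟩ : ∃ x, x ∉ K := by
    by_contra hcon; push Not at hcon
    exact hKt (eq_top_iff.mpr fun x _ => hcon x)
  obtain ⟨f, hf, -, hfK⟩ := iso_jump hP hF hK (cvx_top P) (x := x) trivial hx
  exact hfK (hKF f hf)

theorem conr_restrict {P : Set G} (hC : Conr P) (D : Subgroup G) : Conr ((↑) ⁻¹' P : Set D) := by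
  intro f hf g hg
  obtain ⟨n, hn, h⟩ := hC f hf g hg
  exact ⟨n, hn, h⟩

theorem cvx_map {P : Set G} {D : Subgroup G} (hD : Cvx P D) {K : Subgroup D}
    (hK : Cvx ((↑) ⁻¹' P : Set D) K) : Cvx P (K.map D.subtype) := by
  rintro x hx _ ⟨c, hc, rfl⟩ h
  have hxD : x ∈ D := hD x hx c c.2 h
  exact ⟨⟨x, hxD⟩, hK ⟨x, hxD⟩ hx c hc h, rfl⟩

theorem cvx_subgroupOf {P : Set G} {D : Subgroup G} {K : Subgroup G}
    (hK : Cvx P K) : Cvx ((↑) ⁻¹' P : Set D) (K.subgroupOf D) := by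
  intro x hx c hc h
  rw [Subgroup.mem_subgroupOf] at *
  exact hK x hx c hc h

theorem sub_jump {P : Set G} (hP : IsPosCone P) (hC : Conr P) {F : Finset G} (hF : Iso P F)
    {D : Subgroup G} (hD : Cvx P D) (hDb : D ≠ ⊥) (hfl : FlipP ((↑) ⁻¹' P : Set D)) :
    ∃ D' : Subgroup G, D' ≤ D ∧ (∃ e ∈ D, e ∉ D') ∧ Cvx P D' ∧
      (∀ K, Cvx P K → K ≤ D → (∃ e ∈ D, e ∉ K) → K ≤ D') ∧
      (∀ a ∈ D, ∀ b ∈ D, (b * a)⁻¹ * (a * b) ∈ D') ∧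
      (∀ x ∈ P, x ∈ D → x ∉ D' → ∀ y ∈ P, y ∈ D → y ∉ D' →
        ∃ m n : ℕ, 0 < m ∧ 0 < n ∧ (y ^ n)⁻¹ * x ^ m ∈ D') ∧
      (∀ Q, IsPosCone Q → ∀ x ∈ P, x ∈ D → x ∉ D' → ∀ y ∈ P, y ∈ D → y ∉ D' →
        (x ∈ Q ↔ y ∈ Q)) := by
  obtain ⟨F', -, hF'⟩ := iso_sub hP hF hD
  have hP1 := pc_restrict hP D
  have hC1 := conr_restrict hC D
  obtain ⟨b, hb⟩ := Subgroup.ne_bot_iff_exists_ne_one.mp hDb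
  obtain ⟨D1, hD1, hD1t, hmax⟩ := max_proper hP1 hF' (by
    intro h
    have : b ∈ (⊥ : Subgroup D) := by rw [h]; trivial
    exact hb (Subgroup.mem_bot.mp this))
  obtain ⟨hN1, hc1, hq1⟩ := jump_iso hP1 hC1 hF' hD1 hmax
  have hm : ∀ z (hz : z ∈ D), z ∈ D1.map D.subtype ↔ (⟨z, hz⟩ : D) ∈ D1 := by
    intro z hz
    constructor
    · rintro ⟨w, hw, rfl⟩; exact hw
    · intro h; exact ⟨_, h, rfl⟩
  refine ⟨D1.map D.subtype, Subgroup.map_subtype_le D1, ?_, cvx_map hD hD1, ?_, ?_, ?_, ?_⟩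
  · obtain ⟨x, hx⟩ : ∃ x, x ∉ D1 := by
      by_contra hcon; push Not at hcon
      exact hD1t (eq_top_iff.mpr fun x _ => hcon x)
    exact ⟨x, x.2, by rw [hm x x.2]; exact hx⟩
  · intro K hK hKD ⟨e, he, heK⟩ x hx
    rw [hm x (hKD hx)]
    refine hmax _ (cvx_subgroupOf hK) ?_ (by rw [Subgroup.mem_subgroupOf]; exact hx)
    intro h
    have : (⟨e, he⟩ : D) ∈ K.subgroupOf D := by rw [h]; trivial
    rw [Subgroup.mem_subgroupOf] at this
    exact heK this
  · intro a ha b hb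
    exact ⟨_, hc1 ⟨a, ha⟩ ⟨b, hb⟩, rfl⟩
  · intro x hx hxD hxD' y hy hyD hyD'
    rw [hm x hxD] at hxD'
    rw [hm y hyD] at hyD'
    obtain ⟨m, n, h1, h2, h3⟩ := hq1 ⟨x, hxD⟩ hx hxD' ⟨y, hyD⟩ hy hyD'
    exact ⟨m, n, h1, h2, _, h3, rfl⟩
  · intro Q hQ x hx hxD hxD' y hy hyD hyD'
    rw [hm x hxD] at hxD'
    rw [hm y hyD] at hyD'
    refine hfl _ (pc_restrict hQ D) ⟨x, hxD⟩ hx ⟨y, hyD⟩ hy ?_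
    intro K hK
    by_cases hKt : K = ⊤
    · rw [hKt]; simp
    · have := hmax K hK hKt
      exact ⟨fun h => absurd (this h) hxD', fun h => absurd (this h) hyD'⟩

theorem s2 {P : Set G} (hP : IsPosCone P) {D D' : Subgroup G} (hle : D' ≤ D) (hD' : Cvx P D')
    {Q : Set G} (hQ : IsPosCone Q)
    (S1 : ∀ x ∈ P, x ∈ D → x ∉ D' → ∀ y ∈ P, y ∈ D → y ∉ D' → (x ∈ Q ↔ y ∈ Q))
    {x c : G} (hx : x ∈ Q) (hxD : x ∈ D) (hc : c ∈ D') (h : x⁻¹ * c ∈ Q) : x ∈ D' := by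
  by_contra hxD'
  have hx1 : x ≠ 1 := by rintro rfl; exact hxD' D'.one_mem
  by_cases hxP : x ∈ P
  · have h1 : c⁻¹ * x ∈ P := cvx_absorb_left hP hD' hxP hxD' (D'.inv_mem hc)
    have h2 := (S1 x hxP hxD hxD' _ h1 (D.mul_mem (D.inv_mem (hle hc)) hxD)
      (by rwa [D'.mul_mem_cancel_left (D'.inv_mem hc)])).mp hx
    apply hQ.2.2.2 _ h2
    simpa using h
  · have hxP' := pc_of_not hP hxP hx1
    have hxi : x⁻¹ ∉ D' := by rwa [D'.inv_mem_iff]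
    have h1 : x⁻¹ * c ∈ P := cvx_absorb_right hP hD' hxP' hxi hc
    have h2 := (S1 _ h1 (D.mul_mem (D.inv_mem hxD) (hle hc))
      (by rwa [D'.mul_mem_cancel_right hc]) _ hxP' (D.inv_mem hxD) hxi).mp h
    exact hQ.2.2.2 _ hx h2

theorem pc_conj {P : Set G} (hP : IsPosCone P) (g : G) : IsPosCone {z | g * z * g⁻¹ ∈ P} := by
  refine ⟨fun a ha b hb => ?_, fun z => ?_, ?_, fun z hz => ?_⟩
  · simp only [Set.mem_ofPred_eq] at *
    have := hP.1 _ ha _ hb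
    have e : g * a * g⁻¹ * (g * b * g⁻¹) = g * (a * b) * g⁻¹ := by group
    rwa [e] at this
  · simp only [Set.mem_ofPred_eq]
    rcases hP.2.1 (g * z * g⁻¹) with h | h | h
    · exact Or.inl h
    · right; left; rwa [conj_inv] at h
    · right; right; simpa using h
  · simpa using hP.2.2.1
  · simp only [Set.mem_ofPred_eq] at *
    rw [← conj_inv]
    exact hP.2.2.2 _ hz

theorem flip_normal {P : Set G} (hP : IsPosCone P) {D D' : Subgroup G} (hN : D.Normal)
    (hD : Cvx P D) (hle : D' ≤ D)
    (he : ∃ e ∈ D, e ∉ D') (hD' : Cvx P D')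
    (hmax : ∀ K, Cvx P K → K ≤ D → (∃ e ∈ D, e ∉ K) → K ≤ D')
    (S1 : ∀ Q, IsPosCone Q → ∀ x ∈ P, x ∈ D → x ∉ D' → ∀ y ∈ P, y ∈ D → y ∉ D' →
        (x ∈ Q ↔ y ∈ Q)) : D'.Normal := by
  refine ⟨fun n hn g => ?_⟩
  have hK : Cvx P (D'.map (MulAut.conj g).toMonoidHom) := by
    rintro x hx _ ⟨c, hc, rfl⟩ h
    simp only [MulEquiv.toMonoidHom_eq_coe, MonoidHom.coe_coe, MulAut.conj_apply] at h
    have hxD : x ∈ D := hD x hx _ (hN.conj_mem c (hle hc) g) h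
    refine ⟨g⁻¹ * x * g, ?_, by simp [mul_assoc]⟩
    refine s2 hP hle hD' (pc_conj hP g) (S1 _ (pc_conj hP g)) ?_ ?_ hc ?_
    · have e : g * (g⁻¹ * x * g) * g⁻¹ = x := by group
      simp only [Set.mem_ofPred_eq]
      rwa [e]
    · simpa using hN.conj_mem x hxD g⁻¹
    · have e : g * ((g⁻¹ * x * g)⁻¹ * c) * g⁻¹ = x⁻¹ * (g * c * g⁻¹) := by group
      simp only [Set.mem_ofPred_eq]
      rwa [e]
  refine hmax _ hK ?_ ?_ ⟨n, hn, by simp⟩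
  · rintro _ ⟨c, hc, rfl⟩
    exact hN.conj_mem c (hle hc) g
  · obtain ⟨e, he, heD⟩ := he
    refine ⟨g * e * g⁻¹, hN.conj_mem e he g, ?_⟩
    rintro ⟨c, hc, h⟩
    simp only [MulEquiv.toMonoidHom_eq_coe, MonoidHom.coe_coe, MulAut.conj_apply] at h
    have : c = e := by simpa using h
    exact heD (this ▸ hc)

theorem no_preserve {P : Set G} (hP : IsPosCone P) {F : Finset G} (hF : Iso P F)
    {D D' : Subgroup G} (hN : D.Normal) (hN' : D'.Normal)
    (hD : Cvx P D) (hDt : D ≠ ⊤) (hle : D' ≤ D)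
    (he : ∃ e ∈ D, e ∉ D') (hD' : Cvx P D')
    (hqc : ∀ a b, (b * a)⁻¹ * (a * b) ∈ D)
    (hq : ∀ x ∈ P, x ∉ D → ∀ y ∈ P, y ∉ D → ∃ m n : ℕ, 0 < m ∧ 0 < n ∧ (y ^ n)⁻¹ * x ^ m ∈ D)
    (hc1 : ∀ a ∈ D, ∀ b ∈ D, (b * a)⁻¹ * (a * b) ∈ D')
    (hq1 : ∀ x ∈ P, x ∈ D → x ∉ D' → ∀ y ∈ P, y ∈ D → y ∉ D' →
        ∃ m n : ℕ, 0 < m ∧ 0 < n ∧ (y ^ n)⁻¹ * x ^ m ∈ D')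
    (hpres : ∀ g, ∀ x ∈ P, x ∈ D → x ∉ D' → g * x * g⁻¹ ∈ P) : False := by
  obtain ⟨F', hF'⟩ := iso_quot hP hF hD'
  have hPq := pc_qcone hP hD'
  have hm : ∀ x : G, (x : G ⧸ D') ∈ D.map (QuotientGroup.mk' D') ↔ x ∈ D := by
    intro x
    constructor
    · rintro ⟨y, hy, h⟩
      simp only [QuotientGroup.mk'_apply] at h
      rw [QuotientGroup.eq] at h
      have := D.mul_mem hy (hle h)
      rwa [mul_inv_cancel_left] at this
    · intro h; exact ⟨x, h, rfl⟩
  have hconj : ∀ g z : G, z ∉ D' → g * z * g⁻¹ ∉ D' := by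
    intro g z hz h
    apply hz
    have := hN'.conj_mem _ h g⁻¹
    have e : g⁻¹ * (g * z * g⁻¹) * g⁻¹⁻¹ = z := by group
    rwa [e] at this
  refine ni_main hPq ?_ (B := D.map (QuotientGroup.mk' D'))
    (hN.map _ (QuotientGroup.mk'_surjective D')) ?_ ?_ ?_ ?_ ?_ ?_ ?_ hF'
  · intro g x hx
    obtain ⟨g, rfl⟩ := QuotientGroup.mk_surjective g
    obtain ⟨x, rfl⟩ := QuotientGroup.mk_surjective x
    rw [← QuotientGroup.mk_inv, ← QuotientGroup.mk_mul, ← QuotientGroup.mk_mul]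
    rw [qcone_mem hP hD'] at hx ⊢
    refine ⟨?_, hconj g x hx.2⟩
    by_cases hxD : x ∈ D
    · exact hpres g x hx.1 hxD hx.2
    · have := cvx_absorb_right hP hD hx.1 hxD (hqc (x⁻¹ * g) (x * g⁻¹ * x⁻¹ * x))
      have h2 : (g⁻¹ * x⁻¹⁻¹)⁻¹ * (x⁻¹⁻¹ * g⁻¹) ∈ D := hqc _ _
      have h3 : x⁻¹ * (g * x * g⁻¹) ∈ D := by
        have e : (g⁻¹ * x⁻¹⁻¹)⁻¹ * (x⁻¹⁻¹ * g⁻¹) = x⁻¹ * (g * x * g⁻¹) := by group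
        rwa [e] at h2
      have h4 := cvx_absorb_right hP hD hx.1 hxD h3
      rwa [mul_inv_cancel_left] at h4
  · intro x hx c hc h
    obtain ⟨x, rfl⟩ := QuotientGroup.mk_surjective x
    obtain ⟨c, rfl⟩ := QuotientGroup.mk_surjective c
    rw [← QuotientGroup.mk_inv, ← QuotientGroup.mk_mul] at h
    rw [qcone_mem hP hD'] at hx h
    rw [hm] at hc ⊢
    exact hD x hx.1 c hc h.1
  · intro x hx y hy
    obtain ⟨x, rfl⟩ := QuotientGroup.mk_surjective x
    obtain ⟨y, rfl⟩ := QuotientGroup.mk_surjective y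
    rw [hm] at hx hy
    rw [← QuotientGroup.mk_mul, ← QuotientGroup.mk_mul, QuotientGroup.eq]
    exact hc1 y hy x hx
  · intro x hx y hy hxP hyP
    obtain ⟨x, rfl⟩ := QuotientGroup.mk_surjective x
    obtain ⟨y, rfl⟩ := QuotientGroup.mk_surjective y
    rw [hm] at hx hy
    rw [qcone_mem hP hD'] at hxP hyP
    obtain ⟨m, n, h1, h2, h3⟩ := hq1 x hxP.1 hx hxP.2 y hyP.1 hy hyP.2
    refine ⟨m, n, h1, h2, ?_⟩
    rw [← QuotientGroup.mk_pow, ← QuotientGroup.mk_pow, eq_comm, QuotientGroup.eq]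
    exact h3
  · intro a b
    obtain ⟨a, rfl⟩ := QuotientGroup.mk_surjective a
    obtain ⟨b, rfl⟩ := QuotientGroup.mk_surjective b
    exact (hm _).mpr (hqc a b)
  · intro x hxP hx y hyP hy
    obtain ⟨x, rfl⟩ := QuotientGroup.mk_surjective x
    obtain ⟨y, rfl⟩ := QuotientGroup.mk_surjective y
    rw [hm] at hx hy
    rw [qcone_mem hP hD'] at hxP hyP
    obtain ⟨m, n, h1, h2, h3⟩ := hq x hxP.1 hx y hyP.1 hy
    exact ⟨m, n, h1, h2, (hm _).mpr h3⟩
  · intro h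
    apply hDt
    rw [eq_top_iff]
    intro x _
    rw [← hm x, h]
    trivial
  · intro h
    obtain ⟨e, he, heD⟩ := he
    rw [← hm e, h, Subgroup.mem_bot, QuotientGroup.eq_one_iff] at he
    exact heD he

theorem step_cvx {P : Set G} (hP : IsPosCone P) (hC : Conr P) {F : Finset G} (hF : Iso P F)
    {D : Subgroup G} (hD : Cvx P D) (hDt : D ≠ ⊤) (hfl : FlipP ((↑) ⁻¹' P : Set D))
    (hN : D.Normal) (hqc : ∀ a b, (b * a)⁻¹ * (a * b) ∈ D)
    (hq : ∀ x ∈ P, x ∉ D → ∀ y ∈ P, y ∉ D → ∃ m n : ℕ, 0 < m ∧ 0 < n ∧ (y ^ n)⁻¹ * x ^ m ∈ D)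
    {Q : Set G} (hQ : IsPosCone Q) : Cvx Q D := by
  by_cases hDb : D = ⊥
  · rw [hDb]; exact cvx_bot hQ
  obtain ⟨D', hle, he, hD', hmax, hc1, hq1, S1⟩ := sub_jump hP hC hF hD hDb hfl
  have hN' := flip_normal hP hN hD hle he hD' hmax S1
  have hconj : ∀ g z : G, z ∉ D' → g * z * g⁻¹ ∉ D' := by
    intro g z hz h
    apply hz
    have := hN'.conj_mem _ h g⁻¹
    have e : g⁻¹ * (g * z * g⁻¹) * g⁻¹⁻¹ = z := by group
    rwa [e] at this
  have hne1 : ∀ z : G, z ∉ D' → z ≠ 1 := by rintro z hz rfl; exact hz D'.one_mem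
  by_cases hpres : ∀ g, ∀ x ∈ P, x ∈ D → x ∉ D' → g * x * g⁻¹ ∈ P
  · exact (no_preserve hP hF hN hN' hD hDt hle he hD' hqc hq hc1 hq1 hpres).elim
  push Not at hpres
  obtain ⟨t, x0, hx0, hx0D, hx0D', hx0t⟩ := hpres
  have hrev : ∀ x ∈ P, x ∈ D → x ∉ D' → (t * x * t⁻¹)⁻¹ ∈ P := by
    intro x hx hxD hxD'
    apply pc_of_not hP
    · intro h
      exact hx0t ((S1 _ (pc_conj hP t) x hx hxD hxD' x0 hx0 hx0D hx0D').mp h)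
    · exact hne1 _ (hconj t x hxD')
  obtain ⟨e, he, heD⟩ := he
  have S2 : ∀ x c : G, x ∈ Q → x ∈ D → c ∈ D' → x⁻¹ * c ∈ Q → x ∈ D' :=
    fun x c h1 h2 h3 h4 => s2 hP hle hD' hQ (S1 Q hQ) h1 h2 h3 h4
  have hni : ∀ z, z ∉ D' → z⁻¹ ∉ D' := fun z hz => by rwa [D'.inv_mem_iff]
  refine l2_main hQ hN hN' ?_ (t := t) ?_ he heD ?_
  · intro z hz hzD' hzQ d hd
    by_cases hdQ : d ∈ Q
    · have habs : ∀ δ ∈ D', δ * z ∈ Q := by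
        intro δ hδ
        by_contra hcon
        have h1 := pc_of_not hQ hcon (hne1 _ (by rwa [D'.mul_mem_cancel_left hδ]))
        exact hzD' (S2 z δ⁻¹ hzQ hz (D'.inv_mem hδ) (by simpa using h1))
      by_cases hdD' : d ∈ D'
      · exact ⟨1, one_pos, by rw [pow_one]; exact habs _ (D'.inv_mem hdD')⟩
      · have hmn : ∃ m n : ℕ, 0 < m ∧ 0 < n ∧ (d ^ n)⁻¹ * z ^ m ∈ D' := by
          by_cases hzP : z ∈ P
          · have hdP : d ∈ P := by
              by_contra hdP
              have := pc_of_not hP hdP (hne1 d hdD')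
              have := (S1 Q hQ z hzP hz hzD' _ this (D.inv_mem hd) (hni _ hdD')).mp hzQ
              exact hQ.2.2.2 _ hdQ this
            exact hq1 z hzP hz hzD' d hdP hd hdD'
          · have hzP' := pc_of_not hP hzP (hne1 z hzD')
            have hdP : d⁻¹ ∈ P := by
              apply pc_of_not hP _ (hne1 d hdD')
              intro hdP
              have := (S1 Q hQ d hdP hd hdD' _ hzP' (D.inv_mem hz) (hni _ hzD')).mp hdQ
              exact hQ.2.2.2 _ hzQ this
            obtain ⟨m, n, h1, h2, h3⟩ := hq1 _ hzP' (D.inv_mem hz) (hni _ hzD') _ hdP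
              (D.inv_mem hd) (hni _ hdD')
            refine ⟨m, n, h1, h2, ?_⟩
            have h4 := hN'.conj_mem _ (D'.inv_mem h3) (d ^ n)⁻¹
            have e : (d ^ n)⁻¹ * (((d⁻¹ ^ n)⁻¹ * z⁻¹ ^ m))⁻¹ * (d ^ n)⁻¹⁻¹ = (d ^ n)⁻¹ * z ^ m := by
              rw [inv_pow, inv_pow]; group
            rwa [e] at h4
        obtain ⟨m, n, hm, hn, h⟩ := hmn
        obtain ⟨k, rfl⟩ : ∃ k, n = k + 1 := ⟨n - 1, by omega⟩
        refine ⟨m + 1, by omega, ?_⟩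
        have h1 := habs _ h
        have e : d⁻¹ * z ^ (m + 1) = d ^ k * ((d ^ (k + 1))⁻¹ * z ^ m * z) := by
          rw [pow_succ z, pow_succ' d]; group
        rw [e]
        rcases Nat.eq_zero_or_pos k with h0 | h0
        · rw [h0] at h1 ⊢; rw [pow_zero, one_mul]; exact h1
        · exact hQ.1 _ (pc_pow hQ hdQ h0) _ h1
    · refine ⟨1, one_pos, ?_⟩
      rw [pow_one]
      by_cases hd1 : d = 1
      · rw [hd1]; simpa using hzQ
      · exact hQ.1 _ (pc_of_not hQ hdQ hd1) _ hzQ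
  · intro z hz hzD' hzQ
    have hcz := hconj t z hzD'
    have hczD := hN.conj_mem z hz t
    by_cases hzP : z ∈ P
    · exact (S1 Q hQ z hzP hz hzD' _ (hrev z hzP hz hzD') (D.inv_mem hczD) (hni _ hcz)).mp hzQ
    · have hzP' := pc_of_not hP hzP (hne1 z hzD')
      have h1 := hrev _ hzP' (D.inv_mem hz) (hni _ hzD')
      rw [← conj_inv, inv_inv] at h1
      apply pc_of_not hQ _ (hne1 _ hcz)
      intro h2
      have := (S1 Q hQ _ h1 hczD hcz _ hzP' (D.inv_mem hz) (hni _ hzD')).mp h2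
      exact hQ.2.2.2 _ hzQ this
  · have htD : t ∉ D := by
      intro htD
      have h1 := hrev x0 hx0 hx0D hx0D'
      have h2 := hc1 t htD x0 hx0D
      have h3 := hc1 x0⁻¹ (D.inv_mem hx0D) t⁻¹ (D.inv_mem htD)
      have e : (t⁻¹ * x0⁻¹)⁻¹ * (x0⁻¹ * t⁻¹) = x0 * t * x0⁻¹ * t⁻¹ := by group
      rw [e] at h3
      have h4 := cvx_absorb_right hP hD' hx0 hx0D' (hN'.conj_mem _ h3 x0⁻¹)
      have h5 := hP.1 _ h4 _ h1
      have h6 := cvx_absorb_left hP hD' hx0 hx0D' (D'.inv_mem h3)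
      have e2 : (x0 * t * x0⁻¹ * t⁻¹)⁻¹ * x0 = t * x0 * t⁻¹ := by group
      rw [e2] at h6
      exact hP.2.2.2 _ h6 h1
    intro v hv
    have hv1 : v ≠ 1 := by rintro rfl; exact hv D.one_mem
    have ht1 : t ≠ 1 := by rintro rfl; exact htD D.one_mem
    have hw : ∃ w, (w = v ∨ w = v⁻¹) ∧ w ∈ P := by
      by_cases h : v ∈ P
      · exact ⟨v, Or.inl rfl, h⟩
      · exact ⟨v⁻¹, Or.inr rfl, pc_of_not hP h hv1⟩
    obtain ⟨w, hwv, hwP⟩ := hw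
    have hwD : w ∉ D := by
      rcases hwv with rfl | rfl
      · exact hv
      · rwa [D.inv_mem_iff]
    by_cases htP : t ∈ P
    · exact ⟨w, hwv, hq t htP htD w hwP hwD⟩
    · obtain ⟨m, n, h1, h2, h3⟩ := hq _ (pc_of_not hP htP ht1) (by rwa [D.inv_mem_iff]) w hwP hwD
      refine ⟨w⁻¹, ?_, m, n, h1, h2, ?_⟩
      · rcases hwv with rfl | rfl
        · exact Or.inr rfl
        · exact Or.inl (inv_inv _)
      · have h4 := hN.conj_mem _ (D.inv_mem h3) (w ^ n)
        have e : w ^ n * ((w ^ n)⁻¹ * t⁻¹ ^ m)⁻¹ * (w ^ n)⁻¹ = (w⁻¹ ^ n)⁻¹ * t ^ m := by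
          rw [inv_pow, inv_pow]; group
        rwa [e] at h4

end Main

theorem flip_main.{u} (n : ℕ) : ∀ (G : Type u) [Group G] (P : Set G) (F : Finset G), F.card ≤ n →
    IsPosCone P → Conr P → Iso P F → FlipP P := by
  induction n with
  | zero =>
    intro G _ P F hn hP hC hF Q hQ x hx y hy hxy
    have : F = ∅ := Finset.card_eq_zero.mp (by omega)
    obtain ⟨f, hf, -⟩ := iso_jump hP hF (cvx_bot hP) (cvx_top P) (x := x) trivial
      (fun h => pc_ne hP hx (Subgroup.mem_bot.mp h))
    rw [this] at hf
    simp at hf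
  | succ n ih =>
    intro G _ P F hn hP hC hF Q hQ x hx y hy hxy
    obtain ⟨D, hD, hDt, hmax⟩ := max_proper hP hF (by
      intro h
      have : x ∈ (⊥ : Subgroup G) := by rw [h]; trivial
      exact pc_ne hP hx (Subgroup.mem_bot.mp this))
    obtain ⟨z, hz⟩ : ∃ x, x ∉ D := by
      by_contra hcon; push Not at hcon
      exact hDt (eq_top_iff.mpr fun x _ => hcon x)
    obtain ⟨f0, hf0, -, hf0D⟩ := iso_jump hP hF hD (cvx_top P) (x := z) trivial hz
    obtain ⟨F', hFF', hF'⟩ := iso_sub hP hF hD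
    have hcard : F'.card ≤ n := by
      classical
      have h1 : F'.card = (F'.image (fun f : D => (f : G))).card :=
        (Finset.card_image_of_injective _ Subtype.val_injective).symm
      have h2 : F'.image (fun f : D => (f : G)) ⊂ F := by
        rw [Finset.ssubset_iff_of_subset]
        · refine ⟨f0, hf0, ?_⟩
          rw [Finset.mem_image]
          rintro ⟨a, -, rfl⟩
          exact hf0D a.2
        · intro a ha
          rw [Finset.mem_image] at ha
          obtain ⟨a, ha, rfl⟩ := ha
          exact (hFF' a).mp ha
      have := Finset.card_lt_card h2
      omega
    have hfl := ih D _ F' hcard (pc_restrict hP D) (conr_restrict hC D) hF'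
    by_cases hxD : x ∈ D
    · have hyD : y ∈ D := (hxy D hD).mp hxD
      refine hfl _ (pc_restrict hQ D) ⟨x, hxD⟩ hx ⟨y, hyD⟩ hy ?_
      intro K hK
      have h1 := hxy _ (cvx_map hD hK)
      have hm : ∀ z (hz : z ∈ D), z ∈ K.map D.subtype ↔ (⟨z, hz⟩ : D) ∈ K := by
        intro z hz
        constructor
        · rintro ⟨w, hw, rfl⟩; exact hw
        · intro h; exact ⟨_, h, rfl⟩
      rwa [hm x hxD, hm y hyD] at h1
    · have hyD : y ∉ D := fun h => hxD ((hxy D hD).mpr h)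
      obtain ⟨hN, hqc, hq⟩ := jump_iso hP hC hF hD hmax
      have hcv := step_cvx hP hC hF hD hDt hfl hN hqc hq hQ
      obtain ⟨m, k, hm, hk, h⟩ := hq x hx hxD y hy hyD
      rw [← pc_pow_iff hQ hm (x := x), ← pc_pow_iff hQ hk (x := y)]
      have hyk : y ^ k ∉ D := fun h => hyD (cvx_root hP hD hk h)
      have := cvx_absorb_iff hQ hcv hyk h
      rwa [mul_inv_cancel_left] at this

theorem cones_finite {G : Type*} [Group G] {P : Set G} (hP : IsPosCone P) (hC : Conr P)
    {F : Finset G} (hF : Iso P F) : {Q : Set G | IsPosCone Q}.Finite := by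
  have hfl := flip_main F.card G P F le_rfl hP hC hF
  have hrep : ∀ x ∈ P, ∃ f ∈ F, ∀ Q, IsPosCone Q → (x ∈ Q ↔ f ∈ Q) := by
    intro x hx
    have hL : Cvx P (sInf {K | Cvx P K ∧ x ∈ K}) := cvx_sInf fun K hK => hK.1
    obtain ⟨hK, hKm⟩ := cvx_sSup hP (S := {K | Cvx P K ∧ x ∉ K})
      ⟨⊥, cvx_bot hP, fun h => pc_ne hP hx (Subgroup.mem_bot.mp h)⟩ (fun K hK => hK.1)
    obtain ⟨f, hf, hfL, hfK⟩ := iso_jump hP hF hK hL (x := x)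
      (by rw [Subgroup.mem_sInf]; exact fun K hK => hK.2)
      (by rw [hKm]; rintro ⟨K, hK, h⟩; exact hK.2 h)
    refine ⟨f, hf, fun Q hQ => hfl Q hQ x hx f (hF.1 f hf) ?_⟩
    intro M hM
    constructor
    · intro h
      rw [Subgroup.mem_sInf] at hfL
      exact hfL M ⟨hM, h⟩
    · intro h
      by_contra hxM
      exact hfK ((hKm f).mpr ⟨M, ⟨hM, hxM⟩, h⟩)
  have hsub : ∀ Q R : Set G, IsPosCone Q → IsPosCone R → Q ∩ F = R ∩ F → Q ⊆ R := by
    intro Q R hQ hR h z hz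
    have hpos : ∀ x ∈ P, (x ∈ Q ↔ x ∈ R) := by
      intro x hx
      obtain ⟨f, hf, hfx⟩ := hrep x hx
      rw [hfx Q hQ, hfx R hR]
      have := Set.ext_iff.mp h f
      simpa [hf] using this
    by_cases hzP : z ∈ P
    · exact (hpos z hzP).mp hz
    · have hz1 := pc_ne hQ hz
      have h1 := hpos _ (pc_of_not hP hzP hz1)
      by_contra hzR
      exact hQ.2.2.2 _ hz (h1.mpr (pc_of_not hR hzR hz1))
  refine Set.Finite.of_finite_image (f := fun Q : Set G => Q ∩ (F : Set G)) ?_ ?_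
  · refine (F.finite_toSet.finite_subsets).subset ?_
    rintro _ ⟨Q, -, rfl⟩
    exact Set.inter_subset_right
  · intro Q hQ R hR h
    exact Set.Subset.antisymm (hsub Q R hQ hR h) (hsub R Q hR hQ h.symm)


section Soul
variable {Γ : Type*} [Group Γ] [LinearOrder Γ] [MulLeftMono Γ]

theorem pc_ord : IsPosCone {g : Γ | 1 < g} := by
  refine ⟨fun a ha b hb => one_lt_mul' ha hb, fun g => ?_, lt_irrefl _, fun g hg hg' => ?_⟩
  · simp only [Set.mem_ofPred_eq, Left.one_lt_inv_iff]
    rcases lt_trichotomy 1 g with h | h | h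
    · exact Or.inl h
    · exact Or.inr (Or.inr h.symm)
    · exact Or.inr (Or.inl h)
  · simp only [Set.mem_ofPred_eq, Left.one_lt_inv_iff] at *
    exact lt_asymm hg hg'

theorem cvx_iff (K : Subgroup Γ) : IsConvexSubgroup K ↔ Cvx {g : Γ | 1 < g} K := by
  constructor
  · intro h x hx c hc hxc
    simp only [Set.mem_ofPred_eq, lt_inv_mul_iff_lt] at hxc
    exact h 1 K.one_mem c hc x hx hxc
  · intro h a ha b hb f haf hfb
    have h1 : a⁻¹ * f ∈ K := h (a⁻¹ * f) (by simpa using haf) (a⁻¹ * b)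
      (K.mul_mem (K.inv_mem ha) hb) (by simp [mul_assoc, hfb])
    rwa [K.mul_mem_cancel_left (K.inv_mem ha)] at h1

/-- There is a nontrivial convex Conradian subgroup. -/
theorem soul_nontriv [Nontrivial Γ] {F : Finset Γ} (hF : Iso {g : Γ | 1 < g} F) :
    ∃ S : Subgroup Γ, S ≠ ⊥ ∧ IsConvexSubgroup S ∧ IsConradianOn S := by
  obtain ⟨p, hp⟩ : ∃ p : Γ, 1 < p := by
    obtain ⟨x, hx⟩ := exists_ne (1 : Γ)
    rcases lt_or_gt_of_ne hx with h | h
    · exact ⟨x⁻¹, by simpa using h⟩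
    · exact ⟨x, h⟩
  obtain ⟨ε, hε, hεF⟩ : ∃ ε : Γ, 1 < ε ∧ ∀ f ∈ F, ε ≤ f := by
    rcases F.eq_empty_or_nonempty with h | h
    · exact ⟨p, hp, by simp [h]⟩
    · exact ⟨F.min' h, hF.1 _ (F.min'_mem h), fun f hf => F.min'_le f hf⟩
  have hright : ∀ h : Γ, 1 < h → h < ε → ∀ x y : Γ, x < y → x * h < y * h := by
    intro h h1 hh x y hxy
    have hQ := hF.2 _ (pc_conj pc_ord h⁻¹) (by
      intro f hf
      have h2 : h < f * h := hh.trans_le ((hεF f hf).trans (lt_mul_of_one_lt_right' f h1).le)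
      simp only [Set.mem_ofPred_eq, inv_inv, mul_assoc, lt_inv_mul_iff_lt]
      exact h2)
    have h3 : x⁻¹ * y ∈ {g : Γ | 1 < g} := by simpa using hxy
    rw [← hQ] at h3
    simp only [Set.mem_ofPred_eq, inv_inv] at h3
    have e : h⁻¹ * (x⁻¹ * y) * h = (x * h)⁻¹ * (y * h) := by group
    rw [e] at h3
    exact lt_inv_mul_iff_lt.mp h3
  obtain ⟨δ, hδ, hδr⟩ : ∃ δ : Γ, 1 < δ ∧
      ∀ h : Γ, 1 < h → h ≤ δ → ∀ x y : Γ, x < y → x * h < y * h := by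
    by_cases hex : ∃ δ, 1 < δ ∧ δ < ε
    · obtain ⟨δ, h1, h2⟩ := hex
      exact ⟨δ, h1, fun h h3 h4 => hright h h3 (h4.trans_lt h2)⟩
    · push Not at hex
      refine ⟨ε, hε, fun h h3 h4 x y hxy => ?_⟩
      have : h = ε := le_antisymm h4 (hex h h3)
      subst this
      have h5 : h ≤ x⁻¹ * y := hex _ (by simpa using hxy)
      have h6 : x * h ≤ y := by
        have := mul_le_mul_right h5 x
        rwa [mul_inv_cancel_left] at this
      exact h6.trans_lt (lt_mul_of_one_lt_right' y h3)
  have hr1 : ∀ x y : Γ, x ≤ y → x * δ ≤ y * δ := by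
    intro x y h
    rcases h.lt_or_eq with h | h
    · exact (hδr δ hδ le_rfl x y h).le
    · rw [h]
  have hrn : ∀ (n : ℕ) (x y : Γ), x ≤ y → x * δ ^ n ≤ y * δ ^ n := by
    intro n
    induction n with
    | zero => intro x y h; simpa using h
    | succ k ih =>
      intro x y h
      rw [pow_succ, ← mul_assoc, ← mul_assoc]
      exact hr1 _ _ (ih x y h)
  have hpn : ∀ n : ℕ, 1 ≤ δ ^ n := fun n => one_le_pow_of_one_le' hδ.le n
  let S : Subgroup Γ :=
    { carrier := {x | ∃ n : ℕ, x ≤ δ ^ n ∧ x⁻¹ ≤ δ ^ n}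
      one_mem' := ⟨0, by simp, by simp⟩
      mul_mem' := by
        have key : ∀ (x y : Γ) (m n : ℕ), x ≤ δ ^ m → y ≤ δ ^ n → x * y ≤ δ ^ (m + n) := by
          intro x y m n h1 h2
          rw [pow_add]
          exact (mul_le_mul_right h2 x).trans (hrn n _ _ h1)
        rintro x y ⟨m, h1, h2⟩ ⟨n, h3, h4⟩
        refine ⟨m + n, key x y m n h1 h3, ?_⟩
        rw [mul_inv_rev, add_comm]
        exact key _ _ n m h4 h2
      inv_mem' := by
        rintro x ⟨n, h1, h2⟩
        exact ⟨n, h2, by rwa [inv_inv]⟩ }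
  have hS : ∀ x, x ∈ S ↔ ∃ n : ℕ, x ≤ δ ^ n ∧ x⁻¹ ≤ δ ^ n := fun x => Iff.rfl
  refine ⟨S, ?_, ?_, ?_⟩
  · intro h
    have : δ ∈ S := by
      rw [hS]
      exact ⟨1, by simp, by rw [pow_one]; exact (Left.inv_lt_one_iff.mpr hδ).le.trans hδ.le⟩
    rw [h, Subgroup.mem_bot] at this
    exact hδ.ne' this
  · rw [cvx_iff]
    intro x hx c hc hxc
    simp only [Set.mem_ofPred_eq, lt_inv_mul_iff_lt] at hxc hx
    obtain ⟨n, h1, h2⟩ := (hS c).mp hc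
    exact (hS x).mpr ⟨n, hxc.le.trans h1, (Left.inv_lt_one_iff.mpr hx).le.trans (hpn n)⟩
  · intro f hf g hg hf1 hg1
    by_cases hgδ : g ≤ δ
    · refine ⟨1, one_pos, ?_⟩
      have := hδr g hg1 hgδ 1 f hf1
      rw [one_mul] at this
      rwa [pow_one]
    · have hδg : δ ≤ g := (not_le.mp hgδ).le
      obtain ⟨n, h1, -⟩ := (hS g).mp hg
      have hgn : ∀ k : ℕ, δ ^ k ≤ g ^ k := by
        intro k
        induction k with
        | zero => simp
        | succ k ih =>
          rw [pow_succ, pow_succ]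
          exact (hr1 _ _ ih).trans (mul_le_mul_right hδg _)
      refine ⟨n + 1, by omega, ?_⟩
      calc g ≤ δ ^ n := h1
        _ < δ ^ (n + 1) := by rw [pow_succ]; exact lt_mul_of_one_lt_right' _ hδ
        _ = 1 * δ ^ (n + 1) := (one_mul _).symm
        _ ≤ f * δ ^ (n + 1) := hrn _ _ _ hf1.le
        _ ≤ f * g ^ (n + 1) := mul_le_mul_right (hgn _) _

theorem soul_main [Nontrivial Γ] {F : Finset Γ} (hF : Iso {g : Γ | 1 < g} F) :
    ∃ C : Subgroup Γ, C ≠ ⊥ ∧ IsConvexSubgroup C ∧ IsConradianOn C ∧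
      (∀ K : Subgroup Γ, IsConvexSubgroup K → IsConradianOn K → K ≤ C) ∧
      {P : Set C | IsPosCone P}.Finite := by
  obtain ⟨S, hSb, hSc, hSC⟩ := soul_nontriv hF
  let A : Set (Subgroup Γ) := {K | IsConvexSubgroup K ∧ IsConradianOn K}
  have hP : IsPosCone {g : Γ | 1 < g} := pc_ord
  have hSA : S ∈ A := ⟨hSc, hSC⟩
  obtain ⟨hcv, hmem⟩ := cvx_sSup hP (S := A) ⟨S, hSA⟩ (fun K hK => (cvx_iff K).mp hK.1)
  have hcon : IsConradianOn (sSup A) := by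
    intro f hf g hg hf1 hg1
    obtain ⟨K, hK, hfK⟩ := (hmem f).mp hf
    obtain ⟨L, hL, hgL⟩ := (hmem g).mp hg
    rcases cvx_nested hP ((cvx_iff K).mp hK.1) ((cvx_iff L).mp hL.1) with h | h
    · exact hL.2 f (h hfK) g hgL hf1 hg1
    · exact hK.2 f hfK g (h hgL) hf1 hg1
  refine ⟨sSup A, ?_, (cvx_iff _).mpr hcv, hcon, fun K h1 h2 => le_sSup (show K ∈ A from ⟨h1, h2⟩), ?_⟩
  · intro h
    apply hSb
    rw [eq_bot_iff, ← h]
    exact le_sSup hSA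
  · obtain ⟨F', -, hF'⟩ := iso_sub hP hF hcv
    refine cones_finite (pc_restrict hP (sSup A)) ?_ hF'
    intro f hf g hg
    obtain ⟨n, hn, h⟩ := hcon f f.2 g g.2 hf hg
    refine ⟨n, hn, ?_⟩
    show (1 : Γ) < (g : Γ)⁻¹ * ((f : Γ) * (g : Γ) ^ n)
    rwa [lt_inv_mul_iff_lt]

end Soul

/-- If `≤` is an isolated point of the space of left orderings of a nontrivial
group `Γ` (there is a finite set `F` of positive elements such that the only
positive cone containing `F` is the positive cone of `≤`), then the Conradian soul
of `(Γ, ≤)` is nontrivial and admits only finitely many orderings. -/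
theorem isolated_ordering_soul_nontrivial_finite (Γ : Type*) [Group Γ]
    [LinearOrder Γ] [Nontrivial Γ] [CovariantClass Γ Γ (· * ·) (· ≤ ·)]
    (F : Finset Γ) (hFpos : ∀ f ∈ F, 1 < f)
    (hiso : ∀ Q : Set Γ, IsPosCone Q → (∀ f ∈ F, f ∈ Q) → Q = {g : Γ | 1 < g}) :
    ∃ C : Subgroup Γ, C ≠ ⊥ ∧ IsConvexSubgroup C ∧ IsConradianOn C ∧
      (∀ K : Subgroup Γ, IsConvexSubgroup K → IsConradianOn K → K ≤ C) ∧
      {P : Set C | IsPosCone P}.Finite := by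
  exact soul_main ⟨hFpos, hiso⟩
end
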